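/- arXiv:1603.06444 — 5 statements merged into one kernel-verified Lean document; each statement's English description precedes it below -/
import Mathlib

section
/- Let d be a positive integer and a_0, …, a_{d-1} integers, and set N = min{a_0, …, a_{d-1}}. If N ≥ -2, then for every integer n ≥ 5d + 3, the polynomial n·x^d + a_{d-1}·x^{d-1} + ⋯ + a_1·x + a_0 is a Hilbert polynomial. -/
open Polynomial

/-- A polynomial `f ∈ ℚ[x]` is a *Hilbert polynomial* if there exist a field `k`,
a standard graded `k`-algebra `R` (a commutative `ℕ`-graded `k`-algebra with
finite-dimensional graded pieces, generated as a `k`-algebra by its degree-one part)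
and an `N₀` such that `dim_k R_i = f(i)` for all `i ≥ N₀`. -/
def IsHilbertPolynomial (f : Polynomial ℚ) : Prop :=
  ∃ (k : Type) (R : Type) (_ : Field k) (_ : CommRing R) (_ : Algebra k R)
    (𝒜 : ℕ → Submodule k R) (_ : GradedAlgebra 𝒜),
    (∀ i : ℕ, FiniteDimensional k (𝒜 i)) ∧
    Algebra.adjoin k ((𝒜 1 : Submodule k R) : Set R) = ⊤ ∧
    ∃ N₀ : ℕ, ∀ i : ℕ, N₀ ≤ i → (Module.finrank k (𝒜 i) : ℚ) = f.eval (i : ℚ)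

/-!
Write `p_i = (X + i).choose i`, the Hilbert polynomial of projective `i`-space. The exponents of the
standard monomials of a monomial ideal form a lower set, and its number of elements of degree `n` is
the Hilbert function of the quotient, so it suffices to count lower sets. In `d + 2` variables,
multiplying a monomial ideal by a variable changes its Hilbert polynomial from `f` to
`p_d + f (X - 1)`. Iterating, every combination of `p_0, …, p_{d - 1}` with natural coefficients is
a Hilbert polynomial of a monomial ideal in `d + 1` variables, and, for every `m`, the polynomial
`f` is one in `d + 2` variables as soon as `f (X + m) - ∑ j < m, p_d (X + m - j)` is such a
combination of `p_0, …, p_d`.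

Let `m = K * d!` and `U = X + m`. For large `m`, the polynomials `U ^ i`, the differences
`U ^ d - U ^ i`, `p_d (U) - p_d (U - j)` and `(d + 1) * U ^ d - d! * p_d (U)` all have nonnegative
coefficients in the `p_i`. If `f = n * X ^ d + ∑ i < d, a_i * X ^ i` with `-c ≤ a_i`, then
`f (X + m) - m * p_d (U)` is the sum of `K` copies of the last of them, `c` copies of each
`U ^ d - U ^ i`, `a_i + c` copies of each `U ^ i`, and `n - K * (d + 1) - c * d` copies of `U ^ d`.
-/

open Filter

section PreHilbertPoly

variable {F : Type*} [Field F]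

lemma preHilbertPoly_zero_left (k : ℕ) : preHilbertPoly F 0 k = 1 := by
  simp [preHilbertPoly]

lemma preHilbertPoly_eq_taylor (d k : ℕ) :
    preHilbertPoly F d k = taylor (-(k : F)) (preHilbertPoly F d 0) := by
  simp only [preHilbertPoly, map_smul, taylor_apply, comp_assoc]
  congr 2
  simp [sub_eq_add_neg]

variable [CharZero F]

lemma eq_of_eval_natCast_eq {p q : F[X]} (h : ∀ n : ℕ, p.eval (n : F) = q.eval (n : F)) :
    p = q :=
  eq_of_infinite_eval_eq p q <|
    (Set.infinite_range_of_injective Nat.cast_injective).mono (Set.range_subset_iff.2 h)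

lemma eval_natCast_preHilbertPoly_zero_right (d n : ℕ) :
    (preHilbertPoly F d 0).eval (n : F) = (n + d).choose d := by
  simpa using preHilbertPoly_eq_choose_sub_add F d n.zero_le

lemma X_add_mul_preHilbertPoly (i : ℕ) :
    (X + ((i + 1 : ℕ) : F[X])) * preHilbertPoly F i 0 = (i + 1) • preHilbertPoly F (i + 1) 0 := by
  refine eq_of_eval_natCast_eq fun n => ?_
  have h := Nat.add_one_mul_choose_eq (n + i) i
  simp only [eval_mul, eval_add, eval_X, eval_natCast, nsmul_eq_mul,
    eval_natCast_preHilbertPoly_zero_right]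
  exact_mod_cast h.trans (mul_comm _ _)

lemma taylor_one_preHilbertPoly_succ (i : ℕ) :
    taylor 1 (preHilbertPoly F (i + 1) 0) =
      preHilbertPoly F (i + 1) 0 + taylor 1 (preHilbertPoly F i 0) := by
  refine eq_of_eval_natCast_eq fun n => ?_
  have eval_succ (j : ℕ) : (preHilbertPoly F j 0).eval ((n : F) + 1) = (n + 1 + j).choose j := by
    exact_mod_cast eval_natCast_preHilbertPoly_zero_right j (n + 1)
  rw [eval_add, taylor_eval, taylor_eval, eval_succ, eval_succ,
    eval_natCast_preHilbertPoly_zero_right]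
  norm_cast
  rw [show n + 1 + (i + 1) = n + 1 + i + 1 by ring, Nat.choose_succ_succ, add_comm,
    show n + 1 + i = n + (i + 1) by ring]

end PreHilbertPoly

/-- The additive monoid of polynomials spanned over `ℕ` by the binomial coefficients
`p_i = (X + i).choose i` for `i < D`, encoded as `preHilbertPoly F i 0`. -/
noncomputable def binomialCone (F : Type*) [Field F] (D : ℕ) : AddSubmonoid F[X] :=
  AddSubmonoid.closure ((preHilbertPoly F · 0) '' Set.Iio D)

namespace binomialCone

variable {F : Type*} [Field F] {D : ℕ} {f : F[X]}

lemma preHilbertPoly_mem {i : ℕ} (h : i < D) : preHilbertPoly F i 0 ∈ binomialCone F D :=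
  AddSubmonoid.subset_closure ⟨i, h, rfl⟩

lemma map_mem (φ : F[X] →+ F[X]) {S : AddSubmonoid F[X]}
    (h : ∀ i < D, φ (preHilbertPoly F i 0) ∈ S) (hf : f ∈ binomialCone F D) : φ f ∈ S := by
  have hle : binomialCone F D ≤ S.comap φ := by
    simpa [binomialCone, AddSubmonoid.closure_le, Set.subset_def] using h
  exact hle hf

lemma mono : Monotone (binomialCone F) := fun _ _ h =>
  AddSubmonoid.closure_mono (Set.image_mono (Set.Iio_subset_Iio h))

lemma mem_succ_iff :
    f ∈ binomialCone F (D + 1) ↔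
      ∃ m : ℕ, ∃ g ∈ binomialCone F D, m • preHilbertPoly F D 0 + g = f := by
  simp only [binomialCone, ← Order.succ_eq_add_one, Order.Iio_succ_eq_insert, Set.image_insert_eq]
  rw [Set.insert_eq, AddSubmonoid.closure_union, AddSubmonoid.mem_sup]
  simp [AddSubmonoid.mem_closure_singleton]

variable [CharZero F]

lemma X_add_mul_mem {c : ℕ} (hc : D ≤ c) (hf : f ∈ binomialCone F D) :
    (X + (c : F[X])) * f ∈ binomialCone F (D + 1) := by
  refine map_mem (AddMonoidHom.mulLeft (X + (c : F[X]))) (fun i hi => ?_) hf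
  have expand : (X + (c : F[X])) * preHilbertPoly F i 0 =
      (i + 1) • preHilbertPoly F (i + 1) 0 + (c - (i + 1)) • preHilbertPoly F i 0 := by
    rw [← X_add_mul_preHilbertPoly, nsmul_eq_mul, Nat.cast_sub (by omega)]
    push_cast
    ring
  rw [AddMonoidHom.coe_mulLeft, expand]
  exact add_mem (nsmul_mem (preHilbertPoly_mem (by omega)) _)
    (nsmul_mem (preHilbertPoly_mem (by omega)) _)

lemma taylor_one_preHilbertPoly_mem {i : ℕ} (h : i < D) :
    taylor 1 (preHilbertPoly F i 0) ∈ binomialCone F D := by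
  induction i with
  | zero => simpa [preHilbertPoly_zero_left] using preHilbertPoly_mem (F := F) h
  | succ i ih =>
    rw [taylor_one_preHilbertPoly_succ]
    exact add_mem (preHilbertPoly_mem h) (ih (by omega))

lemma taylor_natCast_mem (n : ℕ) (hf : f ∈ binomialCone F D) :
    taylor (n : F) f ∈ binomialCone F D := by
  induction n with
  | zero => simpa using hf
  | succ n ih =>
    rw [Nat.cast_succ, add_comm, ← taylor_taylor]
    exact map_mem (taylor (1 : F)).toAddMonoidHom
      (fun _ hi => taylor_one_preHilbertPoly_mem hi) ih

lemma taylor_one_preHilbertPoly_sub_mem (D : ℕ) :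
    taylor 1 (preHilbertPoly F D 0) - preHilbertPoly F D 0 ∈ binomialCone F D := by
  cases D with
  | zero => simp [preHilbertPoly_zero_left]
  | succ D =>
    rw [taylor_one_preHilbertPoly_succ, add_sub_cancel_left]
    exact taylor_one_preHilbertPoly_mem D.lt_succ_self

lemma taylor_natCast_preHilbertPoly_sub_mem (D : ℕ) {j k : ℕ} (h : j ≤ k) :
    taylor (k : F) (preHilbertPoly F D 0) - taylor (j : F) (preHilbertPoly F D 0) ∈
      binomialCone F D := by
  induction k, h using Nat.le_induction with
  | base => simp
  | succ k _ ih =>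
    have step := taylor_natCast_mem k (taylor_one_preHilbertPoly_sub_mem (F := F) D)
    rw [map_sub, taylor_taylor] at step
    simpa using add_mem step ih

section PowersOfTranslate

variable {m : ℕ}

lemma X_add_pow_mem {i : ℕ} (h : i ≤ m) : (X + (m : F[X])) ^ i ∈ binomialCone F (i + 1) := by
  induction i with
  | zero => simpa [preHilbertPoly_zero_left] using preHilbertPoly_mem (F := F) zero_lt_one
  | succ i ih =>
    rw [pow_succ']
    exact X_add_mul_mem h (ih (by omega))

lemma X_add_pow_sub_pow_mem {i j : ℕ} (hij : i ≤ j) (hj : j < m) :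
    (X + (m : F[X])) ^ j - (X + (m : F[X])) ^ i ∈ binomialCone F (j + 1) := by
  induction j, hij using Nat.le_induction with
  | base => simp
  | succ j _ ih =>
    have step : (X + ((m - 1 : ℕ) : F[X])) * (X + (m : F[X])) ^ j ∈ binomialCone F (j + 2) :=
      X_add_mul_mem (by omega) (X_add_pow_mem (by omega))
    convert add_mem step (mono (Nat.le_succ _) (ih (by omega))) using 1
    rw [Nat.cast_sub (by omega)]
    ring

lemma X_add_pow_sub_factorial_preHilbertPoly_mem {l : ℕ} (h : l * (l + 1) ≤ m) :
    (l + 1) • (X + (m : F[X])) ^ l - l.factorial • taylor (m : F) (preHilbertPoly F l 0) ∈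
      binomialCone F (l + 1) := by
  induction l with
  | zero => simp [preHilbertPoly_zero_left]
  | succ l ih =>
    have recurrence : (l + 1).factorial • taylor (m : F) (preHilbertPoly F (l + 1) 0) =
        (X + ((m + l + 1 : ℕ) : F[X])) * l.factorial • taylor (m : F) (preHilbertPoly F l 0) := by
      have h := congrArg (taylorAlgHom (m : F)) (X_add_mul_preHilbertPoly (F := F) l)
      simp only [map_mul, map_add, map_nsmul, map_natCast, taylorAlgHom_apply, taylor_X] at h
      rw [Nat.factorial_succ, mul_comm, mul_smul, ← h]
      simp only [nsmul_eq_mul]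
      push_cast
      ring
    have main := X_add_mul_mem (c := m + l + 1) (by nlinarith) (ih (by nlinarith))
    have error : (X + ((m - (l + 1) ^ 2 : ℕ) : F[X])) * (X + (m : F[X])) ^ l ∈
        binomialCone F (l + 2) :=
      X_add_mul_mem (Nat.le_sub_of_add_le (by nlinarith)) (X_add_pow_mem (by nlinarith))
    convert add_mem main error using 1
    rw [recurrence, Nat.cast_sub (by nlinarith)]
    simp only [nsmul_eq_mul]
    push_cast
    ring

end PowersOfTranslate

lemma taylor_sum_preHilbertPoly_mem (d m : ℕ) :
    m • taylor (m : F) (preHilbertPoly F d 0) -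
      taylor (m : F) (∑ j ∈ Finset.range m, preHilbertPoly F d j) ∈ binomialCone F d := by
  rw [map_sum, ← Finset.card_range m, ← Finset.sum_const, Finset.card_range,
    ← Finset.sum_sub_distrib]
  refine sum_mem fun j hj => ?_
  have hj := (Finset.mem_range.1 hj).le
  rw [preHilbertPoly_eq_taylor d j, taylor_taylor, ← sub_eq_add_neg, ← Nat.cast_sub hj]
  exact taylor_natCast_preHilbertPoly_sub_mem d (Nat.sub_le m j)

lemma taylor_sub_factorial_preHilbertPoly_mem {d m c K : ℕ} (hm : d * (d + 1) ≤ m)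
    {a : Fin d → ℤ} (ha : ∀ i, -(c : ℤ) ≤ a i) {n : ℤ} (hn : (c + K) * (d : ℤ) + K ≤ n) :
    taylor (m : F) (C (n : F) * X ^ d + ∑ i : Fin d, C (a i : F) * X ^ (i : ℕ)) -
      (K * d.factorial) • taylor (m : F) (preHilbertPoly F d 0) ∈ binomialCone F (d + 1) := by
  obtain ⟨t, ht⟩ := Int.le.dest hn
  obtain ⟨b, hb⟩ : ∃ b : Fin d → ℕ, ∀ i, a i = -c + b i :=
    Classical.skolem.1 fun i => (Int.le.dest (ha i)).imp fun _ => Eq.symm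
  have hd : d ≤ m := by nlinarith
  have leading := nsmul_mem (X_add_pow_mem (F := F) hd) t
  have lower : ∑ i, b i • (X + (m : F[X])) ^ (i : ℕ) ∈ binomialCone F (d + 1) :=
    sum_mem fun i _ => nsmul_mem (mono (by omega) (X_add_pow_mem (by omega))) _
  have factorial := nsmul_mem (X_add_pow_sub_factorial_preHilbertPoly_mem (F := F) hm) K
  have negative : c • ∑ i : Fin d, ((X + (m : F[X])) ^ d - (X + (m : F[X])) ^ (i : ℕ)) ∈
      binomialCone F (d + 1) :=
    nsmul_mem (sum_mem fun i _ => X_add_pow_sub_pow_mem i.2.le (by have := i.2; nlinarith)) c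
  have translate : taylor (m : F) (C (n : F) * X ^ d + ∑ i : Fin d, C (a i : F) * X ^ (i : ℕ)) =
      C (n : F) * (X + (m : F[X])) ^ d + ∑ i, C (a i : F) * (X + (m : F[X])) ^ (i : ℕ) := by
    simp [taylor_apply]
  have split (U : F[X]) : C (n : F) * U ^ d + ∑ i, C (a i : F) * U ^ (i : ℕ) =
      t • U ^ d + ∑ i, b i • U ^ (i : ℕ) +
        (K • (d + 1) • U ^ d + c • ∑ i : Fin d, (U ^ d - U ^ (i : ℕ))) := by
    simp only [← ht, hb, add_mul, Int.cast_add, Int.cast_mul, Int.cast_natCast, Int.cast_neg,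
      map_add, map_mul, map_natCast, map_neg, neg_mul, Finset.sum_add_distrib,
      Finset.sum_neg_distrib, ← Finset.mul_sum, nsmul_eq_mul, Nat.cast_add, Nat.cast_one, one_mul,
      smul_add, Finset.sum_sub_distrib, Finset.sum_const, Finset.card_univ, Fintype.card_fin]
    ring
  rw [translate, split]
  convert add_mem (add_mem leading lower) (add_mem factorial negative) using 1
  rw [smul_sub, mul_smul]
  abel

lemma taylor_sub_sum_preHilbertPoly_mem {d c K : ℕ} (hK : d * (d + 1) ≤ K * d.factorial)
    {a : Fin d → ℤ} (ha : ∀ i, -(c : ℤ) ≤ a i) {n : ℤ} (hn : (c + K) * (d : ℤ) + K ≤ n) :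
    taylor ((K * d.factorial : ℕ) : F)
      (C (n : F) * X ^ d + ∑ i : Fin d, C (a i : F) * X ^ (i : ℕ) -
        ∑ j ∈ Finset.range (K * d.factorial), preHilbertPoly F d j) ∈ binomialCone F (d + 1) := by
  have h := add_mem (taylor_sub_factorial_preHilbertPoly_mem (F := F) hK ha hn)
    (mono d.le_succ (taylor_sum_preHilbertPoly_mem d (K * d.factorial)))
  rwa [sub_add_sub_cancel, ← map_sub] at h

end binomialCone

lemma mul_succ_le_three_mul_factorial (d : ℕ) : d * (d + 1) ≤ 3 * d.factorial := by
  induction d with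
  | zero => simp
  | succ d ih =>
    rw [Nat.factorial_succ]
    rcases le_or_gt d 1 with h | h
    · interval_cases d <;> decide
    · nlinarith

/-- The exponents of degree `n` in `W`. -/
def degreePart {σ : Type*} (W : Set (σ →₀ ℕ)) (n : ℕ) : Set (σ →₀ ℕ) :=
  {w ∈ W | w.degree = n}

/-- `f` is eventually the Hilbert function of a staircase, that is, of a set `W` of exponents in the
variables `s` that is closed under passing to divisors, such as the exponents of the standard
monomials of a monomial ideal. -/
def IsStaircaseCount {σ F : Type*} [Field F] (s : Finset σ) (f : F[X]) : Prop :=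
  ∃ W : Set (σ →₀ ℕ), IsLowerSet W ∧ (∀ w ∈ W, w.support ⊆ s) ∧
    ∀ᶠ n : ℕ in atTop, ((degreePart W n).ncard : F) = f.eval (n : F)

section Staircase

variable {σ : Type*} {s : Finset σ} {W : Set (σ →₀ ℕ)}

lemma degreePart_setOf_support_subset [DecidableEq σ] (s : Finset σ) (n : ℕ) :
    degreePart {w | w.support ⊆ s} n = s.finsuppAntidiag n := by
  ext w
  simp only [degreePart, Set.mem_ofPred_eq, Finset.mem_coe, Finset.mem_finsuppAntidiag,
    and_comm (a := w.support ⊆ s)]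
  refine and_congr_left fun h => ?_
  rw [Finsupp.degree_apply, Finset.sum_subset h fun x _ hx => Finsupp.notMem_support_iff.1 hx]

lemma finite_degreePart (hs : ∀ w ∈ W, w.support ⊆ s) (n : ℕ) : (degreePart W n).Finite := by
  classical
  refine (s.finsuppAntidiag n).finite_toSet.subset ?_
  rw [← degreePart_setOf_support_subset]
  exact fun w hw => ⟨hs w hw.1, hw.2⟩

variable [DecidableEq σ]

/-- The union of the exponents in `s` not involving `x` and of the translate of `W` by the unit
exponent at `x`. For the staircase `W` of a monomial ideal `I` in the variables `s`, this is the
staircase of `x * I`, so its projective subscheme is that of `I` together with the hyperplane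
`x = 0`. -/
def addHyperplane (s : Finset σ) (x : σ) (W : Set (σ →₀ ℕ)) : Set (σ →₀ ℕ) :=
  {w | w.support ⊆ s.erase x} ∪ (Finsupp.single x 1 + ·) '' W

lemma support_subset_of_mem_addHyperplane {x : σ} (hx : x ∈ s) (hs : ∀ w ∈ W, w.support ⊆ s) :
    ∀ w ∈ addHyperplane s x W, w.support ⊆ s := by
  rintro _ (hw | ⟨u, hu, rfl⟩)
  · exact hw.trans (s.erase_subset x)
  · exact Finsupp.support_add.trans (Finset.union_subset
      (Finsupp.support_single_subset.trans (by simpa)) (hs u hu))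

lemma isLowerSet_addHyperplane {x : σ} (hx : x ∈ s) (hW : IsLowerSet W)
    (hs : ∀ w ∈ W, w.support ⊆ s) : IsLowerSet (addHyperplane s x W) := by
  intro w v hvw hw
  have hvs : v.support ⊆ s :=
    (Finsupp.support_mono hvw).trans (support_subset_of_mem_addHyperplane hx hs w hw)
  by_cases hvx : v x = 0
  · exact Or.inl (Finset.subset_erase.2 ⟨hvs, Finsupp.notMem_support_iff.2 hvx⟩)
  · have hv : Finsupp.single x 1 + (v - Finsupp.single x 1) = v :=
      add_tsub_cancel_of_le (Finsupp.single_le_iff.2 (Nat.one_le_iff_ne_zero.2 hvx))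
    rcases hw with hw | ⟨u, hu, rfl⟩
    · exact absurd (Finsupp.support_mono hvw (Finsupp.mem_support_iff.2 hvx))
        fun h => Finset.notMem_erase x s (hw h)
    · exact Or.inr ⟨_, hW (tsub_le_iff_left.2 hvw) hu, hv⟩

lemma ncard_degreePart_addHyperplane {d : ℕ} {x : σ} (hx : x ∈ s) (hcard : s.card = d + 2)
    (hs : ∀ w ∈ W, w.support ⊆ s) (n : ℕ) :
    (degreePart (addHyperplane s x W) (n + 1)).ncard =
      (n + 1 + d).choose d + (degreePart W n).ncard := by
  have hunion : degreePart (addHyperplane s x W) (n + 1) =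
      ((s.erase x).finsuppAntidiag (n + 1) : Set (σ →₀ ℕ)) ∪
        (Finsupp.single x 1 + ·) '' degreePart W n := by
    rw [← degreePart_setOf_support_subset]
    ext w
    simp only [degreePart, addHyperplane, Set.mem_union, Set.mem_image, Set.mem_ofPred_eq,
      or_and_right]
    refine or_congr_right ⟨?_, ?_⟩
    · rintro ⟨⟨u, hu, rfl⟩, hdeg⟩
      exact ⟨u, ⟨hu, by simpa [add_comm 1] using hdeg⟩, rfl⟩
    · rintro ⟨u, ⟨hu, rfl⟩, rfl⟩
      exact ⟨⟨u, hu, rfl⟩, by simp [add_comm 1]⟩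
  have hdisj : Disjoint ((s.erase x).finsuppAntidiag (n + 1) : Set (σ →₀ ℕ))
      ((Finsupp.single x 1 + ·) '' degreePart W n) := by
    rw [Set.disjoint_right]
    rintro _ ⟨u, _, rfl⟩ h
    exact Finset.notMem_erase x s ((Finset.mem_finsuppAntidiag.1 h).2 (by simp))
  rw [hunion, Set.ncard_union_eq hdisj (Finset.finite_toSet _) ((finite_degreePart hs n).image _),
    Set.ncard_coe_finset, Finset.card_finsuppAntidiag_nat_eq_choose,
    Set.ncard_image_of_injective _ (add_right_injective _), Finset.card_erase_of_mem hx, hcard,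
    show d + 2 - 1 + (n + 1) - 1 = (n + 1) + d by omega, Nat.choose_symm_add]

end Staircase

namespace IsStaircaseCount

variable {σ F : Type*} [Field F] {s : Finset σ} {f : F[X]}

lemma zero (s : Finset σ) : IsStaircaseCount s (0 : F[X]) :=
  ⟨∅, isLowerSet_empty, by simp, by simp [degreePart]⟩

lemma mono {t : Finset σ} (hst : s ⊆ t) (h : IsStaircaseCount s f) : IsStaircaseCount t f := by
  obtain ⟨W, hW, hs, hcount⟩ := h
  exact ⟨W, hW, fun w hw => (hs w hw).trans hst, hcount⟩

variable [CharZero F] {d : ℕ}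

lemma preHilbertPoly_add (hcard : s.card = d + 2)
    (h : IsStaircaseCount s (taylor 1 f)) : IsStaircaseCount s (preHilbertPoly F d 0 + f) := by
  classical
  obtain ⟨W, hW, hs, hcount⟩ := h
  obtain ⟨x, hx⟩ : s.Nonempty := Finset.card_pos.1 (by omega)
  refine ⟨addHyperplane s x W, isLowerSet_addHyperplane hx hW hs,
    support_subset_of_mem_addHyperplane hx hs, ?_⟩
  rw [← map_add_atTop_eq_nat 1, eventually_map]
  filter_upwards [hcount] with n hn
  rw [ncard_degreePart_addHyperplane hx hcard hs, eval_add,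
    eval_natCast_preHilbertPoly_zero_right, Nat.cast_add, hn, taylor_eval, Nat.cast_succ]

lemma sum_preHilbertPoly_add (hcard : s.card = d + 2) (m : ℕ)
    (h : IsStaircaseCount s (taylor (m : F) f)) :
    IsStaircaseCount s (∑ j ∈ Finset.range m, preHilbertPoly F d j + f) := by
  induction m generalizing f with
  | zero => simpa using h
  | succ m ih =>
    have shift (j : ℕ) : taylor 1 (preHilbertPoly F d (j + 1)) = preHilbertPoly F d j := by
      rw [preHilbertPoly_eq_taylor d (j + 1), preHilbertPoly_eq_taylor d j, taylor_taylor]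
      congr 2
      push_cast
      ring
    rw [Finset.sum_range_succ', add_right_comm, add_comm]
    refine preHilbertPoly_add hcard ?_
    rw [map_add, map_sum, Finset.sum_congr rfl fun j _ => shift j]
    exact ih (by rwa [taylor_taylor, ← Nat.cast_succ])

lemma of_mem_binomialCone (hcard : s.card = d + 1) (hf : f ∈ binomialCone F d) :
    IsStaircaseCount s f := by
  classical
  induction d generalizing s f with
  | zero =>
    obtain rfl : f = 0 := by simpa [binomialCone] using hf
    exact zero s
  | succ d ih =>
    obtain ⟨m, g, hg, rfl⟩ := binomialCone.mem_succ_iff.1 hf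
    clear hf
    induction m generalizing g with
    | zero =>
      obtain ⟨x, hx⟩ : s.Nonempty := Finset.card_pos.1 (by omega)
      simpa using (ih (s := s.erase x) (by simp [hx, hcard]) hg).mono (s.erase_subset x)
    | succ m ihm =>
      rw [succ_nsmul', add_assoc]
      refine preHilbertPoly_add hcard ?_
      have lower : m • (taylor 1 (preHilbertPoly F d 0) - preHilbertPoly F d 0) + taylor 1 g ∈
          binomialCone F d :=
        add_mem (nsmul_mem (binomialCone.taylor_one_preHilbertPoly_sub_mem d) m)
          (by simpa using binomialCone.taylor_natCast_mem 1 hg)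
      convert ihm _ lower using 1
      rw [map_add, map_nsmul, smul_sub]
      abel

end IsStaircaseCount

section QuotientGrading

variable {ι R A : Type*} [CommRing R] [CommRing A] [Algebra R A]

/-- The images in `A ⧸ I` of the pieces of a grading of `A`. They form a grading when `I` is
homogeneous. -/
def quotientGrading (𝒜 : ι → Submodule R A) (I : Ideal A) (i : ι) : Submodule R (A ⧸ I) :=
  (𝒜 i).map (Ideal.Quotient.mkₐ R I).toLinearMap

variable (𝒜 : ι → Submodule R A) (I : Ideal A)

lemma adjoin_quotientGrading_eq_top {i : ι} (h : Algebra.adjoin R (𝒜 i : Set A) = ⊤) :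
    Algebra.adjoin R (quotientGrading 𝒜 I i : Set (A ⧸ I)) = ⊤ := by
  have hmap := congrArg (Subalgebra.map (Ideal.Quotient.mkₐ R I)) h
  rwa [AlgHom.map_adjoin, Algebra.map_top,
    (AlgHom.range_eq_top _).2 (Ideal.Quotient.mkₐ_surjective R I)] at hmap

variable [DecidableEq ι] [AddMonoid ι] [GradedAlgebra 𝒜]

lemma gradedMonoid_quotientGrading : SetLike.GradedMonoid (quotientGrading 𝒜 I) where
  one_mem := ⟨1, SetLike.one_mem_graded 𝒜, map_one (Ideal.Quotient.mk I)⟩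
  mul_mem := by
    rintro i j _ _ ⟨x, hx, rfl⟩ ⟨y, hy, rfl⟩
    exact ⟨x * y, SetLike.mul_mem_graded hx hy, map_mul (Ideal.Quotient.mk I) x y⟩

variable {I} in
lemma isInternal_quotientGrading (hI : I.IsHomogeneous 𝒜) :
    DirectSum.IsInternal (quotientGrading 𝒜 I) := by
  rw [DirectSum.isInternal_submodule_iff_iSupIndep_and_iSup_eq_top]
  constructor
  · rw [iSupIndep_iff_finsetSum_eq_zero_imp_eq_zero]
    intro s v hv hsum i hi
    choose! x hx hxv using hv
    have hmem : ∑ j ∈ s, x j ∈ I := by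
      rw [← Ideal.Quotient.eq_zero_iff_mem, map_sum, ← hsum]
      exact Finset.sum_congr rfl hxv
    have hcomponent : (DirectSum.decompose 𝒜 (∑ j ∈ s, x j) i : A) = x i := by
      rw [DirectSum.decompose_sum, DFinsupp.finsetSum_apply, AddSubmonoidClass.coe_finsetSum,
        Finset.sum_eq_single_of_mem i hi fun j hj hji =>
          DirectSum.decompose_of_mem_ne 𝒜 (hx j hj) hji]
      exact DirectSum.decompose_of_mem_same 𝒜 (hx i hi)
    rw [← hxv i hi]
    exact Ideal.Quotient.eq_zero_iff_mem.2 (hcomponent ▸ hI i hmem)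
  · have htop := (DirectSum.Decomposition.isInternal 𝒜).submodule_iSup_eq_top
    change ⨆ i, (𝒜 i).map (Ideal.Quotient.mkₐ R I).toLinearMap = ⊤
    rw [← Submodule.map_iSup, htop, Submodule.map_top]
    exact LinearMap.range_eq_top.2 (Ideal.Quotient.mkₐ_surjective R I)

/-- The graded algebra structure on the quotient by a homogeneous ideal. It is not an instance
because it depends on the homogeneity of the ideal. -/
@[reducible] noncomputable def quotientGradedAlgebra (hI : I.IsHomogeneous 𝒜) :
    GradedAlgebra (quotientGrading 𝒜 I) :=
  letI := gradedMonoid_quotientGrading 𝒜 I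
  (isInternal_quotientGrading 𝒜 hI).gradedAlgebra

end QuotientGrading

section MonomialQuotient

open MvPolynomial

attribute [local instance] MvPolynomial.gradedAlgebra

variable {σ k : Type*} [CommRing k]

lemma adjoin_homogeneousSubmodule_one :
    Algebra.adjoin k (homogeneousSubmodule σ k 1 : Set (MvPolynomial σ k)) = ⊤ := by
  rw [eq_top_iff, ← adjoin_range_X]
  exact Algebra.adjoin_mono (Set.range_subset_iff.2 fun i => isHomogeneous_X k i)

lemma isHomogeneous_restrictSupportIdeal {U : Set (σ →₀ ℕ)} (hU : IsUpperSet U) :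
    (restrictSupportIdeal k U hU).IsHomogeneous (homogeneousSubmodule σ k) := by
  intro n p hp w hw
  by_contra hwU
  have hcoeff : coeff w p = 0 := notMem_support_iff.1 fun h => hwU (hp h)
  refine mem_support_iff.1 hw ?_
  change coeff w ((DirectSum.Decomposition.decompose' p n : homogeneousSubmodule σ k n) :
    MvPolynomial σ k) = 0
  rw [decomposition.decompose'_apply, coeff_homogeneousComponent, hcoeff, ite_self]

lemma ker_mk_restrictSupportIdeal {U : Set (σ →₀ ℕ)} (hU : IsUpperSet U) :
    LinearMap.ker (Ideal.Quotient.mkₐ k (restrictSupportIdeal k U hU)).toLinearMap =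
      restrictSupport k U :=
  Submodule.ext fun _ => Ideal.Quotient.eq_zero_iff_mem

lemma restrictSupport_union (S T : Set (σ →₀ ℕ)) :
    restrictSupport k (S ∪ T) = restrictSupport k S ⊔ restrictSupport k T := by
  simp only [restrictSupport_eq_span, Set.image_union, Submodule.span_union]

lemma disjoint_restrictSupport {S T : Set (σ →₀ ℕ)} (h : Disjoint S T) :
    Disjoint (restrictSupport k S) (restrictSupport k T) := by
  rw [Submodule.disjoint_def]
  intro p hS hT
  rw [mem_restrictSupport_iff] at hS hT
  exact support_eq_empty.1 (Finset.coe_eq_empty.1 (Set.subset_empty_iff.1 (h hS hT)))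

variable {M : Type*} [AddCommGroup M] [Module k M] {f : MvPolynomial σ k →ₗ[k] M}
  {U : Set (σ →₀ ℕ)}

lemma map_restrictSupport_sdiff (hf : LinearMap.ker f = restrictSupport k U)
    (T : Set (σ →₀ ℕ)) : (restrictSupport k (T \ U)).map f = (restrictSupport k T).map f := by
  refine le_antisymm (Submodule.map_mono (restrictSupport_mono k Set.sdiff_subset)) ?_
  rw [LinearMap.map_le_map_iff, hf, ← restrictSupport_union, Set.sdiff_union_self]
  exact restrictSupport_mono k Set.subset_union_left

/-- The monomials with exponent in `T \ U`, as a basis of the image of the span of the monomials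
with exponent in `T` under a linear map whose kernel is spanned by the monomials with exponent
in `U`. -/
noncomputable def basisMapRestrictSupport (hf : LinearMap.ker f = restrictSupport k U)
    (T : Set (σ →₀ ℕ)) : Module.Basis ↥(T \ U) k ((restrictSupport k T).map f) :=
  have hinj : Function.Injective (f.domRestrict (restrictSupport k (T \ U))) :=
    LinearMap.injective_domRestrict_iff.2 (hf ▸ disjoint_restrictSupport Set.disjoint_sdiff_left)
  (basisRestrictSupport k (T \ U)).map <|
    (LinearEquiv.ofInjective _ hinj).trans <| LinearEquiv.ofEq _ _ <| by
      rw [LinearMap.range_domRestrict, map_restrictSupport_sdiff hf]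

lemma IsStaircaseCount.isHilbertPolynomial {σ : Type} {s : Finset σ} {f : ℚ[X]}
    (h : IsStaircaseCount s f) : IsHilbertPolynomial f := by
  classical
  obtain ⟨W, hW, hs, hcount⟩ := h
  set I := restrictSupportIdeal ℚ Wᶜ hW.compl
  set 𝒜 := quotientGrading (homogeneousSubmodule σ ℚ) I
  have hbasis (n : ℕ) : Nonempty (Module.Basis (degreePart W n) ℚ (𝒜 n)) := by
    have h𝒜 : 𝒜 n = (restrictSupport ℚ {w : σ →₀ ℕ | w.degree = n}).map
        (Ideal.Quotient.mkₐ ℚ I).toLinearMap :=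
      congrArg (Submodule.map _) (homogeneousSubmodule_eq_finsupp_supported σ ℚ n)
    have hindex : {w : σ →₀ ℕ | w.degree = n} \ Wᶜ = degreePart W n := by
      rw [Set.sdiff_compl, Set.inter_comm]
      rfl
    rw [h𝒜, ← hindex]
    exact ⟨basisMapRestrictSupport (ker_mk_restrictSupportIdeal hW.compl) _⟩
  refine ⟨ℚ, MvPolynomial σ ℚ ⧸ I, inferInstance, inferInstance, inferInstance, 𝒜,
    quotientGradedAlgebra _ _ (isHomogeneous_restrictSupportIdeal hW.compl), fun n => ?_,
    adjoin_quotientGrading_eq_top _ _ adjoin_homogeneousSubmodule_one, ?_⟩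
  · have := (finite_degreePart hs n).to_subtype
    exact Module.Finite.of_basis (hbasis n).some
  · obtain ⟨N₀, hN₀⟩ := eventually_atTop.1 hcount
    refine ⟨N₀, fun n hn => ?_⟩
    rw [← hN₀ n hn, Module.finrank_eq_nat_card_basis (hbasis n).some, Nat.card_coe_set_eq]

end MonomialQuotient

theorem sign_patterns_stmt0_general (d : ℕ) (a : Fin d → ℤ) (c K : ℕ)
    (hK : d * (d + 1) ≤ K * d.factorial) (ha : ∀ i, -(c : ℤ) ≤ a i) (n : ℤ)
    (hn : (c + K) * (d : ℤ) + K ≤ n) :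
    IsHilbertPolynomial (C (n : ℚ) * X ^ d + ∑ i : Fin d, C (a i : ℚ) * X ^ (i : ℕ)) := by
  have hcone := binomialCone.taylor_sub_sum_preHilbertPoly_mem (F := ℚ) hK ha hn
  have hcard : (Finset.range (d + 2)).card = d + 2 := Finset.card_range _
  have hcount := (IsStaircaseCount.of_mem_binomialCone hcard hcone).sum_preHilbertPoly_add hcard
  rw [add_sub_cancel] at hcount
  exact hcount.isHilbertPolynomial

theorem sign_patterns_stmt0 (d : ℕ) (hd : 0 < d) (a : Fin d → ℤ) (N : ℤ)
    (hN : IsLeast (Set.range a) N) (hN2 : -2 ≤ N) (n : ℤ) (hn : 5 * (d : ℤ) + 3 ≤ n) :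
    IsHilbertPolynomial (Polynomial.C (n : ℚ) * Polynomial.X ^ d
      + ∑ i : Fin d, Polynomial.C ((a i : ℚ)) * Polynomial.X ^ (i : ℕ)) :=
  sign_patterns_stmt0_general d a 2 3 (mul_succ_le_three_mul_factorial d)
    (fun i => hN2.trans (hN.2 ⟨i, rfl⟩)) n (by push_cast; linarith)
end

section
/- Let d be a positive integer and a_0, …, a_{d-1} integers, and set N = min{a_0, …, a_{d-1}}. If N < -2, then for every integer n ≥ -10·d·⌊N/5⌋ + 3, the polynomial n·x^d + a_{d-1}·x^{d-1} + ⋯ + a_1·x + a_0 is a Hilbert polynomial. -/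
open Polynomial

/-!
Call `f` a power rank polynomial if `dim V ^ i = f i` for `i ≫ 0`, where `V` is a
finite-dimensional subspace of a commutative algebra. The ring `⨁ i, V ^ i` is standard graded, so
`f` is then a Hilbert polynomial. Power rank polynomials form a semiring: products of algebras add
them and Segre products `V ⊗ W` multiply them. The plane curve `yⁿ = xⁿ` contributes
`n X - n (n - 3) / 2`, in particular the line contributes `X + 1`.

Now let `p` have degree `k + 1` and leading coefficient `n` large compared with the negative parts
of the other coefficients, and subtract `(X + 1) ^ k (n X - n (n - 3) / 2)`. Its leading coefficient
is `n` and its other coefficients are very negative, so that the difference has degree at most `k`,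
a large coefficient at `X ^ k`, and coefficients no smaller than those of `p` below that: induct on
the degree.
-/

section DirectSumGrading

open DirectSum

variable {ι R : Type*} [DecidableEq ι] [CommSemiring R] {M : ι → Type*} [∀ i, AddCommMonoid (M i)]
  [∀ i, Module R (M i)]

theorem finrank_range_lof (i : ι) :
    Module.finrank R (LinearMap.range (lof R ι M i)) = Module.finrank R (M i) :=
  (LinearEquiv.ofInjective (lof R ι M i) (of_injective i)).finrank_eq.symm

variable [AddMonoid ι] [GSemiring M] [GAlgebra R M]

instance gradedMonoid_range_lof :
    SetLike.GradedMonoid fun i => LinearMap.range (lof R ι M i) where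
  one_mem := ⟨GradedMonoid.GOne.one, rfl⟩
  mul_mem := by
    rintro i j _ _ ⟨x, rfl⟩ ⟨y, rfl⟩
    exact ⟨GradedMonoid.GMul.mul x y, (of_mul_of x y).symm⟩

noncomputable instance gradedAlgebra_range_lof :
    GradedAlgebra fun i => LinearMap.range (lof R ι M i) where
  toDecomposition := .ofLinearMap _
    (toModule R ι _ fun i =>
      lof R ι (fun j => LinearMap.range (lof R ι M j)) i ∘ₗ (lof R ι M i).rangeRestrict)
    (by ext; simp)
    (by
      ext i ⟨_, x, rfl⟩ : 2
      simp only [LinearMap.rangeRestrict, LinearMap.coe_comp, Function.comp_apply,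
        coeLinearMap_lof, toModule_lof, LinearMap.id_comp]
      rfl)

end DirectSumGrading

section SubmodulePowers

open DirectSum

variable {k B : Type*} [CommSemiring k] [CommSemiring B] [Algebra k B]

theorem adjoin_range_lof_one_eq_top (V : Submodule k B) :
    Algebra.adjoin k (LinearMap.range (lof k ℕ (fun i => ↥(V ^ i)) 1) :
      Set (⨁ i : ℕ, ↥(V ^ i))) = ⊤ := by
  set T := Algebra.adjoin k (LinearMap.range (lof k ℕ (fun i => ↥(V ^ i)) 1) :
    Set (⨁ i : ℕ, ↥(V ^ i)))
  have of_mem (i : ℕ) (x : B) (hx : x ∈ V ^ i) : of (fun i => ↥(V ^ i)) i ⟨x, hx⟩ ∈ T := by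
    induction hx using Submodule.pow_induction_on_right' with
    | algebraMap r => exact T.algebraMap_mem r
    | add x y i hx hy ihx ihy =>
      have := T.add_mem ihx ihy
      rwa [← map_add] at this
    | mul_mem i x hx ih v hv =>
      have hv' : v ∈ V ^ 1 := by rwa [pow_one]
      have := T.mul_mem ih (Algebra.subset_adjoin ⟨⟨v, hv'⟩, rfl⟩)
      rwa [lof_eq_of, of_mul_of] at this
  refine eq_top_iff.2 fun x _ => ?_
  induction x using DirectSum.induction_on with
  | zero => exact T.zero_mem
  | of i x => exact of_mem i x x.2
  | add x y hx hy => exact T.add_mem (hx trivial) (hy trivial)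

end SubmodulePowers

section Product

variable {R B C : Type*} [CommSemiring R] [Semiring B] [Semiring C] [Algebra R B] [Algebra R C]

theorem submodule_prod_mul_prod (V V' : Submodule R B) (W W' : Submodule R C) :
    V.prod W * V'.prod W' = (V * V').prod (W * W') := by
  apply le_antisymm
  · rw [Submodule.mul_le]
    rintro ⟨v, w⟩ ⟨hv, hw⟩ ⟨v', w'⟩ ⟨hv', hw'⟩
    exact ⟨Submodule.mul_mem_mul hv hv', Submodule.mul_mem_mul hw hw'⟩
  · rw [Submodule.prod_le_iff, Submodule.map_le_iff_le_comap, Submodule.map_le_iff_le_comap,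
      Submodule.mul_le, Submodule.mul_le]
    constructor
    · intro v hv v' hv'
      simpa using Submodule.mul_mem_mul (M := V.prod W) (N := V'.prod W')
        (m := (v, 0)) (n := (v', 0)) ⟨hv, W.zero_mem⟩ ⟨hv', W'.zero_mem⟩
    · intro w hw w' hw'
      simpa using Submodule.mul_mem_mul (M := V.prod W) (N := V'.prod W')
        (m := (0, w)) (n := (0, w')) ⟨V.zero_mem, hw⟩ ⟨V'.zero_mem, hw'⟩

theorem submodule_prod_pow_succ (V : Submodule R B) (W : Submodule R C) (i : ℕ) :
    V.prod W ^ (i + 1) = (V ^ (i + 1)).prod (W ^ (i + 1)) := by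
  induction i with
  | zero => simp only [zero_add, pow_one]
  | succ i ih => rw [pow_succ, ih, submodule_prod_mul_prod, ← pow_succ, ← pow_succ]

theorem finrank_submodule_prod {k V W : Type*} [Field k] [AddCommGroup V] [AddCommGroup W]
    [Module k V] [Module k W] (p : Submodule k V) (q : Submodule k W) [FiniteDimensional k p]
    [FiniteDimensional k q] :
    Module.finrank k (p.prod q) = Module.finrank k p + Module.finrank k q := by
  rw [← Module.finrank_prod]
  exact LinearEquiv.finrank_eq
    { Equiv.subtypeProdEquivProd with
      map_add' _ _ := rfl
      map_smul' _ _ := rfl }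

end Product

section SegreProduct

open TensorProduct Algebra.TensorProduct

variable {k B C : Type*} [Field k]

theorem finrank_map_includeLeft_mul_map_includeRight [Ring B] [Ring C] [Algebra k B]
    [Algebra k C] (V : Submodule k B) (W : Submodule k C) :
    Module.finrank k (V.map (includeLeft (S := k) (B := C)).toLinearMap *
        W.map (includeRight (A := B)).toLinearMap : Submodule k (B ⊗[k] C)) =
      Module.finrank k V * Module.finrank k W := by
  have mul_comp : (LinearMap.mul k (B ⊗[k] C)).compl₁₂ (includeLeft (S := k)).toLinearMap
      includeRight.toLinearMap = TensorProduct.mk k B C := by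
    ext; simp
  rw [Submodule.mul_eq_map₂, Submodule.map₂_map_map, mul_comp, ← TensorProduct.range_mapIncl,
    LinearMap.finrank_range_of_inj (Module.Flat.tensorProduct_mapIncl_injective_of_right V W),
    Module.finrank_tensorProduct]

theorem finrank_map_includeLeft_mul_map_includeRight_pow [CommRing B] [CommRing C] [Algebra k B]
    [Algebra k C] (V : Submodule k B) (W : Submodule k C) (i : ℕ) :
    Module.finrank k ((V.map (includeLeft (S := k) (B := C)).toLinearMap *
        W.map (includeRight (A := B)).toLinearMap) ^ i : Submodule k (B ⊗[k] C)) =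
      Module.finrank k ↥(V ^ i) * Module.finrank k ↥(W ^ i) := by
  rw [mul_pow, ← Submodule.map_pow, ← Submodule.map_pow,
    finrank_map_includeLeft_mul_map_includeRight]

end SegreProduct

section PowerRank

open Filter

universe u

variable (k : Type u) [Field k]

/-- `f` is a *power rank polynomial* over `k` if some finitely generated subspace `V` of a
commutative `k`-algebra satisfies `dim V ^ i = f i` for all large `i`. -/
def IsPowerRankPolynomial (f : ℚ[X]) : Prop :=
  ∃ (B : Type u) (_ : CommRing B) (_ : Algebra k B) (V : Submodule k B), V.FG ∧
    ∀ᶠ i : ℕ in atTop, (Module.finrank k ↥(V ^ i) : ℚ) = f.eval (i : ℚ)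

variable {k} {f g : ℚ[X]}

theorem IsPowerRankPolynomial.add (hf : IsPowerRankPolynomial k f)
    (hg : IsPowerRankPolynomial k g) : IsPowerRankPolynomial k (f + g) := by
  obtain ⟨B, _, _, V, hV, hVf⟩ := hf
  obtain ⟨C, _, _, W, hW, hWg⟩ := hg
  refine ⟨B × C, inferInstance, inferInstance, V.prod W, hV.prod hW, ?_⟩
  filter_upwards [hVf, hWg, eventually_ge_atTop 1] with i hf hg hi
  obtain ⟨i, rfl⟩ := Nat.exists_eq_add_of_le' hi
  have : FiniteDimensional k ↥(V ^ (i + 1)) := .of_fg (hV.pow _)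
  have : FiniteDimensional k ↥(W ^ (i + 1)) := .of_fg (hW.pow _)
  rw [submodule_prod_pow_succ, finrank_submodule_prod, Nat.cast_add, hf, hg, eval_add]

theorem IsPowerRankPolynomial.mul (hf : IsPowerRankPolynomial k f)
    (hg : IsPowerRankPolynomial k g) : IsPowerRankPolynomial k (f * g) := by
  obtain ⟨B, _, _, V, hV, hVf⟩ := hf
  obtain ⟨C, _, _, W, hW, hWg⟩ := hg
  refine ⟨TensorProduct k B C, inferInstance, inferInstance, _,
    (hV.map Algebra.TensorProduct.includeLeft.toLinearMap).mul
      (hW.map Algebra.TensorProduct.includeRight.toLinearMap), ?_⟩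
  filter_upwards [hVf, hWg] with i hf hg
  rw [finrank_map_includeLeft_mul_map_includeRight_pow, Nat.cast_mul, hf, hg, eval_mul]

variable (k) in
/-- The power rank polynomials over `k`, as a subsemiring of `ℚ[X]`: this makes natural number
constants and powers available. -/
def powerRankPolynomials : Subsemiring ℚ[X] where
  carrier := {f | IsPowerRankPolynomial k f}
  add_mem' := .add
  mul_mem' := .mul
  zero_mem' := by
    refine ⟨k, inferInstance, inferInstance, ⊥, Submodule.fg_bot, ?_⟩
    filter_upwards [eventually_ne_atTop 0] with i hi
    rw [← Submodule.zero_eq_bot, zero_pow hi, Submodule.zero_eq_bot, finrank_bot, Nat.cast_zero,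
      eval_zero]
  one_mem' := by
    refine ⟨k, inferInstance, inferInstance, 1, ?_, .of_forall fun i => ?_⟩
    · exact Submodule.one_eq_range (R := k) (A := k) ▸ Submodule.fg_range _
    · rw [one_pow, Submodule.one_eq_range, Algebra.linearMap_self, LinearMap.range_id, finrank_top,
        Module.finrank_self, Nat.cast_one, eval_one]

end PowerRank

open DirectSum in
theorem IsPowerRankPolynomial.isHilbertPolynomial {k : Type} [Field k]
    {f : ℚ[X]} (hf : IsPowerRankPolynomial k f) : IsHilbertPolynomial f := by
  obtain ⟨B, _, _, V, hV, hVf⟩ := hf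
  obtain ⟨N₀, hN₀⟩ := Filter.eventually_atTop.1 hVf
  have finite_pow (i : ℕ) : FiniteDimensional k ↥(V ^ i) := .of_fg (hV.pow i)
  refine ⟨k, ⨁ i, ↥(V ^ i), inferInstance, inferInstance, inferInstance, ?_⟩
  refine ⟨fun i => LinearMap.range (lof k ℕ (fun i => ↥(V ^ i)) i), gradedAlgebra_range_lof, ?_⟩
  refine ⟨fun i => Module.Finite.range _, adjoin_range_lof_one_eq_top V, N₀, fun i hi => ?_⟩
  rw [finrank_range_lof, hN₀ i hi]

section PlaneCurve

open AddMonoidAlgebra Pointwise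

theorem supported_mul_supported {k A : Type*} [CommSemiring k] [AddMonoid A] (s t : Set A) :
    supported k k s * supported k k t = supported k k (s + t) := by
  have single_add (a b : A) : single (a + b) (1 : k) = single a 1 * single b 1 := by
    rw [single_mul_single, one_mul]
  simp only [supported_eq_span_single, Submodule.span_mul_span]
  rw [← Set.image2_mul, ← Set.image2_add]
  exact congrArg _ (Set.image_image2_distrib (g := fun a => single a (1 : k)) single_add).symm

theorem finrank_supported {k A : Type*} [Field k] (s : Set A) :
    Module.finrank k (supported k k s) = s.ncard :=
  Module.finrank_eq_nat_card_basis (.ofRepr (supportedEquivFinsupp s))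

/-- The exponents `(r, a)` of the monomials `y ^ r * z ^ a` of degree at most `i` in
`k[y, z] / (y ^ n - 1)`, the coordinate ring of the affine part `x ≠ 0` of the plane curve
`y ^ n = x ^ n`. The residue `r` stands for its representative in `[0, n)`. -/
def curveExponents (n i : ℕ) : Set (ZMod n × ℕ) := {x | x.1.val + x.2 ≤ i}

theorem curveExponents_zero (n : ℕ) : curveExponents n 0 = {0} := by
  ext ⟨r, a⟩
  simp [curveExponents]

variable (n i : ℕ) [NeZero n]

theorem finite_curveExponents : (curveExponents n i).Finite :=
  (Set.finite_univ.prod (Set.finite_Iic i)).subset fun _ hx =>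
    ⟨trivial, le_of_add_le_right (Set.mem_ofPred.1 hx)⟩

theorem curveExponents_add_curveExponents_one :
    curveExponents n i + curveExponents n 1 = curveExponents n (i + 1) := by
  have val_one_le : (1 : ZMod n).val ≤ 1 := (ZMod.val_one_eq_one_mod n).trans_le (Nat.mod_le _ _)
  ext ⟨r, a⟩
  simp only [Set.mem_add, Prod.exists, curveExponents, Set.mem_ofPred_eq, Prod.mk_add_mk,
    Prod.mk.injEq]
  constructor
  · rintro ⟨s, b, hb, t, c, hc, rfl, rfl⟩
    have := ZMod.val_add_le s t
    omega
  · intro h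
    by_cases hle : r.val + a ≤ i
    · exact ⟨r, a, hle, 0, 0, by simp, by simp⟩
    obtain _ | a := a
    · have one_ne_zero : (1 : ZMod n).val ≠ 0 := by
        rw [Ne, ZMod.val_eq_zero]
        intro h
        have hr : r = 0 := by rw [← mul_one r, h, mul_zero]
        exact hle (by simp [hr])
      refine ⟨r - 1, 0, ?_, 1, 0, by simpa using val_one_le, by simp⟩
      rw [ZMod.val_sub (by omega)]
      omega
    · exact ⟨r, a, by omega, 0, 1, by simp, by simp⟩

theorem supported_curveExponents_one_pow {k : Type*} [CommSemiring k] :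
    supported k k (curveExponents n 1) ^ i = supported k k (curveExponents n i) := by
  induction i with
  | zero =>
    rw [pow_zero, curveExponents_zero, supported_eq_span_single, Set.image_singleton,
      ← AddMonoidAlgebra.one_def, Submodule.one_eq_span]
  | succ i ih =>
    rw [pow_succ, ih, supported_mul_supported, curveExponents_add_curveExponents_one]

theorem ncard_curveExponents :
    (curveExponents n i).ncard = ∑ r ∈ Finset.range n, (i + 1 - r) := by
  have card_fiber (r : ZMod n) : Nat.card {a : ℕ // r.val + a ≤ i} = i + 1 - r.val := by
    rw [Nat.subtype_card (Finset.range (i + 1 - r.val)) fun a => by simp; omega, Finset.card_range]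
  have finite_fiber (r : ZMod n) : Finite {a : ℕ // r.val + a ≤ i} :=
    (Set.finite_Iic i).subset fun a (ha : r.val + a ≤ i) => (Nat.le_add_left _ _).trans ha
  obtain ⟨n, rfl⟩ := Nat.exists_eq_succ_of_ne_zero (NeZero.ne n)
  calc (curveExponents (n + 1) i).ncard
      = Nat.card (Σ r : ZMod (n + 1), {a : ℕ // r.val + a ≤ i}) :=
        Nat.card_congr <|
          Equiv.subtypeProdEquivSigmaSubtype fun (r : ZMod (n + 1)) a => r.val + a ≤ i
    _ = ∑ r : ZMod (n + 1), (i + 1 - r.val) := by simp only [Nat.card_sigma, card_fiber]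
    _ = ∑ r ∈ Finset.range (n + 1), (i + 1 - r) :=
        Fin.sum_univ_eq_sum_range (fun r => i + 1 - r) (n + 1)

variable {n i} in
theorem cast_ncard_curveExponents (h : n ≤ i + 1) :
    ((curveExponents n i).ncard : ℚ) = n * i - n * (n - 3) / 2 := by
  have sum_range (m : ℕ) (hm : m ≤ i + 1) :
      ((∑ r ∈ Finset.range m, (i + 1 - r) : ℕ) : ℚ) = m * i - m * (m - 3) / 2 := by
    induction m with
    | zero => simp
    | succ m ih =>
      rw [Finset.sum_range_succ, Nat.cast_add, ih (by omega), Nat.cast_sub (by omega)]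
      push_cast
      ring
  rw [ncard_curveExponents, sum_range n h]

variable (k : Type*) [Field k]

theorem curve_mem_powerRankPolynomials :
    C (n : ℚ) * X - C (n * (n - 3) / 2 : ℚ) ∈ powerRankPolynomials k := by
  refine ⟨k[ZMod n × ℕ], inferInstance, inferInstance, supported k k (curveExponents n 1), ?_, ?_⟩
  · rw [supported_eq_span_single]
    exact Submodule.fg_span ((finite_curveExponents n 1).image _)
  filter_upwards [Filter.eventually_ge_atTop n] with i hi
  rw [supported_curveExponents_one_pow, finrank_supported, cast_ncard_curveExponents (by omega)]
  simp only [eval_sub, eval_mul, eval_C, eval_X]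

theorem X_add_one_mem_powerRankPolynomials : (X + 1 : ℚ[X]) ∈ powerRankPolynomials k := by
  convert curve_mem_powerRankPolynomials 1 k using 1
  norm_num

end PlaneCurve

section LeadingTerm

variable (k : ℕ) (n c : ℤ)

theorem natDegree_X_add_one_pow_mul_sub_le :
    ((X + 1) ^ k * (C n * X - C c) : ℤ[X]).natDegree ≤ k + 1 := by
  compute_degree

theorem coeff_succ_X_add_one_pow_mul_sub (i : ℕ) :
    ((X + 1) ^ k * (C n * X - C c) : ℤ[X]).coeff (i + 1) =
      n * k.choose i - c * k.choose (i + 1) := by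
  rw [mul_sub, ← mul_assoc, coeff_sub, coeff_mul_X, coeff_mul_C, coeff_mul_C,
    coeff_X_add_one_pow, coeff_X_add_one_pow]
  ring

variable {k n c} in
theorem coeff_X_add_one_pow_mul_sub_le {i : ℕ} (hik : i ≤ k) (hn : 0 ≤ n) (hnc : n * k ≤ c) :
    ((X + 1) ^ k * (C n * X - C c) : ℤ[X]).coeff i ≤ n * k - c := by
  obtain _ | i := i
  · simpa [coeff_zero_eq_eval_zero] using mul_nonneg hn k.cast_nonneg
  have one_le_choose : 1 ≤ (k.choose (i + 1) : ℤ) := mod_cast Nat.choose_pos hik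
  have choose_le : (k.choose i : ℤ) ≤ k * k.choose (i + 1) := by
    have choose_succ := Nat.choose_succ_right_eq k i
    zify [Nat.le_of_succ_le hik] at choose_succ
    nlinarith
  calc ((X + 1) ^ k * (C n * X - C c) : ℤ[X]).coeff (i + 1)
      = n * k.choose i - c * k.choose (i + 1) := coeff_succ_X_add_one_pow_mul_sub k n c i
    _ ≤ (n * k - c) * k.choose (i + 1) := by linear_combination n * choose_le
    _ ≤ n * k - c := by nlinarith

end LeadingTerm

section Induction

variable (k : Type*) [Field k]

theorem map_X_add_one_pow_mul_curve_mem_powerRankPolynomials (e n : ℕ) [NeZero n] {c : ℤ}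
    (hc : 2 * c = n * (n - 3)) :
    ((X + 1) ^ e * (C (n : ℤ) * X - C c)).map (Int.castRingHom ℚ) ∈ powerRankPolynomials k := by
  have hc' : (c : ℚ) = n * (n - 3) / 2 := by
    rw [eq_div_iff two_ne_zero, mul_comm]
    exact_mod_cast hc
  have hmem := mul_mem (pow_mem (X_add_one_mem_powerRankPolynomials k) e)
    (curve_mem_powerRankPolynomials n k)
  rw [← hc'] at hmem
  simpa using hmem

/- The bound `(m - 2) * (m + 1) / 2` is the largest for which the induction closes: subtracting the
curve of degree `m + 2` from `(m + 2) X - (m - 2) (m + 1) / 2` leaves the constant `m`. -/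
theorem map_mem_powerRankPolynomials {m : ℤ} (hm : 3 ≤ m) {d : ℕ} {p : ℤ[X]}
    (hdeg : p.natDegree ≤ d) (hlead : 2 * d + m ≤ p.coeff d)
    (hcoeff : ∀ i < d, -((m - 2) * (m + 1)) ≤ 2 * p.coeff i) :
    p.map (Int.castRingHom ℚ) ∈ powerRankPolynomials k := by
  induction d generalizing p with
  | zero =>
    obtain ⟨n, hn⟩ := Int.eq_ofNat_of_zero_le (show 0 ≤ p.coeff 0 by omega)
    rw [eq_C_of_natDegree_le_zero hdeg, hn, map_C]
    exact natCast_mem (powerRankPolynomials k) n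
  | succ e ih =>
    obtain ⟨n, hn⟩ := Int.eq_ofNat_of_zero_le (show 0 ≤ p.coeff (e + 1) by omega)
    rw [hn] at hlead
    have : NeZero n := ⟨by omega⟩
    obtain ⟨c, hc⟩ : ∃ c : ℤ, 2 * c = n * (n - 3) := by
      obtain ⟨b, hb⟩ := even_iff_two_dvd.1 (show Even ((n : ℤ) * (n - 3)) by grind)
      exact ⟨b, hb.symm⟩
    push_cast at hlead
    have hnc : n * e ≤ c := by nlinarith
    set G : ℤ[X] := (X + 1) ^ e * (C (n : ℤ) * X - C c)
    have hG {i : ℕ} (hi : i ≤ e) : G.coeff i ≤ n * e - c :=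
      coeff_X_add_one_pow_mul_sub_le hi n.cast_nonneg hnc
    have hdeg_sub : (p - G).natDegree ≤ e := by
      have hdeg_G := natDegree_X_add_one_pow_mul_sub_le e n c
      refine natDegree_le_pred (n := e + 1) ((natDegree_sub_le_iff_left hdeg_G).2 hdeg) ?_
      rw [coeff_sub, coeff_succ_X_add_one_pow_mul_sub, hn]
      simp
    have hlead_sub : 2 * e + m ≤ (p - G).coeff e := by
      have hp := hcoeff e e.lt_succ_self
      have hG := hG le_rfl
      rw [coeff_sub]
      nlinarith
    have hcoeff_sub (i : ℕ) (hi : i < e) : -((m - 2) * (m + 1)) ≤ 2 * (p - G).coeff i := by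
      have hp := hcoeff i (hi.trans e.lt_succ_self)
      have hG := hG hi.le
      rw [coeff_sub]
      linarith
    rw [← add_sub_cancel G p, Polynomial.map_add]
    exact add_mem (map_X_add_one_pow_mul_curve_mem_powerRankPolynomials k e n hc)
      (ih hdeg_sub hlead_sub hcoeff_sub)

end Induction

theorem sign_patterns_stmt1_general (d : ℕ) (a : Fin d → ℤ) (n : ℤ) (hn : 2 * d + 3 ≤ n)
    (ha : ∀ i, -((n - 2 * d - 2) * (n - 2 * d + 1)) ≤ 2 * a i) :
    IsHilbertPolynomial (C (n : ℚ) * X ^ d + ∑ i : Fin d, C (a i : ℚ) * X ^ (i : ℕ)) := by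
  set p : ℤ[X] := C n * X ^ d + ∑ i : Fin d, C (a i) * X ^ (i : ℕ) with hp
  have hdeg : p.natDegree ≤ d :=
    natDegree_add_le_of_degree_le (natDegree_C_mul_X_pow_le n d)
      (natDegree_sum_le_of_forall_le _ _ fun i _ =>
        (natDegree_C_mul_X_pow_le (a i) i).trans i.is_lt.le)
  have hlead : p.coeff d = n := by
    have (i : Fin d) : d ≠ i := i.is_lt.ne'
    simp [hp, coeff_X_pow, this]
  have hcoeff (i : Fin d) : p.coeff i = a i := by
    simp [hp, coeff_X_pow, i.is_lt.ne, Fin.val_inj]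
  have hmem := map_mem_powerRankPolynomials ℚ (m := n - 2 * d) (by omega) hdeg (by omega)
    fun i hi => by
      rw [hcoeff ⟨i, hi⟩]
      exact ha ⟨i, hi⟩
  simpa [hp, Polynomial.map_sum] using IsPowerRankPolynomial.isHilbertPolynomial hmem

theorem bounds_of_floor_div_five {d : ℕ} (hd : 0 < d) {N : ℤ} (hN : N < 0) {n : ℤ}
    (hn : -10 * (d : ℤ) * ⌊(N : ℚ) / 5⌋ + 3 ≤ n) :
    2 * d + 3 ≤ n ∧ -((n - 2 * d - 2) * (n - 2 * d + 1)) ≤ 2 * N := by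
  set F := ⌊(N : ℚ) / 5⌋
  have hFN : 5 * F ≤ N := by
    have : (F : ℚ) ≤ N / 5 := Int.floor_le _
    rw [le_div_iff₀' (by norm_num)] at this
    exact_mod_cast this
  have hF : F ≤ -1 := by omega
  have hd' : (1 : ℤ) ≤ d := mod_cast hd
  have hdF : d * F ≤ F := by nlinarith [hd']
  have hdF' : d * F ≤ -d := by nlinarith
  have hle : -8 * F + 3 ≤ n - 2 * d := by linarith
  refine ⟨by omega, ?_⟩
  calc -((n - 2 * d - 2) * (n - 2 * d + 1))
      ≤ -((-8 * F + 1) * (-8 * F + 4)) :=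
        neg_le_neg (mul_le_mul (by omega) (by omega) (by omega) (by omega))
    _ ≤ 10 * F := by nlinarith
    _ ≤ 2 * N := by omega

theorem sign_patterns_stmt1 (d : ℕ) (hd : 0 < d) (a : Fin d → ℤ) (N : ℤ)
    (hN : IsLeast (Set.range a) N) (hN2 : N < -2) (n : ℤ)
    (hn : -10 * (d : ℤ) * ⌊(N : ℚ) / 5⌋ + 3 ≤ n) :
    IsHilbertPolynomial (Polynomial.C (n : ℚ) * Polynomial.X ^ d
      + ∑ i : Fin d, Polynomial.C ((a i : ℚ)) * Polynomial.X ^ (i : ℕ)) := by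
  obtain ⟨hlead, hlower⟩ := bounds_of_floor_div_five hd (hN2.trans (by norm_num)) hn
  exact sign_patterns_stmt1_general d a n hlead fun i =>
    hlower.trans (by linarith [hN.2 ⟨i, rfl⟩])
end

section
/- For every integer d ≥ 1 and every tuple s = (s_0, …, s_{d-1}) ∈ {-1, 0, 1}^d, there exists a Hilbert polynomial f(x) = Σ_{i=0}^d a_i x^i ∈ ℤ[x] of degree d such that sgn(a_i) = s_i for all i = 0, …, d-1. In other words, all sign patterns of the lower-order coefficients of Hilbert polynomials are possible. -/
open Polynomial

/-!
The Hilbert polynomials of the monomial quotients `k[A] / I`, for `A` a graded commutative monoid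
generated in degree one, form a semiring: fiber products over `k` realise sums and Segre products
realise products. A plane cubic puts `3 * X` into it and a plane quintic puts `5 * (X - 1)` into it.
Since `X ^ d - X ^ j = X ^ j * (X ^ (d - j) - 1)` is a nonnegative integer combination of products
of `X` and `X - 1`, a negative coefficient can be installed in degree `j < d` at the price of
enlarging the leading coefficient. Hence, up to a common positive factor, the lower-order
coefficients can be prescribed arbitrarily.
-/

open Filter

section StandardMonomials

variable {A : Type*} [AddCommMonoid A]

/-- A degree function on a commutative monoid is a *standard grading* if only `0` has degree zero
and every element is a sum of elements of degree one. The second condition is encoded by splitting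
off one summand of degree one at a time. -/
structure IsStandardGrading (deg : A →+ ℕ) : Prop where
  eq_zero_of_deg_eq_zero : ∀ a, deg a = 0 → a = 0
  exists_add_of_deg_eq_succ : ∀ n a, deg a = n + 1 → ∃ b c, deg b = 1 ∧ deg c = n ∧ b + c = a

/-- The *standard monomials* of degree `n` of a monoid ideal `I`: the elements of degree `n` that
survive in the quotient of the monoid algebra by the ideal spanned by `I`. -/
def standardMonomials (deg : A →+ ℕ) (I : AddSemigroupIdeal A) (n : ℕ) : Set A :=
  {a | deg a = n ∧ a ∉ I}

end StandardMonomials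

section MonomialQuotient

variable (k : Type*) [CommRing k] {A : Type*} [AddCommMonoid A] (I : AddSemigroupIdeal A)

/-- The ideal of the monoid algebra `k[A]` spanned by the monomials in a monoid ideal `I`. -/
noncomputable def monomialIdeal : Ideal (AddMonoidAlgebra k A) :=
  Ideal.span (AddMonoidAlgebra.of' k A '' (I : Set A))

theorem mem_monomialIdeal_iff {x : AddMonoidAlgebra k A} :
    x ∈ monomialIdeal k I ↔ ∀ a ∈ x.coeff.support, a ∈ I := by
  refine AddMonoidAlgebra.mem_ideal_span_of'_image.trans <| forall₂_congr fun a _ ↦ ⟨?_, ?_⟩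
  · rintro ⟨b, hb, c, rfl⟩
    exact I.add_mem c hb
  · exact fun ha ↦ ⟨a, ha, 0, (zero_add a).symm⟩

/-- The image of `a : A` in the quotient of `k[A]` by the monomial ideal of `I`. -/
noncomputable def quotientMonomial (a : A) : AddMonoidAlgebra k A ⧸ monomialIdeal k I :=
  Ideal.Quotient.mkₐ k (monomialIdeal k I) (AddMonoidAlgebra.single a 1)

theorem quotientMonomial_zero : quotientMonomial k I 0 = 1 :=
  map_one (Ideal.Quotient.mkₐ k (monomialIdeal k I))

theorem quotientMonomial_add (a b : A) :
    quotientMonomial k I (a + b) = quotientMonomial k I a * quotientMonomial k I b := by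
  simp only [quotientMonomial, ← map_mul, AddMonoidAlgebra.single_mul_single, one_mul]

variable {I} in
theorem quotientMonomial_eq_zero {a : A} (ha : a ∈ I) : quotientMonomial k I a = 0 :=
  Ideal.Quotient.eq_zero_iff_mem.2 <| Ideal.subset_span ⟨a, ha, rfl⟩

theorem mkₐ_eq_linearCombination_quotientMonomial (x : AddMonoidAlgebra k A) :
    Ideal.Quotient.mkₐ k (monomialIdeal k I) x =
      Finsupp.linearCombination k (quotientMonomial k I) x.coeff := by
  induction x using AddMonoidAlgebra.induction_linear with
  | zero => simp
  | add x y hx hy => rw [map_add, AddMonoidAlgebra.coeff_add, map_add, hx, hy]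
  | single a r =>
    rw [AddMonoidAlgebra.coeff_single, Finsupp.linearCombination_single, quotientMonomial,
      ← map_smul, AddMonoidAlgebra.smul_single, smul_eq_mul, mul_one]

theorem span_quotientMonomial_compl :
    Submodule.span k (quotientMonomial k I '' (I : Set A)ᶜ) = ⊤ := by
  refine eq_top_iff.2 fun x _ ↦ ?_
  obtain ⟨x, rfl⟩ := Ideal.Quotient.mkₐ_surjective k (monomialIdeal k I) x
  rw [mkₐ_eq_linearCombination_quotientMonomial, Finsupp.linearCombination_apply]
  refine Submodule.sum_mem _ fun a _ ↦ Submodule.smul_mem _ _ ?_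
  by_cases ha : a ∈ I
  · rw [quotientMonomial_eq_zero k ha]
    exact Submodule.zero_mem _
  · exact Submodule.subset_span ⟨a, ha, rfl⟩

theorem linearIndepOn_quotientMonomial_compl :
    LinearIndepOn k (quotientMonomial k I) (I : Set A)ᶜ := by
  refine linearIndepOn_iff.2 fun l hl hl0 ↦ ?_
  have hmem : AddMonoidAlgebra.ofCoeff l ∈ monomialIdeal k I :=
    Ideal.Quotient.eq_zero_iff_mem.1 <|
      (mkₐ_eq_linearCombination_quotientMonomial k I _).trans hl0
  have hsupport : ∀ a ∈ l.support, a ∈ I := (mem_monomialIdeal_iff k I).1 hmem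
  exact Finsupp.support_eq_empty.1 <| Finset.eq_empty_of_forall_notMem fun a ha ↦
    hl ha (hsupport a ha)

end MonomialQuotient

section QuotientGrading

theorem isInternal_span_image {R M ι κ : Type*} [DecidableEq κ] [Ring R] [AddCommGroup M]
    [Module R M] {v : ι → M} {t : κ → Set ι} (ht : Pairwise (Function.onFun Disjoint t))
    (hv : LinearIndepOn R v (⋃ n, t n)) (hspan : Submodule.span R (v '' ⋃ n, t n) = ⊤) :
    DirectSum.IsInternal fun n ↦ Submodule.span R (v '' t n) := by
  refine DirectSum.isInternal_submodule_of_iSupIndep_of_iSup_eq_top (fun n ↦ ?_) ?_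
  · have hdisj : Disjoint (t n) (⋃ (m) (_ : m ≠ n), t m) :=
      Set.disjoint_iUnion₂_right.2 fun m hm ↦ ht hm.symm
    have hsub : t n ∪ ⋃ (m) (_ : m ≠ n), t m ⊆ ⋃ m, t m :=
      Set.union_subset (Set.subset_iUnion t n)
        (Set.iUnion₂_subset fun m _ ↦ Set.subset_iUnion t m)
    simpa only [Set.image_iUnion, Submodule.span_iUnion] using
      ((linearIndepOn_union_iff hdisj).1 (hv.mono hsub)).2.2
  · rw [← hspan, Set.image_iUnion, Submodule.span_iUnion]

variable (k : Type*) [CommRing k] {A : Type*} [AddCommMonoid A] (deg : A →+ ℕ)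
  (I : AddSemigroupIdeal A)

theorem pairwise_disjoint_standardMonomials :
    Pairwise (Function.onFun Disjoint (standardMonomials deg I)) :=
  fun _ _ hmn ↦ Set.disjoint_left.2 fun _ hm hn ↦ hmn (hm.1.symm.trans hn.1)

theorem iUnion_standardMonomials : ⋃ n, standardMonomials deg I n = (I : Set A)ᶜ := by
  ext a
  simp [standardMonomials]

/-- The degree `n` component of the quotient of `k[A]` by the monomial ideal of `I`, spanned by the
images of the standard monomials of degree `n`. -/
noncomputable def quotientComponent (n : ℕ) :
    Submodule k (AddMonoidAlgebra k A ⧸ monomialIdeal k I) :=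
  Submodule.span k (quotientMonomial k I '' standardMonomials deg I n)

theorem isInternal_quotientComponent : DirectSum.IsInternal (quotientComponent k deg I) := by
  refine isInternal_span_image (pairwise_disjoint_standardMonomials deg I) ?_ ?_ <;>
    rw [iUnion_standardMonomials]
  · exact linearIndepOn_quotientMonomial_compl k I
  · exact span_quotientMonomial_compl k I

theorem quotientMonomial_mem_quotientComponent (a : A) :
    quotientMonomial k I a ∈ quotientComponent k deg I (deg a) := by
  by_cases ha : a ∈ I
  · rw [quotientMonomial_eq_zero k ha]
    exact Submodule.zero_mem _
  · exact Submodule.subset_span ⟨a, ⟨rfl, ha⟩, rfl⟩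

instance gradedMonoid_quotientComponent : SetLike.GradedMonoid (quotientComponent k deg I) where
  one_mem := by
    simpa only [quotientMonomial_zero, map_zero] using
      quotientMonomial_mem_quotientComponent k deg I 0
  mul_mem m n x y hx hy := by
    have hle : quotientComponent k deg I m * quotientComponent k deg I n ≤
        quotientComponent k deg I (m + n) := by
      rw [quotientComponent, quotientComponent, Submodule.span_mul_span, Submodule.span_le]
      rintro _ ⟨_, ⟨a, ⟨rfl, -⟩, rfl⟩, _, ⟨b, ⟨rfl, -⟩, rfl⟩, rfl⟩
      simpa only [SetLike.mem_coe, quotientMonomial_add, map_add] using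
        quotientMonomial_mem_quotientComponent k deg I (a + b)
    exact hle (Submodule.mul_mem_mul hx hy)

noncomputable instance gradedAlgebra_quotientComponent :
    GradedAlgebra (quotientComponent k deg I) where
  toDecomposition := (isInternal_quotientComponent k deg I).chooseDecomposition

theorem finrank_quotientComponent [Nontrivial k] (n : ℕ) :
    Module.finrank k (quotientComponent k deg I n) = (standardMonomials deg I n).ncard := by
  have hli : LinearIndepOn k (quotientMonomial k I) (standardMonomials deg I n) :=
    (linearIndepOn_quotientMonomial_compl k I).mono fun _ ha ↦ ha.2
  rw [quotientComponent, Set.image_eq_range, ← Nat.card_coe_set_eq]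
  exact Module.finrank_eq_nat_card_basis (Module.Basis.span hli)

variable {deg}

theorem adjoin_quotientComponent_one (hdeg : IsStandardGrading deg) :
    Algebra.adjoin k (quotientComponent k deg I 1 : Set (AddMonoidAlgebra k A ⧸ monomialIdeal k I))
      = ⊤ := by
  have hmonomial : ∀ n a, deg a = n →
      quotientMonomial k I a ∈ Algebra.adjoin k (quotientComponent k deg I 1 : Set _) := by
    intro n
    induction n with
    | zero =>
      intro a ha
      rw [hdeg.eq_zero_of_deg_eq_zero a ha, quotientMonomial_zero]
      exact one_mem _
    | succ n ih =>
      intro a ha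
      obtain ⟨b, c, hb, hc, rfl⟩ := hdeg.exists_add_of_deg_eq_succ n a ha
      rw [quotientMonomial_add]
      exact mul_mem (Algebra.subset_adjoin (hb ▸ quotientMonomial_mem_quotientComponent k deg I b))
        (ih c hc)
  rw [← Algebra.toSubmodule_eq_top, eq_top_iff, ← span_quotientMonomial_compl, Submodule.span_le]
  rintro _ ⟨a, -, rfl⟩
  exact hmonomial _ a rfl

end QuotientGrading

section MonomialHilbertPolynomials

/-- `f` is the Hilbert polynomial of the quotient of a monoid algebra by the ideal of a proper
monoid ideal `I`: for large `n` it counts the standard monomials of degree `n`. -/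
structure HasMonomialHilbertPolynomial {A : Type*} [AddCommMonoid A] (deg : A →+ ℕ)
    (I : AddSemigroupIdeal A) (f : ℚ[X]) : Prop where
  isStandardGrading : IsStandardGrading deg
  zero_notMem : 0 ∉ I
  finite_standardMonomials : ∀ n, (standardMonomials deg I n).Finite
  eventually_ncard_eq : ∀ᶠ n in atTop, ((standardMonomials deg I n).ncard : ℚ) = f.eval (n : ℚ)

theorem HasMonomialHilbertPolynomial.isHilbertPolynomial {A : Type} [AddCommMonoid A]
    {deg : A →+ ℕ} {I : AddSemigroupIdeal A} {f : ℚ[X]}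
    (hf : HasMonomialHilbertPolynomial deg I f) : IsHilbertPolynomial f := by
  obtain ⟨N, hN⟩ := eventually_atTop.1 hf.eventually_ncard_eq
  refine ⟨ℚ, AddMonoidAlgebra ℚ A ⧸ monomialIdeal ℚ I, inferInstance, inferInstance, inferInstance,
    quotientComponent ℚ deg I, inferInstance, fun n ↦ ?_,
    adjoin_quotientComponent_one ℚ I hf.isStandardGrading, N, fun n hn ↦ ?_⟩
  · exact FiniteDimensional.span_of_finite ℚ ((hf.finite_standardMonomials n).image _)
  · rw [finrank_quotientComponent, hN n hn]

theorem pairwiseDisjoint_image_prodMk {α ι : Type*} (s : Set ι) (t : ι → Set α) :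
    s.PairwiseDisjoint fun c ↦ (fun a ↦ (a, c)) '' t c := by
  refine fun c _ c' _ hne ↦ Set.disjoint_left.2 ?_
  rintro _ ⟨a, -, rfl⟩ ⟨a', -, h⟩
  exact hne (Prod.mk.inj h).2.symm

variable {A B : Type*} [AddCommMonoid A] [AddCommMonoid B] {dA : A →+ ℕ} {dB : B →+ ℕ}
  {I : AddSemigroupIdeal A} {J : AddSemigroupIdeal B} {f g : ℚ[X]}

theorem isStandardGrading_id_nat : IsStandardGrading (AddMonoidHom.id ℕ) where
  eq_zero_of_deg_eq_zero _ ha := ha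
  exists_add_of_deg_eq_succ n _ ha := ⟨1, n, rfl, rfl, (Nat.add_comm 1 n).trans ha.symm⟩

theorem IsStandardGrading.coprod (hA : IsStandardGrading dA) (hB : IsStandardGrading dB) :
    IsStandardGrading (dA.coprod dB) where
  eq_zero_of_deg_eq_zero := by
    rintro ⟨a, b⟩ h
    obtain ⟨ha, hb⟩ := Nat.add_eq_zero_iff.1 h
    exact Prod.ext (hA.eq_zero_of_deg_eq_zero a ha) (hB.eq_zero_of_deg_eq_zero b hb)
  exists_add_of_deg_eq_succ := by
    rintro n ⟨a, b⟩ h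
    simp only [AddMonoidHom.coprod_apply] at h
    rcases hda : dA a with - | m
    · obtain ⟨x, y, hx, hy, rfl⟩ := hB.exists_add_of_deg_eq_succ n b (by lia)
      exact ⟨(0, x), (a, y), by simp [hx], by simp [hda, hy], by simp⟩
    · obtain ⟨x, y, hx, hy, rfl⟩ := hA.exists_add_of_deg_eq_succ m a hda
      exact ⟨(x, 0), (y, b), by simp [hx], by simp only [AddMonoidHom.coprod_apply]; lia, by simp⟩

theorem hasMonomialHilbertPolynomial_zero :
    HasMonomialHilbertPolynomial (0 : PUnit →+ ℕ) ⊥ 0 where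
  isStandardGrading := ⟨fun _ _ ↦ rfl, fun _ _ h ↦ absurd h (Nat.succ_ne_zero _).symm⟩
  zero_notMem := id
  finite_standardMonomials _ := Set.toFinite _
  eventually_ncard_eq := by
    filter_upwards [eventually_gt_atTop 0] with n hn
    simp [standardMonomials, hn.ne]

theorem hasMonomialHilbertPolynomial_one :
    HasMonomialHilbertPolynomial (AddMonoidHom.id ℕ) ⊥ 1 := by
  have hstd (n : ℕ) : standardMonomials (AddMonoidHom.id ℕ) ⊥ n = {n} := by
    ext a
    exact and_iff_left id
  refine ⟨isStandardGrading_id_nat, id, fun n ↦ ?_, .of_forall fun n ↦ ?_⟩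
  · rw [hstd]
    exact Set.finite_singleton n
  · rw [hstd, Set.ncard_singleton, Nat.cast_one, eval_one]

theorem hasMonomialHilbertPolynomial_X_add_one :
    HasMonomialHilbertPolynomial ((AddMonoidHom.id ℕ).coprod (AddMonoidHom.id ℕ)) ⊥
      (X + 1 : ℚ[X]) := by
  have hstd (n : ℕ) : standardMonomials ((AddMonoidHom.id ℕ).coprod (AddMonoidHom.id ℕ)) ⊥ n =
      (Finset.HasAntidiagonal.antidiagonal n : Set (ℕ × ℕ)) := by
    ext p
    exact (and_iff_left id).trans Finset.HasAntidiagonal.mem_antidiagonal.symm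
  refine ⟨isStandardGrading_id_nat.coprod isStandardGrading_id_nat, id, fun n ↦ ?_,
    .of_forall fun n ↦ ?_⟩
  · rw [hstd]
    exact Finset.finite_toSet _
  · rw [hstd, Set.ncard_coe_finset, Finset.Nat.card_antidiagonal]
    simp

/-- The monoid ideal of `A × ℕ` generated by `I` and `y ^ m`, where `y` is the generator of `ℕ`;
the quotient by its monomial ideal is `(k[A] / I)[y] / (y ^ m)`. -/
def truncationIdeal (I : AddSemigroupIdeal A) (m : ℕ) : AddSemigroupIdeal (A × ℕ) where
  carrier := {p | p.1 ∈ I ∨ m ≤ p.2}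
  vadd_mem' p _ := Or.imp (I.add_mem p.1) fun h ↦ h.trans (Nat.le_add_left _ p.2)

theorem standardMonomials_truncationIdeal (dA : A →+ ℕ) (I : AddSemigroupIdeal A) (m n : ℕ) :
    standardMonomials (dA.coprod (AddMonoidHom.id ℕ)) (truncationIdeal I m) n =
      ⋃ c ∈ Set.Iio (min m (n + 1)), (fun a ↦ (a, c)) '' standardMonomials dA I (n - c) := by
  ext ⟨a, c⟩
  have hmem : (a, c) ∈ truncationIdeal I m ↔ a ∈ I ∨ m ≤ c := Iff.rfl
  simp only [standardMonomials, Set.mem_ofPred_eq, hmem, AddMonoidHom.coprod_apply,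
    AddMonoidHom.id_apply, Set.mem_iUnion, Set.mem_image, Prod.mk.injEq, Set.mem_Iio, exists_prop]
  constructor
  · rintro ⟨hdeg, hac⟩
    obtain ⟨ha, hc⟩ := not_or.1 hac
    exact ⟨c, lt_min (not_le.1 hc) (by lia), a, ⟨by lia, ha⟩, rfl, rfl⟩
  · rintro ⟨c, hc, a, ⟨hdeg, ha⟩, rfl, rfl⟩
    exact ⟨by lia, not_or_intro ha (lt_min_iff.1 hc).1.not_ge⟩

theorem HasMonomialHilbertPolynomial.truncation (hf : HasMonomialHilbertPolynomial dA I f) {m : ℕ}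
    (hm : 0 < m) :
    HasMonomialHilbertPolynomial (dA.coprod (AddMonoidHom.id ℕ)) (truncationIdeal I m)
      (∑ c ∈ Finset.range m, f.comp (X - (c : ℚ[X]))) := by
  have hfin (n c : ℕ) : ((fun a ↦ (a, c)) '' standardMonomials dA I (n - c)).Finite :=
    (hf.finite_standardMonomials _).image _
  refine ⟨hf.isStandardGrading.coprod isStandardGrading_id_nat,
    not_or_intro hf.zero_notMem hm.not_ge, fun n ↦ ?_, ?_⟩
  · rw [standardMonomials_truncationIdeal]
    exact (Set.finite_Iio _).biUnion fun c _ ↦ hfin n c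
  · have hshift : ∀ᶠ n in atTop, ∀ c ∈ Finset.range m,
        ((standardMonomials dA I (n - c)).ncard : ℚ) = f.eval ((n - c : ℕ) : ℚ) :=
      (eventually_all_finset _).2 fun c _ ↦
        (tendsto_sub_atTop_nat c).eventually hf.eventually_ncard_eq
    filter_upwards [hshift, eventually_ge_atTop m] with n hn hmn
    rw [standardMonomials_truncationIdeal, min_eq_left (by lia), ← Finset.coe_range,
      (Finset.finite_toSet _).ncard_biUnion (fun c _ ↦ hfin n c)
        (pairwiseDisjoint_image_prodMk _ _), finsum_mem_coe_finset, Nat.cast_sum, eval_finsetSum]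
    refine Finset.sum_congr rfl fun c hc ↦ ?_
    have hcn : c ≤ n := (Finset.mem_range.1 hc).le.trans hmn
    rw [Set.ncard_image_of_injective _ (Prod.mk_left_injective c), hn c hc, Nat.cast_sub hcn]
    simp

/-- The monoid ideal of `A × B` whose quotient algebra is the fiber product over `k` of the quotient
algebras of `I` and `J`. Degrees are used to express that a factor is nontrivial, which makes this
an ideal for arbitrary degree functions. -/
def fiberProductIdeal (dA : A →+ ℕ) (dB : B →+ ℕ) (I : AddSemigroupIdeal A)
    (J : AddSemigroupIdeal B) : AddSemigroupIdeal (A × B) where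
  carrier := {p | p.1 ∈ I ∨ p.2 ∈ J ∨ 0 < dA p.1 ∧ 0 < dB p.2}
  vadd_mem' p q := by
    refine Or.imp (I.add_mem p.1) (Or.imp (J.add_mem p.2) fun hq ↦ ?_)
    simp only [vadd_eq_add, Prod.fst_add, Prod.snd_add, map_add]
    lia

theorem standardMonomials_fiberProductIdeal (hA : IsStandardGrading dA) (hB : IsStandardGrading dB)
    (hI : 0 ∉ I) (hJ : 0 ∉ J) (n : ℕ) :
    standardMonomials (dA.coprod dB) (fiberProductIdeal dA dB I J) n =
      (fun a ↦ (a, 0)) '' standardMonomials dA I n ∪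
        (fun b ↦ (0, b)) '' standardMonomials dB J n := by
  ext ⟨a, b⟩
  have hmem : (a, b) ∈ fiberProductIdeal dA dB I J ↔ a ∈ I ∨ b ∈ J ∨ 0 < dA a ∧ 0 < dB b := Iff.rfl
  simp only [standardMonomials, Set.mem_ofPred_eq, hmem, AddMonoidHom.coprod_apply, Set.mem_union,
    Set.mem_image, Prod.mk.injEq]
  constructor
  · rintro ⟨hab, hmem⟩
    push Not at hmem
    rcases Nat.eq_zero_or_pos (dA a) with ha | ha
    · exact .inr ⟨b, ⟨by lia, hmem.2.1⟩, (hA.eq_zero_of_deg_eq_zero a ha).symm, rfl⟩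
    · have hb : dB b = 0 := Nat.le_zero.1 (hmem.2.2 ha)
      exact .inl ⟨a, ⟨by lia, hmem.1⟩, rfl, (hB.eq_zero_of_deg_eq_zero b hb).symm⟩
  · rintro (⟨a, ⟨ha, haI⟩, rfl, rfl⟩ | ⟨b, ⟨hb, hbJ⟩, rfl, rfl⟩)
    · simp [ha, haI, hJ]
    · simp [hb, hbJ, hI]

theorem disjoint_image_standardMonomials (dA : A →+ ℕ) (I : AddSemigroupIdeal A) (t : Set B) {n : ℕ}
    (hn : 0 < n) :
    Disjoint ((fun a ↦ (a, (0 : B))) '' standardMonomials dA I n)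
      ((fun b ↦ ((0 : A), b)) '' t) := by
  rw [Set.disjoint_left]
  rintro _ ⟨a, ⟨ha, -⟩, rfl⟩ ⟨b, -, hb⟩
  obtain rfl : 0 = a := (Prod.mk.inj hb).1
  exact hn.ne ((map_zero dA).symm.trans ha)

theorem HasMonomialHilbertPolynomial.add (hf : HasMonomialHilbertPolynomial dA I f)
    (hg : HasMonomialHilbertPolynomial dB J g) :
    HasMonomialHilbertPolynomial (dA.coprod dB) (fiberProductIdeal dA dB I J) (f + g) := by
  have hstd := standardMonomials_fiberProductIdeal hf.isStandardGrading
    hg.isStandardGrading hf.zero_notMem hg.zero_notMem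
  have hfinA (n : ℕ) := (hf.finite_standardMonomials n).image fun a ↦ (a, (0 : B))
  have hfinB (n : ℕ) := (hg.finite_standardMonomials n).image fun b ↦ ((0 : A), b)
  refine ⟨hf.isStandardGrading.coprod hg.isStandardGrading, ?_, fun n ↦ ?_, ?_⟩
  · rintro (h | h | h)
    · exact hf.zero_notMem h
    · exact hg.zero_notMem h
    · exact h.1.ne (map_zero dA).symm
  · rw [hstd]
    exact (hfinA n).union (hfinB n)
  · filter_upwards [hf.eventually_ncard_eq, hg.eventually_ncard_eq, eventually_gt_atTop 0]
      with n hfn hgn hn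
    rw [hstd, Set.ncard_union_eq (disjoint_image_standardMonomials dA I _ hn) (hfinA n)
      (hfinB n), Set.ncard_image_of_injective _ (Prod.mk_left_injective _),
      Set.ncard_image_of_injective _ (Prod.mk_right_injective _), Nat.cast_add, hfn, hgn, eval_add]

/-- The submonoid of `A × B` of pairs of elements of equal degree; its monoid algebra is the Segre
product of `k[A]` and `k[B]`. -/
def segreSubmonoid (dA : A →+ ℕ) (dB : B →+ ℕ) : AddSubmonoid (A × B) :=
  (dA.comp (AddMonoidHom.fst A B)).eqLocusM (dB.comp (AddMonoidHom.snd A B))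

/-- The common degree of the two components of an element of the Segre product. -/
def segreDegree (dA : A →+ ℕ) (dB : B →+ ℕ) : segreSubmonoid dA dB →+ ℕ :=
  (dA.comp (AddMonoidHom.fst A B)).comp (segreSubmonoid dA dB).subtype

/-- The monoid ideal of the Segre product whose standard monomials are the pairs of standard
monomials of `I` and `J`. -/
def segreIdeal (dA : A →+ ℕ) (dB : B →+ ℕ) (I : AddSemigroupIdeal A) (J : AddSemigroupIdeal B) :
    AddSemigroupIdeal (segreSubmonoid dA dB) where
  carrier := {p | p.1.1 ∈ I ∨ p.1.2 ∈ J}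
  vadd_mem' p _ := Or.imp (I.add_mem p.1.1) (J.add_mem p.1.2)

theorem IsStandardGrading.segre (hA : IsStandardGrading dA) (hB : IsStandardGrading dB) :
    IsStandardGrading (segreDegree dA dB) where
  eq_zero_of_deg_eq_zero := by
    rintro ⟨⟨a, b⟩, hab⟩ ha
    exact Subtype.ext <| Prod.ext (hA.eq_zero_of_deg_eq_zero a ha)
      (hB.eq_zero_of_deg_eq_zero b (hab.symm.trans ha))
  exists_add_of_deg_eq_succ := by
    rintro n ⟨⟨a, b⟩, hab⟩ ha
    obtain ⟨x, y, hx, hy, hxy⟩ := hA.exists_add_of_deg_eq_succ n a ha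
    obtain ⟨x', y', hx', hy', hxy'⟩ := hB.exists_add_of_deg_eq_succ n b (hab.symm.trans ha)
    exact ⟨⟨(x, x'), hx.trans hx'.symm⟩, ⟨(y, y'), hy.trans hy'.symm⟩, hx, hy,
      Subtype.ext (Prod.ext hxy hxy')⟩

theorem image_val_standardMonomials_segreIdeal (dA : A →+ ℕ) (dB : B →+ ℕ)
    (I : AddSemigroupIdeal A) (J : AddSemigroupIdeal B) (n : ℕ) :
    Subtype.val '' standardMonomials (segreDegree dA dB) (segreIdeal dA dB I J) n =
      standardMonomials dA I n ×ˢ standardMonomials dB J n := by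
  ext ⟨a, b⟩
  constructor
  · rintro ⟨⟨⟨a, b⟩, hab⟩, ⟨ha, hmem⟩, ⟨⟩⟩
    obtain ⟨haI, hbJ⟩ := not_or.1 hmem
    exact ⟨⟨ha, haI⟩, hab.symm.trans ha, hbJ⟩
  · rintro ⟨⟨ha, haI⟩, hb, hbJ⟩
    exact ⟨⟨(a, b), ha.trans hb.symm⟩, ⟨ha, not_or_intro haI hbJ⟩, rfl⟩

theorem HasMonomialHilbertPolynomial.mul (hf : HasMonomialHilbertPolynomial dA I f)
    (hg : HasMonomialHilbertPolynomial dB J g) :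
    HasMonomialHilbertPolynomial (segreDegree dA dB) (segreIdeal dA dB I J) (f * g) := by
  refine ⟨hf.isStandardGrading.segre hg.isStandardGrading,
    not_or_intro hf.zero_notMem hg.zero_notMem, fun n ↦ ?_, ?_⟩
  · refine Set.Finite.of_finite_image ?_ Subtype.val_injective.injOn
    rw [image_val_standardMonomials_segreIdeal]
    exact (hf.finite_standardMonomials n).prod (hg.finite_standardMonomials n)
  · filter_upwards [hf.eventually_ncard_eq, hg.eventually_ncard_eq] with n hfn hgn
    rw [← Set.ncard_image_of_injective _ Subtype.val_injective,
      image_val_standardMonomials_segreIdeal, Set.ncard_prod, Nat.cast_mul, hfn, hgn, eval_mul]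

/-- The Hilbert polynomials of quotients of monoid algebras by monomial ideals form a semiring:
fiber products of algebras give sums and Segre products give products. -/
def monomialHilbertSemiring : Subsemiring ℚ[X] where
  carrier := {f | ∃ (A : Type) (_ : AddCommMonoid A) (deg : A →+ ℕ) (I : AddSemigroupIdeal A),
    HasMonomialHilbertPolynomial deg I f}
  zero_mem' := ⟨_, _, _, _, hasMonomialHilbertPolynomial_zero⟩
  one_mem' := ⟨_, _, _, _, hasMonomialHilbertPolynomial_one⟩
  add_mem' := by
    rintro f g ⟨A, _, dA, I, hf⟩ ⟨B, _, dB, J, hg⟩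
    exact ⟨_, _, _, _, hf.add hg⟩
  mul_mem' := by
    rintro f g ⟨A, _, dA, I, hf⟩ ⟨B, _, dB, J, hg⟩
    exact ⟨_, _, _, _, hf.mul hg⟩

theorem isHilbertPolynomial_of_mem_monomialHilbertSemiring (hf : f ∈ monomialHilbertSemiring) :
    IsHilbertPolynomial f := by
  obtain ⟨A, _, deg, I, hf⟩ := hf
  exact hf.isHilbertPolynomial

/-- The Hilbert polynomial of a plane curve of degree `m`, realised by `k[x, y, z] / (z ^ m)`. -/
theorem planeCurve_mem_monomialHilbertSemiring {m : ℕ} (hm : 0 < m) :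
    ∑ c ∈ Finset.range m, (X - (c : ℚ[X]) + 1) ∈ monomialHilbertSemiring :=
  ⟨_, _, _, _, by simpa using hasMonomialHilbertPolynomial_X_add_one.truncation hm⟩

end MonomialHilbertPolynomials

section LowerOrderCoefficients

/-- The elements of a semiring that have a positive integer multiple in the subsemiring `S`. -/
def natSaturation {R : Type*} [Semiring R] (S : Subsemiring R) : Subsemiring R where
  carrier := {x | ∃ N : ℕ, 0 < N ∧ N • x ∈ S}
  zero_mem' := ⟨1, one_pos, by simpa only [smul_zero] using S.zero_mem⟩
  one_mem' := ⟨1, one_pos, by simpa only [one_smul] using S.one_mem⟩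
  add_mem' := by
    rintro x y ⟨N, hN, hx⟩ ⟨M, hM, hy⟩
    refine ⟨M * N, Nat.mul_pos hM hN, ?_⟩
    rw [smul_add, mul_smul, mul_comm, mul_smul]
    exact add_mem (nsmul_mem hx M) (nsmul_mem hy N)
  mul_mem' := by
    rintro x y ⟨N, hN, hx⟩ ⟨M, hM, hy⟩
    refine ⟨N * M, Nat.mul_pos hN hM, ?_⟩
    rw [← smul_mul_smul_comm]
    exact mul_mem hx hy

section Subsemiring

variable {R : Type*} [Ring R] {S : Subsemiring R} {x : R}

theorem pow_sub_one_mem (hx : x ∈ S) (hx1 : x - 1 ∈ S) (n : ℕ) : x ^ n - 1 ∈ S := by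
  induction n with
  | zero => simp
  | succ n ih =>
    have hstep : x ^ (n + 1) - 1 = x * (x ^ n - 1) + (x - 1) := by
      rw [pow_succ', mul_sub, mul_one, sub_add_sub_cancel]
    rw [hstep]
    exact add_mem (mul_mem hx ih) hx1

theorem pow_sub_pow_mem (hx : x ∈ S) (hx1 : x - 1 ∈ S) {j d : ℕ} (hj : j ≤ d) :
    x ^ d - x ^ j ∈ S := by
  have hfactor : x ^ d - x ^ j = x ^ j * (x ^ (d - j) - 1) := by
    rw [mul_sub, mul_one, pow_mul_pow_sub x hj]
  rw [hfactor]
  exact mul_mem (pow_mem hx j) (pow_sub_one_mem hx hx1 _)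

theorem natAbs_nsmul_pow_add_zsmul_pow_mem (hx : x ∈ S) (hx1 : x - 1 ∈ S) {j d : ℕ} (hj : j ≤ d)
    (a : ℤ) : a.natAbs • x ^ d + a • x ^ j ∈ S := by
  obtain ⟨n, rfl | rfl⟩ := a.eq_nat_or_neg
  · rw [Int.natAbs_natCast, natCast_zsmul]
    exact add_mem (nsmul_mem (pow_mem hx d) n) (nsmul_mem (pow_mem hx j) n)
  · rw [Int.natAbs_neg, Int.natAbs_natCast, neg_smul, natCast_zsmul, ← sub_eq_add_neg, ← smul_sub]
    exact nsmul_mem (pow_sub_pow_mem hx hx1 hj) n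

end Subsemiring

theorem exists_pos_nsmul_X_pow_add_mem {S : Subsemiring ℤ[X]} (hX : X ∈ S) (hX1 : X - 1 ∈ S)
    {g : ℤ[X]} {d : ℕ} (hg : g.natDegree ≤ d) : ∃ c : ℕ, 0 < c ∧ c • X ^ d + g ∈ S := by
  refine ⟨1 + ∑ j ∈ g.support, (g.coeff j).natAbs, Nat.add_pos_left one_pos _, ?_⟩
  have hsum : (1 + ∑ j ∈ g.support, (g.coeff j).natAbs) • X ^ d + g =
      X ^ d + ∑ j ∈ g.support, ((g.coeff j).natAbs • X ^ d + g.coeff j • X ^ j) := by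
    have hg_sum : ∑ j ∈ g.support, g.coeff j • X ^ j = g := by
      simpa only [smul_eq_C_mul] using g.as_sum_support_C_mul_X_pow.symm
    rw [Finset.sum_add_distrib, hg_sum, ← Finset.sum_smul, add_smul, one_smul, add_assoc]
  rw [hsum]
  exact add_mem (pow_mem hX d) <| sum_mem fun j hj ↦ natAbs_nsmul_pow_add_zsmul_pow_mem hX hX1
    ((le_natDegree_of_mem_supp j hj).trans hg) _

theorem exists_pos_nsmul_isHilbertPolynomial {g : ℤ[X]} {d : ℕ} (hg : g.natDegree ≤ d) :
    ∃ N : ℕ, 0 < N ∧ ∃ c : ℕ, 0 < c ∧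
      IsHilbertPolynomial ((N • (c • X ^ d + g)).map (Int.castRingHom ℚ)) := by
  let S := monomialHilbertSemiring.comap (mapRingHom (Int.castRingHom ℚ))
  have hcubic : mapRingHom (Int.castRingHom ℚ) (3 • X) =
      ∑ c ∈ Finset.range 3, (X - (c : ℚ[X]) + 1) := by
    simp only [Finset.sum_range_succ, Finset.sum_range_zero, map_nsmul, coe_mapRingHom, map_X]
    push_cast
    ring
  have hquintic : mapRingHom (Int.castRingHom ℚ) (5 • (X - 1)) =
      ∑ c ∈ Finset.range 5, (X - (c : ℚ[X]) + 1) := by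
    simp only [Finset.sum_range_succ, Finset.sum_range_zero, map_nsmul, map_sub, map_one,
      coe_mapRingHom, map_X]
    push_cast
    ring
  have hX : X ∈ natSaturation S := ⟨3, three_pos, Subsemiring.mem_comap.2 <|
    hcubic ▸ planeCurve_mem_monomialHilbertSemiring three_pos⟩
  have hX1 : X - 1 ∈ natSaturation S := ⟨5, Nat.succ_pos 4, Subsemiring.mem_comap.2 <|
    hquintic ▸ planeCurve_mem_monomialHilbertSemiring (Nat.succ_pos 4)⟩
  obtain ⟨c, hc, N, hN, hmem⟩ := exists_pos_nsmul_X_pow_add_mem hX hX1 hg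
  exact ⟨N, hN, c, hc, isHilbertPolynomial_of_mem_monomialHilbertSemiring hmem⟩

theorem natDegree_nsmul_X_pow_add {N c d : ℕ} (hN : 0 < N) (hc : 0 < c) {g : ℤ[X]}
    (hg : g.degree < d) : (N • (c • X ^ d + g)).natDegree = d := by
  have hlead : (c • X ^ d : ℤ[X]).degree = d := by
    rw [nsmul_eq_mul, ← C_eq_natCast, degree_C_mul_X_pow d (Nat.cast_ne_zero.2 hc.ne')]
  rw [natDegree_smul _ hN.ne']
  exact natDegree_eq_of_degree_eq_some ((degree_add_eq_left_of_degree_lt (hlead ▸ hg)).trans hlead)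

end LowerOrderCoefficients

theorem sign_patterns_stmt2 (d : ℕ) (hd : 1 ≤ d) (s : Fin d → ℤ)
    (hs : ∀ i, s i = -1 ∨ s i = 0 ∨ s i = 1) :
    ∃ f : Polynomial ℤ, f.natDegree = d ∧
      IsHilbertPolynomial (f.map (Int.castRingHom ℚ)) ∧
      ∀ i : Fin d, Int.sign (f.coeff (i : ℕ)) = s i := by
  have hg : (ofFn d s).degree < d := ofFn_degree_lt s
  obtain ⟨N, hN, c, hc, hf⟩ :=
    exists_pos_nsmul_isHilbertPolynomial (natDegree_le_of_degree_le hg.le)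
  refine ⟨N • (c • X ^ d + ofFn d s), natDegree_nsmul_X_pow_add hN hc hg, hf, fun i ↦ ?_⟩
  have hcoeff : (N • (c • X ^ d + ofFn d s)).coeff i = N * s i := by
    simp [coeff_X_pow, i.2.ne]
  have hsign : Int.sign (s i) = s i := by
    rcases hs i with h | h | h <;> rw [h] <;> rfl
  rw [hcoeff, Int.sign_mul, Int.sign_natCast_of_ne_zero hN.ne', one_mul, hsign]
end

section
/- Let d be a non-negative integer and t a positive integer, and set f(x) = t·x^d. Then f(x) is a Hilbert polynomial if and only if one of the following holds: (i) d = 0; (ii) d = 1 and t ≥ 3; (iii) d = 2 and t ≥ 3; (iv) d ≥ 3. -/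
open Polynomial

/-!
If `t * x ^ d` satisfies the condition, it is realised by a monomial quotient, i.e. by counting the
elements of given degree in a lower set `S` of exponents. Gluing a hyperplane to a shifted copy of
`S` replaces the Hilbert polynomial `p(x)` by `(x + d).choose d + p(x - 1)`; iterating this gives
`t`, gives `t * x` and `t * x ^ 2` for `3 ≤ t`, and gives `x ^ 3`, `x ^ 4`, `x ^ 5`. Segre products
multiply Hilbert polynomials, which yields `t * x ^ d` for all `3 ≤ d`.

Conversely, passing to an initial ideal and compressing the standard monomials up to a large degree,
one may assume that the Hilbert polynomial counts a strongly stable set of monomials. For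
such a set, `c` monomials of large degree in the section by the first variable force at least
`∑ j ≤ n, min c (j + 1)` monomials of degree `n`, with a double sum for the double section. If the
count is `t * n`, the section has at least `t` monomials, so there are at least `n + 1` for `t = 1`
and `2 * n + 1` for `t = 2`. If it is `t * n ^ 2`, the double section has at least `2 * t`
monomials, so there are at least `(n + 1) ^ 2` for `t = 1` and `2 * n ^ 2 + 2` for `t = 2`.
-/

namespace HilbertPolynomials

section QuotientGrading

variable {R A : Type*} [CommRing R] [CommRing A] [Algebra R A]
  (𝒜 : ℕ → Submodule R A) (I : Ideal A)

/-- The images of the pieces of a grading `𝒜` of `A` in the quotient `A ⧸ I`; they grade the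
quotient when `I` is homogeneous. -/
def quotientGrading (n : ℕ) : Submodule R (A ⧸ I) :=
  (𝒜 n).map (Ideal.Quotient.mkₐ R I).toLinearMap

variable {𝒜 I}

lemma mk_mem_quotientGrading {n : ℕ} {a : A} (ha : a ∈ 𝒜 n) :
    Ideal.Quotient.mkₐ R I a ∈ quotientGrading 𝒜 I n :=
  Submodule.mem_map_of_mem ha

lemma adjoin_quotientGrading_one (h : Algebra.adjoin R (𝒜 1 : Set A) = ⊤) :
    Algebra.adjoin R (quotientGrading 𝒜 I 1 : Set (A ⧸ I)) = ⊤ := by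
  have himage : (quotientGrading 𝒜 I 1 : Set (A ⧸ I)) = Ideal.Quotient.mkₐ R I '' 𝒜 1 := rfl
  rw [himage, ← AlgHom.map_adjoin, h, Algebra.map_top, AlgHom.range_eq_top]
  exact Ideal.Quotient.mkₐ_surjective R I

variable [GradedAlgebra 𝒜]

instance : SetLike.GradedMonoid (quotientGrading 𝒜 I) where
  one_mem := by
    simpa only [map_one] using mk_mem_quotientGrading (I := I) (SetLike.GradedOne.one_mem (A := 𝒜))
  mul_mem := by
    rintro m n _ _ ⟨a, ha, rfl⟩ ⟨b, hb, rfl⟩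
    have := mk_mem_quotientGrading (I := I) (SetLike.mul_mem_graded ha hb)
    rwa [map_mul] at this

lemma isInternal_quotientGrading (hI : I.IsHomogeneous 𝒜) :
    DirectSum.IsInternal (quotientGrading 𝒜 I) := by
  let π : A →ₗ[R] A ⧸ I := (Ideal.Quotient.mkₐ R I).toLinearMap
  let q := DirectSum.lmap fun n => π.submoduleMap (𝒜 n)
  have q_surjective : Function.Surjective q :=
    (DirectSum.lmap_surjective _).mpr fun n => π.submoduleMap_surjective (𝒜 n)
  have coe_q : ∀ y, DirectSum.coeLinearMap (quotientGrading 𝒜 I) (q y)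
      = π (DirectSum.coeLinearMap 𝒜 y) := by
    refine fun y => LinearMap.congr_fun (f := DirectSum.coeLinearMap _ ∘ₗ q)
      (g := π ∘ₗ DirectSum.coeLinearMap 𝒜) (DirectSum.linearMap_ext _ fun n => ?_) y
    ext a
    simp only [q, LinearMap.comp_apply, DirectSum.lmap_lof, DirectSum.coeLinearMap_lof,
      LinearMap.submoduleMap_coe_apply]
  constructor
  · intro x x' hxx'
    obtain ⟨y, rfl⟩ := q_surjective x
    obtain ⟨y', rfl⟩ := q_surjective x'
    have hmem : DirectSum.coeLinearMap 𝒜 y - DirectSum.coeLinearMap 𝒜 y' ∈ I :=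
      Ideal.Quotient.eq.mp (((coe_q y).symm.trans hxx').trans (coe_q y'))
    refine DFinsupp.ext fun n => Subtype.ext (Ideal.Quotient.eq.mpr ?_)
    have hn := hI n hmem
    have decompose_coe (z) : DirectSum.decompose 𝒜 (DirectSum.coeLinearMap 𝒜 z) = z :=
      DirectSum.Decomposition.right_inv z
    rwa [DirectSum.decompose_sub, decompose_coe, decompose_coe] at hn
  · intro x
    obtain ⟨a, rfl⟩ := Ideal.Quotient.mkₐ_surjective R I x
    refine ⟨q (DirectSum.decompose 𝒜 a), (coe_q _).trans ?_⟩
    exact congrArg π ((DirectSum.decompose 𝒜).left_inv a)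

/-- The grading of `A ⧸ I` by the images of the pieces of `A`, for a homogeneous ideal `I`. -/
noncomputable abbrev quotientGradedAlgebra (hI : I.IsHomogeneous 𝒜) :
    GradedAlgebra (quotientGrading 𝒜 I) where
  __ := (isInternal_quotientGrading hI).chooseDecomposition

end QuotientGrading

section MonomialAlgebra

/-- The number of exponent vectors of total degree `n` in `S`. -/
noncomputable def levelCard {σ : Type*} (S : Set (σ →₀ ℕ)) (n : ℕ) : ℕ :=
  {a ∈ S | a.degree = n}.ncard

open MvPolynomial

attribute [local instance] MvPolynomial.gradedAlgebra

variable {σ : Type*} {k : Type*} [Field k]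

lemma isHomogeneous_restrictSupportIdeal {S : Set (σ →₀ ℕ)} (hS : IsUpperSet S) :
    (restrictSupportIdeal k S hS).IsHomogeneous (homogeneousSubmodule σ k) := by
  intro n p hp a ha
  have hcoeff :
      coeff a (DirectSum.decompose (homogeneousSubmodule σ k) p n : MvPolynomial σ k) ≠ 0 :=
    mem_support_iff.mp ha
  rw [show (DirectSum.decompose (homogeneousSubmodule σ k) p n : MvPolynomial σ k)
    = homogeneousComponent n p from decomposition.decompose'_apply p n,
    coeff_homogeneousComponent] at hcoeff
  exact hp (mem_support_iff.mpr (ite_ne_right_iff.mp hcoeff).2)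

variable (k) in
/-- The monomial ideal whose standard monomials are the elements of the lower set `S`. -/
noncomputable abbrev monomialIdeal (S : Set (σ →₀ ℕ)) (hS : IsLowerSet S) :
    Ideal (MvPolynomial σ k) :=
  restrictSupportIdeal k Sᶜ hS.compl

lemma quotientGrading_monomialIdeal {S : Set (σ →₀ ℕ)} (hS : IsLowerSet S) (n : ℕ) :
    quotientGrading (homogeneousSubmodule σ k) (monomialIdeal k S hS) n =
      (restrictSupport k {a ∈ S | a.degree = n}).map
        (Ideal.Quotient.mkₐ k (monomialIdeal k S hS)).toLinearMap := by
  have hle : restrictSupport k {a ∈ S | a.degree = n} ≤ homogeneousSubmodule σ k n := by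
    rw [homogeneousSubmodule_eq_finsupp_supported]
    exact restrictSupport_mono k fun a ha => ha.2
  refine le_antisymm ?_ (Submodule.map_mono hle)
  rw [quotientGrading, homogeneousSubmodule_eq_finsupp_supported]
  change Submodule.map _ (restrictSupport k _) ≤ _
  rw [restrictSupport_eq_span, Submodule.map_span_le]
  rintro _ ⟨a, ha, rfl⟩
  by_cases haS : a ∈ S
  · exact Submodule.mem_map_of_mem ((monomial_mem_restrictSupport k).mpr (.inl ⟨haS, ha⟩))
  · have : monomial a (1 : k) ∈ monomialIdeal k S hS :=
      (monomial_mem_restrictSupport k).mpr (.inl haS)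
    have hzero : (Ideal.Quotient.mkₐ k (monomialIdeal k S hS)).toLinearMap (monomial a 1) = 0 :=
      Ideal.Quotient.eq_zero_iff_mem.mpr this
    rw [hzero]
    exact Submodule.zero_mem _

lemma disjoint_restrictSupport {S T : Set (σ →₀ ℕ)} (h : Disjoint S T) :
    Disjoint (restrictSupport k S) (restrictSupport k T) := by
  rw [Submodule.disjoint_def]
  intro p hS hT
  rw [← MvPolynomial.support_eq_empty, ← Finset.coe_eq_empty]
  exact Set.subset_eq_empty (Set.subset_inter hS hT) h.inter_eq

lemma finrank_quotientGrading_monomialIdeal {S : Set (σ →₀ ℕ)} (hS : IsLowerSet S) (n : ℕ) :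
    Module.finrank k (quotientGrading (homogeneousSubmodule σ k) (monomialIdeal k S hS) n)
      = levelCard S n := by
  have hdisjoint : Disjoint (restrictSupport k {a ∈ S | a.degree = n})
      (LinearMap.ker (Ideal.Quotient.mkₐ k (monomialIdeal k S hS)).toLinearMap) := by
    refine (disjoint_restrictSupport (k := k) (disjoint_compl_right (a := S))).mono
      (restrictSupport_mono k fun a ha => ha.1) fun p hp => ?_
    exact Ideal.Quotient.eq_zero_iff_mem.mp hp
  rw [quotientGrading_monomialIdeal hS, ← LinearMap.range_domRestrict,
    LinearMap.finrank_range_of_inj (LinearMap.injective_domRestrict_iff.mpr hdisjoint),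
    Module.finrank_eq_nat_card_basis (basisRestrictSupport k _)]
  rfl

lemma isHilbertPolynomial_of_eventually_levelCard {σ : Type} [Finite σ] {S : Set (σ →₀ ℕ)}
    (hS : IsLowerSet S) {f : ℚ[X]}
    (hf : ∀ᶠ n : ℕ in Filter.atTop, (levelCard S n : ℚ) = f.eval (n : ℚ)) :
    IsHilbertPolynomial f := by
  obtain ⟨N, hN⟩ := Filter.eventually_atTop.mp hf
  have hadjoin : Algebra.adjoin ℚ (homogeneousSubmodule σ ℚ 1 : Set (MvPolynomial σ ℚ)) = ⊤ := by
    rw [homogeneousSubmodule_one_eq_span_X, Algebra.adjoin_span, adjoin_range_X]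
  refine ⟨ℚ, MvPolynomial σ ℚ ⧸ monomialIdeal ℚ S hS, inferInstance, inferInstance, inferInstance,
    quotientGrading (homogeneousSubmodule σ ℚ) (monomialIdeal ℚ S hS),
    quotientGradedAlgebra (isHomogeneous_restrictSupportIdeal hS.compl),
    fun n => ?_, adjoin_quotientGrading_one hadjoin, N, fun n hn => ?_⟩
  · exact .of_fg ((homogeneousSubmodule_fg σ ℚ n).map _)
  · rw [finrank_quotientGrading_monomialIdeal, hN n hn]

end MonomialAlgebra

universe u

section LevelCard

variable {σ τ : Type*}

lemma finite_level [Finite σ] (S : Set (σ →₀ ℕ)) (n : ℕ) : {a ∈ S | a.degree = n}.Finite :=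
  (Finsupp.finite_of_degree_eq n).subset fun _ ha => ha.2

lemma levelCard_image {S : Set (σ →₀ ℕ)} {f : (σ →₀ ℕ) → τ →₀ ℕ} (hf : Function.Injective f)
    {m n : ℕ} (hdegree : ∀ a ∈ S, (f a).degree = n ↔ a.degree = m) :
    levelCard (f '' S) n = levelCard S m := by
  rw [levelCard, levelCard, ← Set.ncard_image_of_injective _ hf]
  congr 1
  ext b
  constructor
  · rintro ⟨⟨a, ha, rfl⟩, hb⟩
    exact ⟨a, ⟨ha, (hdegree a ha).mp hb⟩, rfl⟩
  · rintro ⟨a, ⟨ha, hdeg⟩, rfl⟩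
    exact ⟨⟨a, ha, rfl⟩, (hdegree a ha).mpr hdeg⟩

lemma levelCard_union [Finite σ] {S T : Set (σ →₀ ℕ)} {n : ℕ}
    (h : ∀ a ∈ S, a ∈ T → a.degree ≠ n) :
    levelCard (S ∪ T) n = levelCard S n + levelCard T n := by
  rw [levelCard, levelCard, levelCard, ← Set.ncard_union_eq _ (finite_level S n) (finite_level T n)]
  · congr 1
    ext a
    simp only [Set.mem_union, Set.mem_ofPred_eq, or_and_right]
  · exact Set.disjoint_left.mpr fun a haS haT => h a haS.1 haT.1 haS.2

lemma levelCard_univ (d n : ℕ) :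
    levelCard (Set.univ : Set (Fin (d + 1) →₀ ℕ)) n = (n + d).choose d := by
  have hlevel : {a ∈ (Set.univ : Set (Fin (d + 1) →₀ ℕ)) | a.degree = n}
      = (Finset.univ : Finset (Fin (d + 1))).finsuppAntidiag n := by
    ext a
    simp [Finsupp.degree_eq_sum]
  rw [levelCard, hlevel, Set.ncard_coe_finset, Finset.card_finsuppAntidiag_nat_eq_choose,
    Finset.card_univ, Fintype.card_fin, show d + 1 + n - 1 = n + d by lia, Nat.choose_symm_add]

lemma isLowerSet_image_mapDomain {S : Set (σ →₀ ℕ)} (hS : IsLowerSet S) {f : σ → τ}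
    (hf : Function.Injective f) : IsLowerSet (Finsupp.mapDomain f '' S) := by
  rintro _ b hba ⟨a, ha, rfl⟩
  classical
  have hsupport : (b.support : Set τ) ⊆ Set.range f :=
    (Finset.coe_subset.mpr ((Finsupp.support_mono hba).trans Finsupp.mapDomain_support)).trans
      (by rw [Finset.coe_image]; exact Set.image_subset_range _ _)
  rw [← Finsupp.mapDomain_comapDomain f hf b hsupport] at hba ⊢
  refine ⟨_, hS (fun i => ?_) ha, rfl⟩
  simpa only [Finsupp.mapDomain_apply hf] using hba (f i)

lemma levelCard_image_mapDomain (S : Set (σ →₀ ℕ)) {f : σ → τ} (hf : Function.Injective f) (n : ℕ) :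
    levelCard (Finsupp.mapDomain f '' S) n = levelCard S n :=
  levelCard_image (Finsupp.mapDomain_injective hf) fun a _ => by rw [Finsupp.degree_mapDomain]

end LevelCard

section MinimalRepresentatives

variable {σ M : Type*} [AddMonoid M]

/-- The exponent vectors that are minimal, for the monomial order `m`, in their fibre of `φ`. -/
def minimalRepresentatives (m : MonomialOrder σ) (φ : (σ →₀ ℕ) →+ M) : Set (σ →₀ ℕ) :=
  {a | ∀ b, φ b = φ a → m.toSyn a ≤ m.toSyn b}

variable (m : MonomialOrder σ) (φ : (σ →₀ ℕ) →+ M)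

lemma isLowerSet_minimalRepresentatives : IsLowerSet (minimalRepresentatives m φ) := by
  rintro _ a' haa' ha b hb
  obtain ⟨c, rfl⟩ := exists_add_of_le haa'
  have hle := ha (b + c) (by rw [map_add, map_add, hb])
  rw [map_add, map_add] at hle
  exact le_of_add_le_add_right hle

lemma injOn_minimalRepresentatives : Set.InjOn φ (minimalRepresentatives m φ) :=
  fun a ha b hb hab => m.toSyn.injective ((ha b hab.symm).antisymm (hb a hab))

lemma exists_mem_minimalRepresentatives (a : σ →₀ ℕ) :
    ∃ b ∈ minimalRepresentatives m φ, φ b = φ a := by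
  obtain ⟨b, hb, hmin⟩ := (InvImage.wf m.toSyn wellFounded_lt).has_min {b | φ b = φ a} ⟨a, rfl⟩
  exact ⟨b, fun c hc => not_lt.mp (hmin c (hc.trans hb)), hb⟩

end MinimalRepresentatives

lemma nonempty_monomialOrder (σ : Type u) [Finite σ] : Nonempty (MonomialOrder.{_, u} σ) := by
  let := IsWellOrder.linearOrder (WellOrderingRel (α := σ))
  exact ⟨MonomialOrder.lex⟩

section SegreProduct

variable {σ τ : Type*}

/-- The row and column sums of a matrix of exponents indexed by `σ × τ`. -/
noncomputable def marginals (σ τ : Type*) : (σ × τ →₀ ℕ) →+ (σ →₀ ℕ) × (τ →₀ ℕ) :=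
  (Finsupp.mapDomain.addMonoidHom Prod.fst).prod (Finsupp.mapDomain.addMonoidHom Prod.snd)

lemma marginals_mono : Monotone (marginals σ τ) := by
  intro a b hab
  obtain ⟨c, rfl⟩ := exists_add_of_le hab
  rw [map_add]
  exact le_self_add

lemma exists_marginals_eq {r : σ →₀ ℕ} {c : τ →₀ ℕ} (h : r.degree = c.degree) :
    ∃ a, marginals σ τ a = (r, c) := by
  classical
  obtain ⟨xs, hxs⟩ := Quot.exists_rep (Finsupp.toMultiset r)
  obtain ⟨ys, hys⟩ := Quot.exists_rep (Finsupp.toMultiset c)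
  have hlength : xs.length = ys.length :=
    calc xs.length = (Finsupp.toMultiset r).card := congrArg Multiset.card hxs
      _ = (Finsupp.toMultiset c).card := by
        rw [Finsupp.card_toMultiset, Finsupp.card_toMultiset]; exact h
      _ = ys.length := congrArg Multiset.card hys.symm
  refine ⟨Multiset.toFinsupp (xs.zip ys : Multiset (σ × τ)), Prod.ext ?_ ?_⟩ <;>
    refine Finsupp.orderIsoMultiset.injective ((Finsupp.toMultiset_map _ _).symm.trans ?_) <;>
    rw [Multiset.toFinsupp_toMultiset, Multiset.map_coe]
  · rw [List.map_fst_zip hlength.le]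
    exact hxs
  · rw [List.map_snd_zip hlength.ge]
    exact hys

/-- The exponent sets of the Segre product: the monomials in the variables `x i * y j` are
matrices of exponents, identified when they have the same marginals, and each class is
represented by its minimal element. -/
def segreProduct (m : MonomialOrder (σ × τ)) (S : Set (σ →₀ ℕ)) (T : Set (τ →₀ ℕ)) :
    Set (σ × τ →₀ ℕ) :=
  minimalRepresentatives m (marginals σ τ) ∩ marginals σ τ ⁻¹' S ×ˢ T

variable {S : Set (σ →₀ ℕ)} {T : Set (τ →₀ ℕ)} (m : MonomialOrder (σ × τ))

lemma isLowerSet_segreProduct (hS : IsLowerSet S) (hT : IsLowerSet T) :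
    IsLowerSet (segreProduct m S T) :=
  (isLowerSet_minimalRepresentatives m _).inter ((hS.prod hT).preimage marginals_mono)

lemma levelCard_segreProduct (n : ℕ) :
    levelCard (segreProduct m S T) n = levelCard S n * levelCard T n := by
  rw [levelCard, levelCard, levelCard, ← Set.ncard_prod]
  refine Set.BijOn.ncard_eq (f := marginals σ τ) ⟨?_, ?_, ?_⟩
  · rintro a ⟨⟨_, haS, haT⟩, rfl⟩
    exact ⟨⟨haS, Finsupp.degree_mapDomain _ a⟩, ⟨haT, Finsupp.degree_mapDomain _ a⟩⟩
  · exact (injOn_minimalRepresentatives m _).mono fun a ha => ha.1.1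
  · rintro ⟨r, c⟩ ⟨⟨hr, rfl⟩, ⟨hc, hdegree⟩⟩
    obtain ⟨a, ha⟩ := exists_marginals_eq hdegree.symm
    obtain ⟨b, hb, hba⟩ := exists_mem_minimalRepresentatives m (marginals σ τ) a
    rw [ha] at hba
    refine ⟨b, ⟨⟨hb, by rw [Set.mem_preimage, hba]; exact ⟨hr, hc⟩⟩, ?_⟩, hba⟩
    rw [← congrArg Prod.fst hba]
    exact (Finsupp.degree_mapDomain _ b).symm

end SegreProduct

section LexSegments

/-- The exponent vectors not divisible by `x₀`, together with `S` shifted by `x₀`: its quotient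
algebra is glued from a polynomial ring in one variable fewer and a shifted copy of that of `S`. -/
def addHyperplane {d : ℕ} (S : Set (Fin (d + 1) →₀ ℕ)) : Set (Fin (d + 1) →₀ ℕ) :=
  {a | a 0 = 0} ∪ (· + Finsupp.single 0 1) '' S

variable {d : ℕ} {S : Set (Fin (d + 1) →₀ ℕ)}

lemma isLowerSet_addHyperplane (hS : IsLowerSet S) : IsLowerSet (addHyperplane S) := by
  rintro _ b hba (ha | ⟨a, ha, rfl⟩)
  · exact .inl (Nat.le_zero.mp ((hba 0).trans ha.le))
  · rcases Nat.eq_zero_or_pos (b 0) with hb | hb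
    · exact .inl hb
    · have hle : Finsupp.single 0 1 ≤ b := Finsupp.single_le_iff.mpr hb
      exact .inr ⟨b - Finsupp.single 0 1, hS (tsub_le_iff_right.mpr hba) ha,
        tsub_add_cancel_of_le hle⟩

lemma setOf_apply_zero_eq_zero (d : ℕ) :
    {a : Fin (d + 1) →₀ ℕ | a 0 = 0} = Finsupp.mapDomain Fin.succ '' Set.univ := by
  rw [Set.image_univ]
  ext a
  rw [Finsupp.mem_range_mapDomain_iff _ (Fin.succ_injective d)]
  simp [Fin.range_succ]

lemma levelCard_addHyperplane (n : ℕ) :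
    levelCard (addHyperplane S) (n + 1)
      = levelCard (Set.univ : Set (Fin d →₀ ℕ)) (n + 1) + levelCard S n := by
  rw [addHyperplane, levelCard_union, setOf_apply_zero_eq_zero,
    levelCard_image_mapDomain _ (Fin.succ_injective d),
    levelCard_image (add_left_injective (Finsupp.single 0 1)) (m := n)]
  · intro a _
    rw [map_add, Finsupp.degree_single, Nat.add_right_cancel_iff]
  · rintro _ ha ⟨b, _, rfl⟩
    simp at ha

end LexSegments

section MonomialHilbertPolynomials

/-- `p` is eventually the level-counting function of a lower set of exponent vectors in the
variables `σ`, i.e. the Hilbert polynomial of a quotient of the polynomial ring in the variables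
`σ` by a monomial ideal. -/
def IsMonomialHilbertPolynomial (σ : Type) (p : ℚ[X]) : Prop :=
  ∃ S : Set (σ →₀ ℕ), IsLowerSet S ∧
    ∀ᶠ n : ℕ in Filter.atTop, (levelCard S n : ℚ) = p.eval (n : ℚ)

variable {σ τ : Type} {p q : ℚ[X]}

lemma IsMonomialHilbertPolynomial.isHilbertPolynomial [Finite σ]
    (hp : IsMonomialHilbertPolynomial σ p) : IsHilbertPolynomial p :=
  let ⟨_, hS, h⟩ := hp
  isHilbertPolynomial_of_eventually_levelCard hS h

lemma IsMonomialHilbertPolynomial.mapDomain (hp : IsMonomialHilbertPolynomial σ p) {f : σ → τ}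
    (hf : Function.Injective f) : IsMonomialHilbertPolynomial τ p := by
  obtain ⟨S, hS, h⟩ := hp
  refine ⟨_, isLowerSet_image_mapDomain hS hf, h.mono fun n hn => ?_⟩
  rw [levelCard_image_mapDomain S hf, hn]

lemma IsMonomialHilbertPolynomial.mul [Finite σ] [Finite τ]
    (hp : IsMonomialHilbertPolynomial σ p) (hq : IsMonomialHilbertPolynomial τ q) :
    IsMonomialHilbertPolynomial (σ × τ) (p * q) := by
  obtain ⟨S, hS, hSp⟩ := hp
  obtain ⟨T, hT, hTq⟩ := hq
  obtain ⟨m⟩ := nonempty_monomialOrder (σ × τ)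
  refine ⟨_, isLowerSet_segreProduct m hS hT, ?_⟩
  filter_upwards [hSp, hTq] with n hSn hTn
  rw [levelCard_segreProduct, Nat.cast_mul, hSn, hTn, eval_mul]

lemma isMonomialHilbertPolynomial_zero (σ : Type) : IsMonomialHilbertPolynomial σ 0 :=
  ⟨∅, isLowerSet_empty, by simp [levelCard]⟩

lemma IsMonomialHilbertPolynomial.addHyperplane {d : ℕ}
    (hp : IsMonomialHilbertPolynomial (Fin (d + 2)) p) :
    IsMonomialHilbertPolynomial (Fin (d + 2)) (preHilbertPoly ℚ d 0 + p.comp (X - 1)) := by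
  obtain ⟨S, hS, h⟩ := hp
  refine ⟨_, isLowerSet_addHyperplane hS, Filter.eventually_atTop.mpr ?_⟩
  obtain ⟨N, hN⟩ := Filter.eventually_atTop.mp h
  refine ⟨N + 1, fun n hn => ?_⟩
  obtain ⟨n, rfl⟩ := Nat.exists_eq_succ_of_ne_zero (by lia : n ≠ 0)
  rw [levelCard_addHyperplane, levelCard_univ, Nat.cast_add, hN n (by lia), eval_add,
    preHilbertPoly_eq_choose_sub_add ℚ d (Nat.zero_le _), Nat.sub_zero, eval_comp, eval_sub, eval_X,
    eval_one, Nat.cast_succ, add_sub_cancel_right]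

lemma preHilbertPoly_succ_zero (d : ℕ) :
    preHilbertPoly ℚ (d + 1) 0 = preHilbertPoly ℚ d 0 + preHilbertPoly ℚ (d + 1) 1 := by
  refine eq_of_infinite_eval_eq _ _ (Set.infinite_of_injective_forall_mem
    (f := fun n : ℕ => ((n + 1 : ℕ) : ℚ)) (fun m n h => by simpa using h) fun n => ?_)
  rw [Set.mem_ofPred_eq, eval_add, preHilbertPoly_eq_choose_sub_add ℚ _ (Nat.zero_le _),
    preHilbertPoly_eq_choose_sub_add ℚ _ (Nat.zero_le _),
    preHilbertPoly_eq_choose_sub_add ℚ _ (Nat.le_add_left _ _)]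
  norm_cast
  rw [Nat.sub_zero, Nat.add_sub_cancel, show n + (d + 1) = n + 1 + d by lia]
  exact Nat.choose_succ_succ' (n + 1 + d) d

lemma preHilbertPoly_comp_X_sub_one (d m : ℕ) :
    (preHilbertPoly ℚ d m).comp (X - 1) = preHilbertPoly ℚ d (m + 1) := by
  simp only [preHilbertPoly, smul_comp, comp_assoc, add_comp, sub_comp, X_comp, C_comp, one_comp,
    Nat.cast_add, Nat.cast_one, C_add, C_1]
  ring_nf

lemma IsMonomialHilbertPolynomial.addHyperplanes {d : ℕ}
    (hp : IsMonomialHilbertPolynomial (Fin (d + 1)) p) (m : ℕ) :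
    IsMonomialHilbertPolynomial (Fin (d + 2))
      (preHilbertPoly ℚ (d + 1) 0 - preHilbertPoly ℚ (d + 1) m + p.comp (X - C (m : ℚ))) := by
  induction m with
  | zero => simpa using hp.mapDomain (Fin.succ_injective _)
  | succ m ih =>
    convert ih.addHyperplane using 1
    rw [add_comp, sub_comp, preHilbertPoly_comp_X_sub_one, preHilbertPoly_comp_X_sub_one,
      comp_assoc, preHilbertPoly_succ_zero, sub_comp, X_comp, C_comp, Nat.cast_add, Nat.cast_one,
      C_add, C_1]
    ring_nf

end MonomialHilbertPolynomials

section Monomials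

/-- The Hilbert polynomial obtained by successive uses of `addHyperplane`, each after the first in
one more variable: an entry `m` followed by `n` others stands for `m` hyperplanes in `n + 2`
variables. The entries expressing a given polynomial are found from the head on, each being
determined by the leading coefficient of what is left. -/
noncomputable def lexPoly : List ℕ → ℚ[X]
  | [] => 0
  | m :: ms => preHilbertPoly ℚ (ms.length + 1) 0 - preHilbertPoly ℚ (ms.length + 1) m
      + (lexPoly ms).comp (X - C (m : ℚ))

lemma isMonomialHilbertPolynomial_lexPoly :
    ∀ ms : List ℕ, IsMonomialHilbertPolynomial (Fin (ms.length + 1)) (lexPoly ms)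
  | [] => isMonomialHilbertPolynomial_zero _
  | m :: ms => (isMonomialHilbertPolynomial_lexPoly ms).addHyperplanes m

lemma eval_preHilbertPoly (d m : ℕ) (x : ℚ) :
    (preHilbertPoly ℚ d m).eval x = (ascPochhammer ℚ d).eval (x - m + 1) / d.factorial := by
  rw [preHilbertPoly, eval_smul, eval_comp, eval_add, eval_sub, eval_X, eval_C, eval_one,
    smul_eq_mul, inv_mul_eq_div]

lemma eval_lexPoly_nil (x : ℚ) : (lexPoly []).eval x = 0 :=
  eval_zero

lemma eval_lexPoly_cons (m : ℕ) (ms : List ℕ) (x : ℚ) :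
    (lexPoly (m :: ms)).eval x =
      ((ascPochhammer ℚ (ms.length + 1)).eval (x + 1)
        - (ascPochhammer ℚ (ms.length + 1)).eval (x - m + 1)) / (ms.length + 1).factorial
        + (lexPoly ms).eval (x - m) := by
  rw [lexPoly, eval_add, eval_sub, eval_preHilbertPoly, eval_preHilbertPoly, eval_comp, eval_sub,
    eval_X, eval_C, Nat.cast_zero, sub_zero, sub_div]

lemma lexPoly_singleton (t : ℕ) : lexPoly [t] = C (t : ℚ) := by
  refine Polynomial.funext fun x => ?_
  simp [eval_lexPoly_cons, eval_lexPoly_nil]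

lemma lexPoly_eq_C_mul_X {s b : ℕ} (hb : 2 * b = s * (s + 3)) :
    lexPoly [s + 3, b] = C ((s + 3 : ℕ) : ℚ) * X := by
  have hb' : (2 : ℚ) * b = s * (s + 3) := mod_cast hb
  refine Polynomial.funext fun x => ?_
  simp only [eval_lexPoly_cons, eval_lexPoly_nil, List.length_cons, List.length_nil,
    ascPochhammer_succ_eval, ascPochhammer_zero, eval_one, Nat.factorial, eval_mul, eval_C,
    eval_X]
  push_cast
  linear_combination hb' / 2

lemma lexPoly_eq_C_mul_X_sq {s c : ℕ}
    (hc : 3 * c = 6 * s ^ 4 + 56 * s ^ 3 + 183 * s ^ 2 + 241 * s + 102) :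
    lexPoly [2 * (s + 3), 2 * (s + 1) * (s + 3), c] = C ((s + 3 : ℕ) : ℚ) * X ^ 2 := by
  have hc' : (3 : ℚ) * c = 6 * s ^ 4 + 56 * s ^ 3 + 183 * s ^ 2 + 241 * s + 102 := mod_cast hc
  refine Polynomial.funext fun x => ?_
  simp only [eval_lexPoly_cons, eval_lexPoly_nil, List.length_cons, List.length_nil,
    ascPochhammer_succ_eval, ascPochhammer_zero, eval_one, Nat.factorial, eval_mul, eval_C,
    eval_pow, eval_X]
  push_cast
  linear_combination hc' / 3

lemma lexPoly_eq_X_pow_three : lexPoly [6, 3, 8, 50] = X ^ 3 := by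
  refine Polynomial.funext fun x => ?_
  simp only [eval_lexPoly_cons, eval_lexPoly_nil, List.length_cons, List.length_nil,
    ascPochhammer_succ_eval, ascPochhammer_zero, eval_one, Nat.factorial, eval_pow, eval_X]
  push_cast
  ring

lemma lexPoly_eq_X_pow_four :
    lexPoly [24, 216, 26430, 353339790, 62430765807659006] = X ^ 4 := by
  refine Polynomial.funext fun x => ?_
  simp only [eval_lexPoly_cons, eval_lexPoly_nil, List.length_cons, List.length_nil,
    ascPochhammer_succ_eval, ascPochhammer_zero, eval_one, Nat.factorial, eval_pow, eval_X]
  push_cast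
  ring

lemma lexPoly_eq_X_pow_five :
    lexPoly [120, 6780, 23513960, 276560672805750, 38242907207585404542511767817,
      731259975844000893012336498626162930739291667456651069219] = X ^ 5 := by
  refine Polynomial.funext fun x => ?_
  simp only [eval_lexPoly_cons, eval_lexPoly_nil, List.length_cons, List.length_nil,
    ascPochhammer_succ_eval, ascPochhammer_zero, eval_one, Nat.factorial, eval_pow, eval_X]
  push_cast
  ring

lemma exists_isMonomialHilbertPolynomial_X_pow :
    ∀ d : ℕ, 3 ≤ d → ∃ σ : Type, Finite σ ∧ IsMonomialHilbertPolynomial σ (X ^ d)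
  | 3, _ => ⟨_, inferInstance, lexPoly_eq_X_pow_three ▸ isMonomialHilbertPolynomial_lexPoly _⟩
  | 4, _ => ⟨_, inferInstance, lexPoly_eq_X_pow_four ▸ isMonomialHilbertPolynomial_lexPoly _⟩
  | 5, _ => ⟨_, inferInstance, lexPoly_eq_X_pow_five ▸ isMonomialHilbertPolynomial_lexPoly _⟩
  | d + 6, _ => by
    obtain ⟨σ, _, hσ⟩ := exists_isMonomialHilbertPolynomial_X_pow (d + 3) (by lia)
    obtain ⟨τ, _, hτ⟩ := exists_isMonomialHilbertPolynomial_X_pow 3 le_rfl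
    exact ⟨σ × τ, inferInstance, pow_add (X : ℚ[X]) (d + 3) 3 ▸ hσ.mul hτ⟩

theorem isHilbertPolynomial_C (t : ℕ) : IsHilbertPolynomial (C (t : ℚ)) :=
  lexPoly_singleton t ▸ (isMonomialHilbertPolynomial_lexPoly _).isHilbertPolynomial

theorem isHilbertPolynomial_C_mul_X {t : ℕ} (ht : 3 ≤ t) :
    IsHilbertPolynomial (C (t : ℚ) * X) := by
  obtain ⟨s, rfl⟩ := Nat.exists_eq_add_of_le' ht
  obtain ⟨b, hb⟩ : 2 ∣ s * (s + 3) := by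
    rw [Nat.dvd_iff_mod_eq_zero]
    rcases Nat.mod_two_eq_zero_or_one s with h | h <;> simp [Nat.mul_mod, Nat.add_mod, h]
  exact lexPoly_eq_C_mul_X hb.symm ▸ (isMonomialHilbertPolynomial_lexPoly _).isHilbertPolynomial

theorem isHilbertPolynomial_C_mul_X_sq {t : ℕ} (ht : 3 ≤ t) :
    IsHilbertPolynomial (C (t : ℚ) * X ^ 2) := by
  obtain ⟨s, rfl⟩ := Nat.exists_eq_add_of_le' ht
  obtain ⟨c, hc⟩ : 3 ∣ 6 * s ^ 4 + 56 * s ^ 3 + 183 * s ^ 2 + 241 * s + 102 := by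
    have h : s % 3 = 0 ∨ s % 3 = 1 ∨ s % 3 = 2 := by lia
    rw [Nat.dvd_iff_mod_eq_zero]
    rcases h with h | h | h <;> simp [Nat.mul_mod, Nat.add_mod, Nat.pow_mod, h]
  exact lexPoly_eq_C_mul_X_sq hc.symm ▸ (isMonomialHilbertPolynomial_lexPoly _).isHilbertPolynomial

theorem isHilbertPolynomial_C_mul_X_pow (t : ℕ) {d : ℕ} (hd : 3 ≤ d) :
    IsHilbertPolynomial (C (t : ℚ) * X ^ d) := by
  obtain ⟨σ, _, hσ⟩ := exists_isMonomialHilbertPolynomial_X_pow d hd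
  exact lexPoly_singleton t ▸ ((isMonomialHilbertPolynomial_lexPoly [t]).mul hσ).isHilbertPolynomial

end Monomials

section GreedyBasis

variable {K V ι : Type*} [DivisionRing K] [AddCommGroup V] [Module K V] [LinearOrder ι]

variable (K) in
/-- The indices at which the vector `v i` is linearly independent of the preceding ones. -/
def greedyBasis (v : ι → V) : Set ι :=
  {i | v i ∉ Submodule.span K (v '' Set.Iio i)}

lemma linearIndepOn_greedyBasis (v : ι → V) : LinearIndepOn K v (greedyBasis K v) := by
  refine linearIndepOn_of_finite _ fun s hs hsfin => ?_
  lift s to Finset ι using hsfin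
  induction s using Finset.induction_on_max with
  | empty => simp
  | insert i s hmax ih =>
    rw [Finset.coe_insert, Set.insert_subset_iff] at hs
    rw [Finset.coe_insert, linearIndepOn_insert fun hi => (hmax i hi).false]
    exact ⟨ih hs.2, fun hi => hs.1 (Submodule.span_mono (Set.image_mono hmax) hi)⟩

lemma span_image_greedyBasis [WellFoundedLT ι] (v : ι → V) :
    Submodule.span K (v '' greedyBasis K v) = Submodule.span K (Set.range v) := by
  refine (Submodule.span_mono (Set.image_subset_range _ _)).antisymm (Submodule.span_le.mpr ?_)
  rintro _ ⟨i, rfl⟩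
  induction i using WellFoundedLT.induction with
  | ind i ih =>
    by_cases hi : i ∈ greedyBasis K v
    · exact Submodule.subset_span ⟨i, hi, rfl⟩
    · refine Submodule.span_le.mpr ?_ (not_not.mp hi)
      rintro _ ⟨j, hj, rfl⟩
      exact ih j hj

end GreedyBasis

lemma span_setOf_degree_eq {ι γ R M : Type*} [DecidableEq γ] [Semiring R] [AddCommMonoid M]
    [Module R M] (ℳ : γ → Submodule R M) [DirectSum.Decomposition ℳ] {w : ι → M} {degree : ι → γ}
    (hw : ∀ i, w i ∈ ℳ (degree i)) {s : Set ι} (hs : Submodule.span R (w '' s) = ⊤) (n : γ) :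
    Submodule.span R (w '' {i ∈ s | degree i = n}) = ℳ n := by
  refine (Submodule.span_le.mpr ?_).antisymm fun x hx => ?_
  · rintro _ ⟨i, ⟨-, rfl⟩, rfl⟩
    exact hw i
  · suffices hcomponent : (DirectSum.decompose ℳ x n : M) ∈ _ by
      rwa [DirectSum.decompose_of_mem_same ℳ hx] at hcomponent
    clear hx
    have hx : x ∈ Submodule.span R (w '' s) := hs ▸ Submodule.mem_top
    induction hx using Submodule.span_induction with
    | zero => simp
    | add x y _ _ hx hy =>
      rw [DirectSum.decompose_add]
      exact add_mem hx hy
    | smul c x _ hx =>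
      rw [DirectSum.decompose_smul]
      exact Submodule.smul_mem _ c hx
    | mem x hx =>
      obtain ⟨i, hi, rfl⟩ := hx
      by_cases hin : degree i = n
      · rw [DirectSum.decompose_of_mem_same ℳ (hin ▸ hw i)]
        exact Submodule.subset_span ⟨i, ⟨hi, hin⟩, rfl⟩
      · rw [DirectSum.decompose_of_mem_ne ℳ (hw i) hin]
        exact zero_mem _

section StandardMonomials

open MvPolynomial

variable {σ k A : Type*} [Field k] [CommRing A] [Algebra k A]

/-- The monomials whose images under `φ` are linearly independent of the images of the smaller
ones, i.e. those outside the initial ideal of the kernel of `φ`. -/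
def standardMonomials (m : MonomialOrder σ) (φ : MvPolynomial σ k →ₐ[k] A) : Set (σ →₀ ℕ) :=
  m.toSyn ⁻¹' greedyBasis k fun c => φ (monomial (m.toSyn.symm c) 1)

lemma isLowerSet_standardMonomials (m : MonomialOrder σ) (φ : MvPolynomial σ k →ₐ[k] A) :
    IsLowerSet (standardMonomials m φ) := by
  intro a b hba ha hb
  obtain ⟨c, rfl⟩ := exists_add_of_le hba
  have hmul := Submodule.mem_map_of_mem (f := LinearMap.mulRight k (φ (monomial c 1))) hb
  simp only [Submodule.map_span, LinearMap.mulRight_apply, AddEquiv.symm_apply_apply, ← map_mul,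
    monomial_mul, one_mul] at hmul
  refine ha ?_
  simp only [AddEquiv.symm_apply_apply]
  refine Submodule.span_mono ?_ hmul
  rintro _ ⟨_, ⟨d, hd, rfl⟩, rfl⟩
  refine ⟨d + m.toSyn c, ?_, ?_⟩
  · rw [Set.mem_Iio, map_add]
    exact add_lt_add_left hd _
  · simp only [map_add, AddEquiv.symm_apply_apply, LinearMap.mulRight_apply, ← map_mul,
      monomial_mul, one_mul]

lemma standardMonomials_eq_image (m : MonomialOrder σ) (φ : MvPolynomial σ k →ₐ[k] A) :
    standardMonomials m φ
      = m.toSyn.symm '' greedyBasis k fun c => φ (monomial (m.toSyn.symm c) 1) :=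
  (m.toSyn.toEquiv.image_symm_eq_preimage _).symm

lemma linearIndepOn_standardMonomials (m : MonomialOrder σ) (φ : MvPolynomial σ k →ₐ[k] A) :
    LinearIndepOn k (fun a => φ (monomial a 1)) (standardMonomials m φ) := by
  rw [standardMonomials_eq_image]
  exact (linearIndepOn_greedyBasis _).image_of_comp _ _

lemma span_standardMonomials (m : MonomialOrder σ) {φ : MvPolynomial σ k →ₐ[k] A}
    (hφ : Function.Surjective φ) :
    Submodule.span k ((fun a => φ (monomial a 1)) '' standardMonomials m φ) = ⊤ := by
  rw [standardMonomials_eq_image, ← Set.image_comp]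
  have hrange : Set.range ((fun a => φ (monomial a 1)) ∘ m.toSyn.symm)
      = φ.toLinearMap '' Set.range (basisMonomials σ k) := by
    rw [m.toSyn.symm.surjective.range_comp, MvPolynomial.coe_basisMonomials, ← Set.range_comp]
    rfl
  refine (span_image_greedyBasis _).trans ?_
  rw [hrange, ← Submodule.map_span, Module.Basis.span_eq, Submodule.map_top]
  exact LinearMap.range_eq_top.mpr hφ

lemma levelCard_standardMonomials (m : MonomialOrder σ) {φ : MvPolynomial σ k →ₐ[k] A}
    (hφ : Function.Surjective φ) (𝒜 : ℕ → Submodule k A) [DirectSum.Decomposition 𝒜]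
    (h𝒜 : ∀ a, φ (monomial a 1) ∈ 𝒜 a.degree) (n : ℕ) :
    levelCard (standardMonomials m φ) n = Module.finrank k (𝒜 n) := by
  rw [← span_setOf_degree_eq 𝒜 h𝒜 (span_standardMonomials m hφ) n, Set.image_eq_range]
  have hindep := (linearIndepOn_standardMonomials m φ).mono
    (fun a (ha : a ∈ {a ∈ standardMonomials m φ | a.degree = n}) => ha.1)
  exact (Module.finrank_eq_nat_card_basis (Module.Basis.span hindep)).symm

end StandardMonomials

lemma exists_isMonomialHilbertPolynomial_of_isHilbertPolynomial {f : ℚ[X]}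
    (hf : IsHilbertPolynomial f) :
    ∃ r : ℕ, IsMonomialHilbertPolynomial (Fin r) f := by
  obtain ⟨k, R, _, _, _, 𝒜, _, hfin, hadjoin, N, hN⟩ := hf
  have := hfin 1
  obtain ⟨r, s, hs⟩ := Module.Finite.exists_fin (R := k) (M := 𝒜 1)
  obtain ⟨m⟩ := nonempty_monomialOrder (Fin r)
  let φ : MvPolynomial (Fin r) k →ₐ[k] R := MvPolynomial.aeval fun i => (s i : R)
  have hsurjective : Function.Surjective φ := by
    have hspan : Submodule.span k (Set.range fun i => (s i : R)) = 𝒜 1 := by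
      have := congrArg (Submodule.map (𝒜 1).subtype) hs
      rwa [Submodule.map_span, ← Set.range_comp, Submodule.map_subtype_top] at this
    rw [← AlgHom.range_eq_top, ← Algebra.adjoin_range_eq_range_aeval, ← Algebra.adjoin_span, hspan,
      hadjoin]
  have hdegree (a : Fin r →₀ ℕ) : φ (MvPolynomial.monomial a 1) ∈ 𝒜 a.degree := by
    rw [MvPolynomial.aeval_monomial, map_one, one_mul, Finsupp.prod_pow, Finsupp.degree_eq_sum]
    exact SetLike.prod_mem_graded 𝒜 a _ fun i _ => by
      simpa using SetLike.pow_mem_graded (a i) (s i).2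
  refine ⟨r, standardMonomials m φ, isLowerSet_standardMonomials m φ,
    Filter.eventually_atTop.mpr ⟨N, fun n hn => ?_⟩⟩
  rw [levelCard_standardMonomials m hsurjective 𝒜 hdegree, hN n hn]

section Compression

variable {ι : Type*} {i j : ι}

/-- The point with `j`-th coordinate `s` on the line through `a` along which only the coordinates
`i` and `j` vary and their sum is constant; meaningful for `s ≤ a i + a j`. -/
noncomputable def exchange (i j : ι) (a : ι →₀ ℕ) (s : ℕ) : ι →₀ ℕ :=
  (a.update i (a i + a j - s)).update j s

lemma exchange_apply_right (a : ι →₀ ℕ) (s : ℕ) : exchange i j a s j = s := by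
  classical simp [exchange, Finsupp.coe_update]

lemma exchange_apply_left (hij : i ≠ j) (a : ι →₀ ℕ) (s : ℕ) :
    exchange i j a s i = a i + a j - s := by
  classical simp [exchange, Finsupp.coe_update, hij]

lemma exchange_apply_of_ne {l : ι} (hi : l ≠ i) (hj : l ≠ j) (a : ι →₀ ℕ) (s : ℕ) :
    exchange i j a s l = a l := by
  classical simp [exchange, Finsupp.coe_update, hi, hj]

lemma exchange_eq (hij : i ≠ j) {a b : ι →₀ ℕ} {s : ℕ} (hi : b i = a i + a j - s) (hj : b j = s)
    (h : ∀ l, l ≠ i → l ≠ j → b l = a l) : exchange i j a s = b := by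
  ext l
  by_cases hli : l = i
  · rw [hli, exchange_apply_left hij, hi]
  by_cases hlj : l = j
  · rw [hlj, exchange_apply_right, hj]
  rw [exchange_apply_of_ne hli hlj, h l hli hlj]

lemma exchange_self (hij : i ≠ j) (a : ι →₀ ℕ) : exchange i j a (a j) = a :=
  exchange_eq hij (by lia) rfl fun _ _ _ => rfl

lemma exchange_exchange (hij : i ≠ j) {a : ι →₀ ℕ} {s : ℕ} (hs : s ≤ a i + a j) (s' : ℕ) :
    exchange i j (exchange i j a s) s' = exchange i j a s' := by
  refine exchange_eq hij ?_ (exchange_apply_right _ _) fun l hi hj => ?_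
  · rw [exchange_apply_left hij, exchange_apply_left hij, exchange_apply_right,
      Nat.sub_add_cancel hs]
  · rw [exchange_apply_of_ne hi hj, exchange_apply_of_ne hi hj]

lemma exchange_add_single_of_ne (hij : i ≠ j) {l : ι} (hi : l ≠ i) (hj : l ≠ j) (a : ι →₀ ℕ)
    (s : ℕ) :
    exchange i j (a + Finsupp.single l 1) s = exchange i j a s + Finsupp.single l 1 := by
  refine exchange_eq hij ?_ ?_ fun l' hi' hj' => ?_
  · simp [exchange_apply_left hij, hi.symm, hj.symm]
  · simp [exchange_apply_right, hj.symm]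
  · simp [exchange_apply_of_ne hi' hj']

lemma exchange_eq_add_single_left (hij : i ≠ j) {a b : ι →₀ ℕ} (hsum : b i + b j = a i + a j + 1)
    (h : ∀ l, l ≠ i → l ≠ j → b l = a l) {s : ℕ} (hs : s ≤ a i + a j) :
    exchange i j b s = exchange i j a s + Finsupp.single i 1 := by
  refine exchange_eq hij ?_ ?_ fun l hi hj => ?_
  · simp only [Finsupp.add_apply, exchange_apply_left hij, Finsupp.single_eq_same]
    lia
  · simp [exchange_apply_right, hij]
  · simp [exchange_apply_of_ne hi hj, h l hi hj, hi]

lemma exchange_eq_add_single_right (hij : i ≠ j) {a b : ι →₀ ℕ} (hsum : b i + b j = a i + a j + 1)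
    (h : ∀ l, l ≠ i → l ≠ j → b l = a l) {s : ℕ} (hs : s ≤ a i + a j) :
    exchange i j b (s + 1) = exchange i j a s + Finsupp.single j 1 := by
  refine exchange_eq hij ?_ ?_ fun l hi hj => ?_
  · simp only [Finsupp.add_apply, exchange_apply_left hij, Finsupp.single_eq_of_ne hij]
    lia
  · simp [exchange_apply_right]
  · simp [exchange_apply_of_ne hi hj, h l hi hj, hj]

lemma exchange_add_single (hij : i ≠ j) {a : ι →₀ ℕ} {s : ℕ} (hs : s ≤ a j) :
    exchange i j a s + Finsupp.single j (a j - s) = a + Finsupp.single i (a j - s) := by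
  ext l
  by_cases hli : l = i
  · subst hli
    simp only [Finsupp.add_apply, exchange_apply_left hij, Finsupp.single_eq_same,
      Finsupp.single_eq_of_ne hij]
    lia
  by_cases hlj : l = j
  · subst hlj
    simp only [Finsupp.add_apply, exchange_apply_right, Finsupp.single_eq_same,
      Finsupp.single_eq_of_ne hij.symm]
    lia
  simp [exchange_apply_of_ne hli hlj, Ne.symm hli, Ne.symm hlj]

lemma degree_exchange (hij : i ≠ j) {a : ι →₀ ℕ} {s : ℕ} (hs : s ≤ a j) :
    (exchange i j a s).degree = a.degree := by
  have h := congrArg Finsupp.degree (exchange_add_single hij hs)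
  simp only [map_add, Finsupp.degree_single] at h
  exact Nat.add_right_cancel h

lemma weight_exchange_add (hij : i ≠ j) (w : ι → ℕ) {a : ι →₀ ℕ} {s : ℕ} (hs : s ≤ a j) :
    Finsupp.weight w (exchange i j a s) + (a j - s) * w j
      = Finsupp.weight w a + (a j - s) * w i := by
  simpa only [map_add, Finsupp.weight_single, smul_eq_mul] using
    congrArg (Finsupp.weight w) (exchange_add_single hij hs)

/-- The `j`-th coordinates of the points of `T` on the line of `exchange i j a`. -/
def lineTrace (T : Set (ι →₀ ℕ)) (i j : ι) (a : ι →₀ ℕ) : Set ℕ :=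
  {s | s ≤ a i + a j ∧ exchange i j a s ∈ T}

variable {T : Set (ι →₀ ℕ)}

lemma finite_lineTrace (T : Set (ι →₀ ℕ)) (i j : ι) (a : ι →₀ ℕ) : (lineTrace T i j a).Finite :=
  (Set.finite_Iic (a i + a j)).subset fun _ hs => hs.1

lemma lineTrace_exchange (hij : i ≠ j) {a : ι →₀ ℕ} {s : ℕ} (hs : s ≤ a i + a j) :
    lineTrace T i j (exchange i j a s) = lineTrace T i j a := by
  simp only [lineTrace, exchange_exchange hij hs, exchange_apply_left hij, exchange_apply_right,
    Nat.sub_add_cancel hs]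

lemma apply_mem_lineTrace (hij : i ≠ j) {a : ι →₀ ℕ} (ha : a ∈ T) : a j ∈ lineTrace T i j a :=
  ⟨Nat.le_add_left _ _, by rwa [exchange_self hij]⟩

/-- Compression in the direction `i ← j`: on every line of `exchange`, the points of `T` are
pushed, keeping their order, to the initial segment with respect to the `j`-th coordinate. -/
noncomputable def compress (T : Set (ι →₀ ℕ)) (i j : ι) (a : ι →₀ ℕ) : ι →₀ ℕ :=
  open Classical in exchange i j a (Nat.count (· ∈ lineTrace T i j a) (a j))

lemma degree_compress (hij : i ≠ j) (T : Set (ι →₀ ℕ)) (a : ι →₀ ℕ) :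
    (compress T i j a).degree = a.degree := by
  classical exact degree_exchange hij (Nat.count_le _)

lemma lineTrace_compress (hij : i ≠ j) (a : ι →₀ ℕ) :
    lineTrace T i j (compress T i j a) = lineTrace T i j a := by
  classical exact lineTrace_exchange hij ((Nat.count_le _).trans (Nat.le_add_left _ _))

lemma exchange_compress (hij : i ≠ j) (a : ι →₀ ℕ) (s : ℕ) :
    exchange i j (compress T i j a) s = exchange i j a s := by
  classical exact exchange_exchange hij ((Nat.count_le _).trans (Nat.le_add_left _ _)) s

lemma injOn_compress (hij : i ≠ j) (T : Set (ι →₀ ℕ)) : Set.InjOn (compress T i j) T := by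
  classical
  intro a ha b hb hab
  have htrace : lineTrace T i j a = lineTrace T i j b := by
    rw [← lineTrace_compress hij a, hab, lineTrace_compress hij b]
  have hcount := DFunLike.congr_fun hab j
  rw [compress, compress, exchange_apply_right, exchange_apply_right, htrace] at hcount
  have hj : a j = b j :=
    Nat.count_injective (htrace ▸ apply_mem_lineTrace hij ha) (apply_mem_lineTrace hij hb) hcount
  rw [← exchange_self hij a, ← exchange_compress (T := T) hij a, hab, exchange_compress hij, hj,
    exchange_self hij]

lemma mem_image_compress (hij : i ≠ j) {b : ι →₀ ℕ} :
    b ∈ compress T i j '' T ↔ b j < (lineTrace T i j b).ncard := by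
  classical
  have hfin := finite_lineTrace T i j
  constructor
  · rintro ⟨a, ha, rfl⟩
    rw [lineTrace_compress hij, compress, exchange_apply_right,
      Set.ncard_eq_toFinset_card _ (hfin a)]
    exact Nat.count_lt_card (p := (· ∈ lineTrace T i j a)) (hfin a) (apply_mem_lineTrace hij ha)
  · intro hb
    rw [Set.ncard_eq_toFinset_card _ (hfin b)] at hb
    have hs := Nat.nth_mem_of_lt_card (p := (· ∈ lineTrace T i j b)) (hfin b) hb
    refine ⟨_, hs.2, ?_⟩
    rw [compress, lineTrace_exchange hij hs.1, exchange_apply_right,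
      Nat.count_nth (p := (· ∈ lineTrace T i j b)) fun _ => hb, exchange_exchange hij hs.1,
      exchange_self hij]

lemma levelCard_image_compress (hij : i ≠ j) (T : Set (ι →₀ ℕ)) (n : ℕ) :
    levelCard (compress T i j '' T) n = levelCard T n := by
  have hlevel : {b ∈ compress T i j '' T | b.degree = n}
      = compress T i j '' {a ∈ T | a.degree = n} := by
    ext b
    constructor
    · rintro ⟨⟨a, ha, rfl⟩, hdegree⟩
      exact ⟨a, ⟨ha, degree_compress hij T a ▸ hdegree⟩, rfl⟩
    · rintro ⟨a, ⟨ha, hdegree⟩, rfl⟩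
      exact ⟨⟨a, ha, rfl⟩, (degree_compress hij T a).trans hdegree⟩
  rw [levelCard, hlevel, ((injOn_compress hij T).mono fun a ha => ha.1).ncard_image, levelCard]

lemma min_ncard_le_ncard {A B : Set ℕ} {m : ℕ} (hA : ∀ s ∈ A, s ≤ m + 1)
    (hAB : ∀ s ∈ A, s ≤ m → s ∈ B) (hAB' : ∀ s, s + 1 ∈ A → s ∈ B) (hB : B.Finite) :
    min A.ncard (m + 1) ≤ B.ncard := by
  have hAfin : A.Finite := (Set.finite_Iic (m + 1)).subset hA
  by_cases hlower : ∀ s, s + 1 ∈ A → s ∈ A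
  · by_cases hm : m + 1 ∈ A
    · have hfull : Set.Iio (m + 1) ⊆ B := fun s hs => by
        refine hAB s ?_ (Nat.lt_succ_iff.mp hs)
        exact Nat.decreasingInduction (motive := fun s _ => s ∈ A) (fun s _ => hlower s) hm
          (le_of_lt hs)
      calc min A.ncard (m + 1) ≤ (Set.Iio (m + 1)).ncard := by simp [Set.ncard_eq_toFinset_card']
        _ ≤ B.ncard := Set.ncard_le_ncard hfull hB
    · refine (min_le_left _ _).trans (Set.ncard_le_ncard (fun s hs => hAB s hs ?_) hB)
      exact Nat.lt_succ_iff.mp ((hA s hs).lt_of_ne fun h => hm (h ▸ hs))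
  · push Not at hlower
    obtain ⟨p, hp, hpA⟩ := hlower
    calc min A.ncard (m + 1) ≤ A.ncard := min_le_left _ _
      _ ≤ (insert p (A \ {m + 1})).ncard := by
        rw [Set.ncard_insert_of_notMem (fun h => hpA h.1) hAfin.sdiff]
        simpa using Set.ncard_le_ncard_sdiff_add_ncard A {m + 1}
      _ ≤ B.ncard := Set.ncard_le_ncard (Set.insert_subset (hAB' p hp) fun s hs =>
          hAB s hs.1 (Nat.lt_succ_iff.mp ((hA s hs.1).lt_of_ne hs.2))) hB

lemma induction_on_add_single {motive : (ι →₀ ℕ) → Prop} (zero : motive 0)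
    (add : ∀ c l, motive c → motive (c + Finsupp.single l 1)) (c : ι →₀ ℕ) : motive c := by
  suffices ∀ a, motive a → motive (a + c) by simpa using this 0 zero
  induction c using Finsupp.induction_linear with
  | zero => simp
  | add f g hf hg => exact fun a ha => add_assoc a f g ▸ hg _ (hf a ha)
  | single l n =>
    induction n with
    | zero => simp
    | succ n ih =>
      intro a ha
      rw [Finsupp.single_add, ← add_assoc]
      exact add _ l (ih a ha)

lemma isLowerSet_of_forall_add_single {C : Set (ι →₀ ℕ)}
    (h : ∀ a l, a + Finsupp.single l 1 ∈ C → a ∈ C) : IsLowerSet C := by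
  intro b a hab hb
  obtain ⟨c, rfl⟩ := le_iff_exists_add.mp hab
  induction c using induction_on_add_single with
  | zero => simpa using hb
  | add c l ih => exact ih le_self_add (h _ l (by rwa [add_assoc]))

lemma isLowerSet_image_compress (hij : i ≠ j) (hT : IsLowerSet T) :
    IsLowerSet (compress T i j '' T) := by
  refine isLowerSet_of_forall_add_single fun b l hb => ?_
  rw [mem_image_compress hij] at hb ⊢
  obtain ⟨b', hb'⟩ : ∃ b', b' = b + Finsupp.single l 1 := ⟨_, rfl⟩
  rw [← hb'] at hb
  have hle : b j ≤ b' j := by simp [hb']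
  have hmem {s s' : ℕ} {l' : ι} (hs : s ∈ lineTrace T i j b')
      (h : exchange i j b' s = exchange i j b s' + Finsupp.single l' 1) :
      exchange i j b s' ∈ T := hT le_self_add (h ▸ hs.2)
  by_cases hl : l = i ∨ l = j
  · have hsum : b' i + b' j = b i + b j + 1 := by
      rcases hl with rfl | rfl <;>
        simp only [hb', Finsupp.add_apply, Finsupp.single_eq_same, Finsupp.single_eq_of_ne hij,
          Finsupp.single_eq_of_ne hij.symm] <;> lia
    have heq : ∀ k, k ≠ i → k ≠ j → b' k = b k := by
      rintro k hki hkj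
      rcases hl with rfl | rfl <;> simp [hb', hki, hkj]
    have hleft : ∀ s ∈ lineTrace T i j b', s ≤ b i + b j → s ∈ lineTrace T i j b :=
      fun s hs hsm => ⟨hsm, hmem hs (exchange_eq_add_single_left hij hsum heq hsm)⟩
    have hright : ∀ s, s + 1 ∈ lineTrace T i j b' → s ∈ lineTrace T i j b := fun s hs => by
      have hsm : s ≤ b i + b j := Nat.le_of_succ_le_succ (hs.1.trans_eq hsum)
      exact ⟨hsm, hmem hs (exchange_eq_add_single_right hij hsum heq hsm)⟩
    calc b j < min (lineTrace T i j b').ncard (b i + b j + 1) := lt_min (hle.trans_lt hb) (by lia)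
      _ ≤ _ := min_ncard_le_ncard (fun s hs => hs.1.trans_eq hsum) hleft hright
        (finite_lineTrace _ _ _ _)
  · push Not at hl
    have hsum : b' i + b' j = b i + b j := by simp [hb', hl.1.symm, hl.2.symm]
    have hsub : lineTrace T i j b' ⊆ lineTrace T i j b := fun s hs =>
      ⟨hs.1.trans_eq hsum, hmem hs (hb' ▸ exchange_add_single_of_ne hij hl.1 hl.2 b s)⟩
    exact hle.trans_lt (hb.trans_le (Set.ncard_le_ncard hsub (finite_lineTrace _ _ _ _)))

end Compression

section StronglyStable

variable {r : ℕ} {T : Set (Fin r →₀ ℕ)}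

/-- A set of exponents is strongly stable if it is stable under division and under replacing one
factor `X_j` of a monomial by an earlier variable `X_i`: the monomials outside it then span an
ideal that is strongly stable for the reversed order of the variables. -/
structure IsStronglyStable (T : Set (Fin r →₀ ℕ)) : Prop where
  isLowerSet : IsLowerSet T
  add_single_mem {a : Fin r →₀ ℕ} {i j : Fin r} (hij : i < j)
    (ha : a + Finsupp.single j 1 ∈ T) : a + Finsupp.single i 1 ∈ T

lemma weight_compress_lt {i j : Fin r} (hij : i < j) {a : Fin r →₀ ℕ} (h : compress T i j a ≠ a) :
    Finsupp.weight Fin.val (compress T i j a) < Finsupp.weight Fin.val a := by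
  classical
  obtain ⟨s, hs⟩ : ∃ s, s = Nat.count (· ∈ lineTrace T i j a) (a j) := ⟨_, rfl⟩
  have hsj : s < a j := (hs ▸ Nat.count_le _).lt_of_ne fun hsj => h (by
    rw [compress, ← hs, hsj, exchange_self hij.ne])
  have hweight := weight_exchange_add hij.ne Fin.val hsj.le
  have hmul : (a j - s) * (i : ℕ) < (a j - s) * j :=
    Nat.mul_lt_mul_of_pos_left hij (Nat.sub_pos_of_lt hsj)
  rw [compress, ← hs]
  lia

lemma isStronglyStable_of_compress_eq (hT : IsLowerSet T)
    (h : ∀ i j, i < j → ∀ a ∈ T, compress T i j a = a) : IsStronglyStable T where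
  isLowerSet := hT
  add_single_mem := by
    classical
    intro a i j hij ha
    have hcount := DFunLike.congr_fun (h i j hij _ ha) j
    rw [compress, exchange_apply_right, Nat.count_iff_forall] at hcount
    have hmem := (hcount (a j) (by simp)).2
    rwa [exchange_eq_add_single_left hij.ne (a := a), exchange_self hij.ne] at hmem
    · simp only [Finsupp.add_apply, Finsupp.single_eq_same, Finsupp.single_eq_of_ne hij.ne]
      lia
    · exact fun l _ hl => by simp [hl]
    · exact Nat.le_add_left _ _

lemma exists_isStronglyStable_of_finite (hT : IsLowerSet T) (hfin : T.Finite) :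
    ∃ U : Set (Fin r →₀ ℕ), IsStronglyStable U ∧ ∀ n, levelCard U n = levelCard T n := by
  classical
  obtain ⟨U, ⟨hU, hcard⟩, hmin⟩ := exists_minimalFor_of_wellFoundedLT
    (fun U : Finset (Fin r →₀ ℕ) => IsLowerSet (U : Set (Fin r →₀ ℕ)) ∧
      ∀ n, levelCard (U : Set (Fin r →₀ ℕ)) n = levelCard T n)
    (fun U => ∑ a ∈ U, Finsupp.weight Fin.val a)
    ⟨hfin.toFinset, by simpa using hT⟩
  refine ⟨U, isStronglyStable_of_compress_eq hU ?_, hcard⟩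
  by_contra! hmoved
  obtain ⟨i, j, hij, a, ha, hne⟩ := hmoved
  have hle : ∀ b ∈ U,
      Finsupp.weight Fin.val (compress U i j b) ≤ Finsupp.weight Fin.val b := fun b _ => by
    by_cases hb : compress U i j b = b
    · rw [hb]
    · exact (weight_compress_lt hij hb).le
  have hlt : ∑ b ∈ U.image (compress U i j), Finsupp.weight Fin.val b
      < ∑ b ∈ U, Finsupp.weight Fin.val b := by
    rw [Finset.sum_image (injOn_compress hij.ne _)]
    exact Finset.sum_lt_sum hle ⟨a, ha, weight_compress_lt hij hne⟩
  refine (hmin ⟨?_, fun n => ?_⟩ hlt.le).not_gt hlt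
  · rw [Finset.coe_image]
    exact isLowerSet_image_compress hij.ne hU
  · rw [Finset.coe_image, levelCard_image_compress hij.ne, hcard]

lemma exists_isStronglyStable (hT : IsLowerSet T) (L : ℕ) :
    ∃ U : Set (Fin r →₀ ℕ), IsStronglyStable U ∧ ∀ n ≤ L, levelCard U n = levelCard T n := by
  have hfin : {a ∈ T | a.degree ≤ L}.Finite :=
    (Finsupp.finite_of_degree_le L).subset fun a ha => ha.2
  obtain ⟨U, hU, hcard⟩ := exists_isStronglyStable_of_finite (T := {a ∈ T | a.degree ≤ L})
    (fun b a hab hb => ⟨hT hab hb.1, (Finsupp.degree_mono hab).trans hb.2⟩) hfin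
  refine ⟨U, hU, fun n hn => (hcard n).trans (congrArg Set.ncard ?_)⟩
  ext a
  exact ⟨fun ha => ⟨ha.1.1, ha.2⟩, fun ha => ⟨⟨ha.1, ha.2.trans_le hn⟩, ha.2⟩⟩

end StronglyStable

section HyperplaneSection

variable {r : ℕ}

lemma degree_cons (s : ℕ) (b : Fin r →₀ ℕ) : (Finsupp.cons s b).degree = s + b.degree := by
  simp [Finsupp.degree_eq_sum, Fin.sum_univ_succ]

lemma cons_add_cons (s t : ℕ) (a b : Fin r →₀ ℕ) :
    Finsupp.cons s a + Finsupp.cons t b = Finsupp.cons (s + t) (a + b) := by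
  ext l
  cases l using Fin.cases <;> simp

lemma cons_le_cons {s t : ℕ} {a b : Fin r →₀ ℕ} (hst : s ≤ t) (hab : a ≤ b) :
    Finsupp.cons s a ≤ Finsupp.cons t b := by
  intro l
  cases l using Fin.cases with
  | zero => simpa using hst
  | succ l => simpa using hab l

/-- The monomials of `T` not involving the first variable, as monomials in the other variables:
for the standard monomials of an ideal, those of the ideal of its section by `X_0 = 0`. -/
def hyperplaneSection (T : Set (Fin (r + 1) →₀ ℕ)) : Set (Fin r →₀ ℕ) :=
  {b | Finsupp.cons 0 b ∈ T}

/-- The divisors of the monomials of degree `M` in `T`. -/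
def purePart (T : Set (Fin r →₀ ℕ)) (M : ℕ) : Set (Fin r →₀ ℕ) :=
  {a | ∃ b ∈ T, b.degree = M ∧ a ≤ b}

lemma isStronglyStable_hyperplaneSection {T : Set (Fin (r + 1) →₀ ℕ)} (hT : IsStronglyStable T) :
    IsStronglyStable (hyperplaneSection T) where
  isLowerSet _ _ hab hb := hT.isLowerSet (cons_le_cons le_rfl hab) hb
  add_single_mem {a i j} hij ha := by
    have hcons (l : Fin r) : Finsupp.cons 0 (a + Finsupp.single l 1)
        = Finsupp.cons 0 a + Finsupp.single l.succ 1 := by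
      rw [← Finsupp.cons_zero_single_eq_single_succ, cons_add_cons, zero_add]
    have hmem : Finsupp.cons 0 a + Finsupp.single i.succ 1 ∈ T :=
      hT.add_single_mem (Fin.succ_lt_succ_iff.mpr hij) (hcons j ▸ ha)
    rwa [← hcons] at hmem

lemma isStronglyStable_purePart {T : Set (Fin r →₀ ℕ)} (hT : IsStronglyStable T) (M : ℕ) :
    IsStronglyStable (purePart T M) where
  isLowerSet := fun _ _ hab ⟨b, hb, hM, hle⟩ => ⟨b, hb, hM, hab.trans hle⟩
  add_single_mem {a i j} hij := by
    rintro ⟨b, hb, hM, hle⟩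
    obtain ⟨c, rfl⟩ := le_iff_exists_add.mp hle
    rw [add_right_comm] at hb
    refine ⟨_, hT.add_single_mem hij hb, ?_, ?_⟩
    · simpa [add_right_comm] using hM
    · rw [add_right_comm]
      exact le_self_add

lemma mem_purePart_degree {T : Set (Fin r →₀ ℕ)} {a : Fin r →₀ ℕ} :
    a ∈ purePart T a.degree ↔ a ∈ T := by
  refine ⟨?_, fun ha => ⟨a, ha, rfl, le_rfl⟩⟩
  rintro ⟨b, hb, hM, hle⟩
  obtain ⟨c, rfl⟩ := le_iff_exists_add.mp hle
  have hc : c = 0 := by simpa [Finsupp.degree_eq_zero_iff] using hM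
  simpa [hc] using hb

lemma levelCard_purePart (T : Set (Fin r →₀ ℕ)) (M : ℕ) :
    levelCard (purePart T M) M = levelCard T M := by
  refine congrArg Set.ncard (Set.ext fun a => and_congr_left ?_)
  rintro rfl
  exact mem_purePart_degree

lemma levelCard_hyperplaneSection_purePart (T : Set (Fin (r + 1) →₀ ℕ)) (M : ℕ) :
    levelCard (hyperplaneSection (purePart T M)) M = levelCard (hyperplaneSection T) M := by
  refine congrArg Set.ncard (Set.ext fun a => and_congr_left fun ha => ?_)
  have hdegree : (Finsupp.cons 0 a).degree = M := by rw [degree_cons, zero_add, ha]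
  exact hdegree ▸ mem_purePart_degree

lemma levelCard_hyperplaneSection_le (T : Set (Fin (r + 1) →₀ ℕ)) (n : ℕ) :
    levelCard (hyperplaneSection T) n ≤ levelCard T n :=
  Set.ncard_le_ncard_of_injOn (Finsupp.cons 0)
    (fun b hb => ⟨hb.1, by rw [degree_cons, zero_add, hb.2]⟩)
    (fun _ _ _ _ h => (Finsupp.cons_injective2 h).2) (finite_level T n)

lemma levelCard_succ_le {T : Set (Fin (r + 1) →₀ ℕ)} (hT : IsLowerSet T) (n : ℕ) :
    levelCard T (n + 1) ≤ levelCard T n + levelCard (hyperplaneSection T) (n + 1) := by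
  have hsub : {a ∈ T | a.degree = n + 1} ⊆
      (· + Finsupp.single 0 1) '' {a ∈ T | a.degree = n} ∪
        Finsupp.cons 0 '' {b ∈ hyperplaneSection T | b.degree = n + 1} := by
    rintro a ⟨ha, hdegree⟩
    obtain ⟨s, b, rfl⟩ : ∃ s b, a = Finsupp.cons s b := ⟨_, _, (Finsupp.cons_tail a).symm⟩
    rw [degree_cons] at hdegree
    rcases s with _ | s
    · exact Or.inr ⟨b, ⟨ha, by rwa [zero_add] at hdegree⟩, rfl⟩
    · refine Or.inl ⟨Finsupp.cons s b, ⟨hT (cons_le_cons s.le_succ le_rfl) ha, ?_⟩, ?_⟩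
      · rw [degree_cons]
        lia
      · simp only [← Finsupp.cons_zero_eq_single_zero, cons_add_cons, add_zero]
  refine (Set.ncard_le_ncard hsub (((finite_level _ _).image _).union
    ((finite_level _ _).image _))).trans ((Set.ncard_union_le _ _).trans ?_)
  exact add_le_add (Set.ncard_image_le (finite_level _ _)) (Set.ncard_image_le (finite_level _ _))

lemma ncard_setOf_degree_le (S : Set (Fin r →₀ ℕ)) (n : ℕ) :
    {a ∈ S | a.degree ≤ n}.ncard = ∑ j ∈ Finset.range (n + 1), levelCard S j := by
  classical
  have hfin : {a ∈ S | a.degree ≤ n}.Finite :=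
    (Finsupp.finite_of_degree_le n).subset fun a ha => ha.2
  rw [Set.ncard_eq_toFinset_card _ hfin, Finset.card_eq_sum_card_fiberwise
    (f := Finsupp.degree) (t := Finset.range (n + 1)) (by simp [Set.MapsTo])]
  refine Finset.sum_congr rfl fun j hj => ?_
  rw [levelCard, ← Set.ncard_coe_finset]
  congr 1
  ext a
  have hjn := Finset.mem_range_succ_iff.mp hj
  simp only [Finset.coe_filter, Set.Finite.mem_toFinset, Set.mem_ofPred_eq]
  exact ⟨fun ha => ⟨ha.1.1, ha.2⟩, fun ha => ⟨⟨ha.1, ha.2.trans_le hjn⟩, ha.2⟩⟩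

lemma IsStronglyStable.add_single_zero_mem {T : Set (Fin (r + 1) →₀ ℕ)} (hT : IsStronglyStable T)
    {a c : Fin (r + 1) →₀ ℕ} (h : a + c ∈ T) : a + Finsupp.single 0 c.degree ∈ T := by
  induction c using induction_on_add_single generalizing a with
  | zero => simpa using h
  | add c l ih =>
    have hshift : a + Finsupp.single l 1 + Finsupp.single 0 c.degree ∈ T :=
      ih (by rwa [add_right_comm, add_assoc])
    have hzero : a + Finsupp.single 0 c.degree + Finsupp.single 0 1 ∈ T := by
      rw [add_right_comm] at hshift
      rcases (Fin.zero_le l).eq_or_lt with rfl | hl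
      · exact hshift
      · exact hT.add_single_mem hl hshift
    simpa [Finsupp.single_add, add_assoc] using hzero

lemma IsStronglyStable.sum_levelCard_purePart_le {T : Set (Fin (r + 1) →₀ ℕ)}
    (hT : IsStronglyStable T) {n M : ℕ} (hn : n ≤ M) :
    ∑ j ∈ Finset.range (n + 1), levelCard (purePart (hyperplaneSection T) M) j
      ≤ levelCard T n := by
  rw [← ncard_setOf_degree_le]
  refine Set.ncard_le_ncard_of_injOn (fun a => Finsupp.cons (n - a.degree) a) ?_
    (fun _ _ _ _ h => (Finsupp.cons_injective2 h).2) (finite_level T n)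
  rintro a ⟨⟨b, hb, hM, hle⟩, han⟩
  obtain ⟨c, rfl⟩ := le_iff_exists_add.mp hle
  have hshift : Finsupp.cons c.degree a ∈ T := by
    have hmem : Finsupp.cons 0 a + Finsupp.cons 0 c ∈ T := by
      rw [cons_add_cons]
      exact hb
    simpa only [degree_cons, ← Finsupp.cons_zero_eq_single_zero, cons_add_cons, zero_add,
      add_zero] using hT.add_single_zero_mem hmem
  rw [map_add] at hM
  exact ⟨hT.isLowerSet (cons_le_cons (by lia) le_rfl) hshift, by rw [degree_cons]; lia⟩

end HyperplaneSection

section Macaulay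

variable {r : ℕ}

lemma levelCard_pos_of_le {T : Set (Fin r →₀ ℕ)} (hT : IsLowerSet T) {j M : ℕ} (hj : j ≤ M)
    (h : 0 < levelCard T M) : 0 < levelCard T j := by
  obtain ⟨a, ha, rfl⟩ := (Set.ncard_pos (finite_level T M)).mp h
  obtain ⟨b, hb, hdegree⟩ := Finsupp.exists_le_degree_eq a j hj
  exact (Set.ncard_pos (finite_level T j)).mpr ⟨b, hT hb ha, hdegree⟩

lemma levelCard_fin_zero_le_one (T : Set (Fin 0 →₀ ℕ)) (n : ℕ) : levelCard T n ≤ 1 :=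
  Set.ncard_le_one_of_subsingleton _

lemma levelCard_add_le {T : Set (Fin (r + 1) →₀ ℕ)} (hT : IsLowerSet T) {k M : ℕ}
    (h : ∀ n, M < n → levelCard (hyperplaneSection T) n ≤ k) (m : ℕ) :
    levelCard T (M + m) ≤ levelCard T M + m * k := by
  induction m with
  | zero => simp
  | succ m ih =>
    calc levelCard T (M + m + 1)
        ≤ levelCard T (M + m) + levelCard (hyperplaneSection T) (M + m + 1) :=
          levelCard_succ_le hT _
      _ ≤ levelCard T M + m * k + k := add_le_add ih (h _ (by lia))
      _ = levelCard T M + (m + 1) * k := by ring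

lemma IsStronglyStable.min_levelCard_le {T : Set (Fin r →₀ ℕ)} (hT : IsStronglyStable T)
    {j M : ℕ} (hj : j ≤ M) : min (levelCard T M) (j + 1) ≤ levelCard T j := by
  rcases r with _ | r
  · rcases Nat.eq_zero_or_pos (levelCard T M) with hzero | hpos
    · simp [hzero]
    · exact (min_le_left _ _).trans ((levelCard_fin_zero_le_one T M).trans
        (levelCard_pos_of_le hT.isLowerSet hj hpos))
  by_cases h : ∀ i, j < i → levelCard (hyperplaneSection T) i ≤ 0
  · have hle := levelCard_add_le hT.isLowerSet h (M - j)
    rw [Nat.add_sub_cancel' hj, mul_zero, add_zero] at hle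
    exact (min_le_left _ _).trans hle
  push Not at h
  obtain ⟨i, hji, hi⟩ := h
  have hpos : ∀ l ∈ Finset.range (j + 1), 1 ≤ levelCard (purePart (hyperplaneSection T) i) l := by
    intro l hl
    refine levelCard_pos_of_le (isStronglyStable_purePart
      (isStronglyStable_hyperplaneSection hT) i).isLowerSet (M := i) ?_ ?_
    · have := Finset.mem_range.mp hl
      lia
    · rw [levelCard_purePart]
      exact hi
  calc min (levelCard T M) (j + 1) ≤ j + 1 := min_le_right _ _
    _ = ∑ l ∈ Finset.range (j + 1), 1 := by simp
    _ ≤ ∑ l ∈ Finset.range (j + 1), levelCard (purePart (hyperplaneSection T) i) l :=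
      Finset.sum_le_sum hpos
    _ ≤ levelCard T j := hT.sum_levelCard_purePart_le hji.le

lemma IsStronglyStable.sum_min_le {T : Set (Fin (r + 1) →₀ ℕ)} (hT : IsStronglyStable T)
    {c n M : ℕ} (hn : n ≤ M) (hc : c ≤ levelCard (hyperplaneSection T) M) :
    ∑ j ∈ Finset.range (n + 1), min c (j + 1) ≤ levelCard T n := by
  refine (Finset.sum_le_sum fun j hj => ?_).trans (hT.sum_levelCard_purePart_le hn)
  have hjM : j ≤ M := (Finset.mem_range_succ_iff.mp hj).trans hn
  have hpure := isStronglyStable_purePart (isStronglyStable_hyperplaneSection hT) M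
  refine (min_le_min_right _ ?_).trans (hpure.min_levelCard_le hjM)
  rwa [levelCard_purePart]

lemma IsStronglyStable.sum_sum_min_le {T : Set (Fin (r + 2) →₀ ℕ)} (hT : IsStronglyStable T)
    {c n M : ℕ} (hn : n ≤ M)
    (hc : c ≤ levelCard (hyperplaneSection (hyperplaneSection T)) M) :
    ∑ j ∈ Finset.range (n + 1), ∑ i ∈ Finset.range (j + 1), min c (i + 1) ≤ levelCard T n := by
  refine (Finset.sum_le_sum fun j hj => ?_).trans (hT.sum_levelCard_purePart_le hn)
  have hjM : j ≤ M := (Finset.mem_range_succ_iff.mp hj).trans hn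
  have hpure := isStronglyStable_purePart (isStronglyStable_hyperplaneSection hT) M
  refine hpure.sum_min_le hjM ?_
  rwa [levelCard_hyperplaneSection_purePart]

lemma sum_min_two (n : ℕ) : ∑ j ∈ Finset.range (n + 1), min 2 (j + 1) = 2 * n + 1 := by
  induction n with
  | zero => rfl
  | succ n ih => rw [Finset.sum_range_succ, ih]; lia

lemma sum_min_four (n : ℕ) : ∑ j ∈ Finset.range (n + 3), min 4 (j + 1) = 4 * n + 6 := by
  induction n with
  | zero => rfl
  | succ n ih => rw [Finset.sum_range_succ, ih]; lia

lemma sum_sum_min_two (n : ℕ) :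
    ∑ j ∈ Finset.range (n + 1), ∑ i ∈ Finset.range (j + 1), min 2 (i + 1) = (n + 1) ^ 2 := by
  simp only [sum_min_two]
  induction n with
  | zero => rfl
  | succ n ih => rw [Finset.sum_range_succ, ih]; ring

lemma sum_sum_min_four (n : ℕ) :
    ∑ j ∈ Finset.range (n + 2), ∑ i ∈ Finset.range (j + 1), min 4 (i + 1)
      = 2 * (n + 1) ^ 2 + 2 := by
  induction n with
  | zero => rfl
  | succ n ih => rw [Finset.sum_range_succ, ih, sum_min_four]; ring

end Macaulay

section Necessity

lemma exists_isStronglyStable_of_isHilbertPolynomial {f : ℚ[X]} (hf : IsHilbertPolynomial f) :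
    ∃ r N : ℕ, ∀ L, ∃ U : Set (Fin (r + 2) →₀ ℕ), IsStronglyStable U ∧
      ∀ n, N ≤ n → n ≤ L → (levelCard U n : ℚ) = f.eval (n : ℚ) := by
  obtain ⟨r, hr⟩ := exists_isMonomialHilbertPolynomial_of_isHilbertPolynomial hf
  obtain ⟨S, hS, h⟩ := hr.mapDomain (Fin.castAdd_injective r 2)
  obtain ⟨N, hN⟩ := Filter.eventually_atTop.mp h
  refine ⟨r, N, fun L => ?_⟩
  obtain ⟨U, hU, hcard⟩ := exists_isStronglyStable hS L
  exact ⟨U, hU, fun n hNn hnL => by rw [hcard n hnL, hN n hNn]⟩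

lemma three_le_of_isHilbertPolynomial_C_mul_X {t : ℕ} (ht : 0 < t)
    (h : IsHilbertPolynomial (C (t : ℚ) * X)) : 3 ≤ t := by
  obtain ⟨r, N, hN⟩ := exists_isStronglyStable_of_isHilbertPolynomial h
  obtain ⟨U, hU, hcard⟩ := hN (N + 1)
  have hlevel : ∀ n, N ≤ n → n ≤ N + 1 → levelCard U n = t * n := fun n hn hn' => by
    have := hcard n hn hn'
    rw [eval_mul, eval_C, eval_X] at this
    exact_mod_cast this
  have hN0 := hlevel N le_rfl N.le_succ
  have hN1 := hlevel (N + 1) N.le_succ le_rfl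
  have hsection : t ≤ levelCard (hyperplaneSection U) (N + 1) := by
    have := levelCard_succ_le hU.isLowerSet N
    rw [hN0, hN1, Nat.mul_succ] at this
    lia
  have hsum := hU.sum_min_le le_rfl hsection
  rw [hN1] at hsum
  by_contra! hlt
  obtain rfl | rfl : t = 1 ∨ t = 2 := by lia
  · simp at hsum
  · rw [sum_min_two] at hsum
    lia

/-- If the double section had fewer than `2 * t` monomials in degree `M`, the section would grow by
less than `2 * t` per degree, and could not keep up with the differences `t * (2 * n + 1)`. -/
lemma IsStronglyStable.two_mul_le_levelCard {r : ℕ} {T : Set (Fin (r + 2) →₀ ℕ)}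
    (hT : IsStronglyStable T) {t M L : ℕ} (ht : 0 < t) (hM : 2 * t ≤ M + 1)
    (hL : M + t * M ^ 2 + 1 ≤ L) (h : ∀ n, M ≤ n → n ≤ L → levelCard T n = t * n ^ 2) :
    2 * t ≤ levelCard (hyperplaneSection (hyperplaneSection T)) M := by
  have hsection := isStronglyStable_hyperplaneSection hT
  by_contra! hlt
  have hle : ∀ n, M < n →
      levelCard (hyperplaneSection (hyperplaneSection T)) n ≤ 2 * t - 1 := fun n hn => by
    have := (isStronglyStable_hyperplaneSection hsection).min_levelCard_le hn.le
    lia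
  obtain ⟨m, hm⟩ : ∃ m, m = t * M ^ 2 := ⟨_, rfl⟩
  have hlower : 2 * t * (M + m) + t ≤ levelCard (hyperplaneSection T) (M + m + 1) := by
    have hdiff : t * (M + m + 1) ^ 2 = t * (M + m) ^ 2 + (2 * t * (M + m) + t) := by ring
    have hstep := levelCard_succ_le hT.isLowerSet (M + m)
    rw [h _ (by lia) (by lia), h _ (by lia) (by lia), hdiff] at hstep
    exact Nat.le_of_add_le_add_left hstep
  have hupper : levelCard (hyperplaneSection T) (M + m + 1) ≤ m + (m + 1) * (2 * t - 1) := by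
    have hstart := levelCard_hyperplaneSection_le T M
    rw [h _ le_rfl (by lia), ← hm] at hstart
    exact (levelCard_add_le hsection.isLowerSet hle (m + 1)).trans (Nat.add_le_add_right hstart _)
  have hmul : m + (m + 1) * (2 * t - 1) + 1 = 2 * t * m + 2 * t := by
    obtain ⟨k, hk⟩ := Nat.exists_eq_add_of_lt (Nat.mul_pos two_pos ht)
    rw [hk]
    simp only [zero_add, Nat.add_sub_cancel]
    ring
  have hM1 : t ≤ t * M := Nat.le_mul_of_pos_right t (by lia)
  lia

lemma three_le_of_isHilbertPolynomial_C_mul_X_sq {t : ℕ} (ht : 0 < t)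
    (h : IsHilbertPolynomial (C (t : ℚ) * X ^ 2)) : 3 ≤ t := by
  obtain ⟨r, N, hN⟩ := exists_isStronglyStable_of_isHilbertPolynomial h
  obtain ⟨M, hM⟩ : ∃ M, M = N + 3 := ⟨_, rfl⟩
  obtain ⟨U, hU, hcard⟩ := hN (M + t * M ^ 2 + 1)
  have hlevel : ∀ n, M ≤ n → n ≤ M + t * M ^ 2 + 1 → levelCard U n = t * n ^ 2 :=
    fun n hn hn' => by
      have := hcard n (by lia) hn'
      rw [eval_mul, eval_C, eval_pow, eval_X] at this
      exact_mod_cast this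
  by_contra! hlt
  have hsum := hU.sum_sum_min_le le_rfl (hU.two_mul_le_levelCard ht (by lia) le_rfl hlevel)
  rw [hlevel M le_rfl (by lia)] at hsum
  obtain rfl | rfl : t = 1 ∨ t = 2 := by lia
  · rw [mul_one, sum_sum_min_two] at hsum
    nlinarith
  · rw [hM, show 2 * 2 = 4 from rfl, sum_sum_min_four (N + 2)] at hsum
    lia

end Necessity

end HilbertPolynomials

theorem sign_patterns_stmt3 (d : ℕ) (t : ℕ) (ht : 0 < t) :
    IsHilbertPolynomial (Polynomial.C (t : ℚ) * Polynomial.X ^ d) ↔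
      d = 0 ∨ (d = 1 ∧ 3 ≤ t) ∨ (d = 2 ∧ 3 ≤ t) ∨ 3 ≤ d := by
  constructor
  · intro h
    obtain rfl | rfl | rfl | hd : d = 0 ∨ d = 1 ∨ d = 2 ∨ 3 ≤ d := by lia
    · exact .inl rfl
    · rw [pow_one] at h
      exact .inr (.inl ⟨rfl, HilbertPolynomials.three_le_of_isHilbertPolynomial_C_mul_X ht h⟩)
    · exact .inr (.inr (.inl
        ⟨rfl, HilbertPolynomials.three_le_of_isHilbertPolynomial_C_mul_X_sq ht h⟩))
    · exact .inr (.inr (.inr hd))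
  · rintro (rfl | ⟨rfl, h⟩ | ⟨rfl, h⟩ | hd)
    · rw [pow_zero, mul_one]
      exact HilbertPolynomials.isHilbertPolynomial_C t
    · rw [pow_one]
      exact HilbertPolynomials.isHilbertPolynomial_C_mul_X h
    · exact HilbertPolynomials.isHilbertPolynomial_C_mul_X_sq h
    · exact HilbertPolynomials.isHilbertPolynomial_C_mul_X_pow t hd
end

section
/- For every integer d with d = 0 or d ≥ 3, the polynomial x^d is a Hilbert polynomial. -/
open Polynomial

/-!
If `P` is a finite subset of a commutative monoid, then `i ↦ |P ^ i|` is the Hilbert function of the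
monoid algebra of the Rees monoid `{(m, i) | m ∈ P ^ i}`, which is generated in degree one. Such
growth functions are closed under products, since `(P ×ˢ P') ^ i = P ^ i ×ˢ P' ^ i`. As every
`d ≥ 3` is a sum of copies of `3`, `4` and `5`, only `X ^ 3`, `X ^ 4` and `X ^ 5` have to be
realized.

Order `ℕ ^ n` lexicographically, fix `e`, and identify all vectors above `e`. This is a congruence,
because `min a e` and `min b e` determine `min (a + b) e`. In the quotient, the `i`-th power of the
image of `{a | ∑ a ≤ 1}` consists, for large `i`, of one class for each `a ≤ e` with `∑ a ≤ i`. The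
number of these is a polynomial in `i` given by an explicit recursion on the entries of `e`, and for
suitable `e` it is `X ^ 3`, `X ^ 4` or `X ^ 5`.
-/

open scoped Pointwise

section GradedMonoidAlgebra

variable {G : Type*} (k : Type*)

theorem adjoin_gradeBy_eq_top [AddCommMonoid G] [CommSemiring k] {ι : Type*} {deg : G → ι} {i : ι}
    (hgen : AddSubmonoid.closure (deg ⁻¹' {i}) = ⊤) :
    Algebra.adjoin k (AddMonoidAlgebra.gradeBy k deg i : Set (AddMonoidAlgebra k G)) = ⊤ := by
  have hrange := AlgHom.range_eq_top _ |>.2 <|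
    AddMonoidAlgebra.mvPolynomial_aeval_of_surjective_of_closure (R := k) hgen
  rw [← Algebra.adjoin_range_eq_range_aeval] at hrange
  refine eq_top_iff.2 (hrange.symm.le.trans (Algebra.adjoin_mono ?_))
  rintro _ ⟨⟨m, hm : deg m = i⟩, rfl⟩
  have hsingle := AddMonoidAlgebra.single_mem_gradeBy deg m (1 : k)
  rwa [hm] at hsingle

/-- The degree `i` part of a monoid algebra, as the space of finitely supported functions on the
degree `i` elements of the monoid. -/
noncomputable def gradeByEquivFinsupp [CommSemiring k] {ι : Type*} (deg : G → ι) (i : ι) :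
    AddMonoidAlgebra.gradeBy k deg i ≃ₗ[k] (deg ⁻¹' {i} : Set G) →₀ k :=
  AddMonoidAlgebra.supportedEquivFinsupp (deg ⁻¹' {i})

theorem finrank_gradeBy [Field k] {ι : Type*} (deg : G → ι) (i : ι) [Finite (deg ⁻¹' {i})] :
    Module.finrank k (AddMonoidAlgebra.gradeBy k deg i) = (deg ⁻¹' {i}).ncard := by
  have := Fintype.ofFinite (deg ⁻¹' {i})
  rw [(gradeByEquivFinsupp k deg i).finrank_eq, Module.finrank_finsupp_self,
    ← Nat.card_eq_fintype_card, Nat.card_coe_set_eq]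

end GradedMonoidAlgebra

theorem isHilbertPolynomial_of_forall_ncard {G : Type} [AddCommMonoid G] (deg : G →+ ℕ)
    (hgen : AddSubmonoid.closure (deg ⁻¹' {1}) = ⊤) (hfin : ∀ i, (deg ⁻¹' {i}).Finite)
    {f : ℚ[X]} {N : ℕ} (hf : ∀ i, N ≤ i → ((deg ⁻¹' {i}).ncard : ℚ) = f.eval (i : ℚ)) :
    IsHilbertPolynomial f := by
  refine ⟨ℚ, AddMonoidAlgebra ℚ G, inferInstance, inferInstance, inferInstance,
    AddMonoidAlgebra.gradeBy ℚ deg, inferInstance, fun i => ?_,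
    adjoin_gradeBy_eq_top ℚ hgen, N, fun i hi => ?_⟩
  · have := (hfin i).to_subtype
    exact Module.Finite.equiv (gradeByEquivFinsupp ℚ deg i).symm
  · have := (hfin i).to_subtype
    rw [finrank_gradeBy, hf i hi]

section Rees

variable {M : Type*} [CommMonoid M] (P : Set M)

/-- The Rees monoid of a subset `P` of a commutative monoid: the pairs `(m, i)` with `m ∈ P ^ i`.
It is written additively because Mathlib grades additive monoid algebras only. -/
def reesMonoid : AddSubmonoid (Additive M × ℕ) where
  carrier := {x | x.1.toMul ∈ P ^ x.2}
  zero_mem' := by simp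
  add_mem' {a b} ha hb := by
    simp only [Set.mem_ofPred_eq, Prod.fst_add, Prod.snd_add, toMul_add, pow_add] at *
    exact Set.mul_mem_mul ha hb

/-- The degree `(m, i) ↦ i` on the Rees monoid. -/
def reesDegree : reesMonoid P →+ ℕ :=
  (AddMonoidHom.snd _ _).comp (reesMonoid P).subtype

theorem injOn_reesDegree_preimage (i : ℕ) :
    Set.InjOn (fun x : reesMonoid P => x.1.1.toMul) (reesDegree P ⁻¹' {i}) :=
  fun _ hx _ hy hxy => Subtype.ext (Prod.ext hxy (Eq.trans hx (Eq.symm hy)))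

theorem image_reesDegree_preimage (i : ℕ) :
    (fun x : reesMonoid P => x.1.1.toMul) '' (reesDegree P ⁻¹' {i}) = P ^ i := by
  ext m
  constructor
  · rintro ⟨x, rfl, rfl⟩
    exact x.2
  · exact fun hm => ⟨⟨(.ofMul m, i), hm⟩, rfl, rfl⟩

theorem finite_reesDegree_preimage {P : Set M} (hP : P.Finite) (i : ℕ) :
    (reesDegree P ⁻¹' {i}).Finite := by
  have hpow : (P ^ i).Finite := by
    induction i with
    | zero => exact pow_zero P ▸ Set.finite_one
    | succ i ih => exact pow_succ P i ▸ ih.mul hP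
  exact .of_finite_image (image_reesDegree_preimage P i ▸ hpow) (injOn_reesDegree_preimage P i)

theorem ncard_reesDegree_preimage (i : ℕ) : (reesDegree P ⁻¹' {i}).ncard = (P ^ i).ncard := by
  rw [← image_reesDegree_preimage, (injOn_reesDegree_preimage P i).ncard_image]

theorem closure_reesDegree_preimage_one :
    AddSubmonoid.closure (reesDegree P ⁻¹' {1}) = ⊤ := by
  suffices h : ∀ i m (hm : m ∈ P ^ i), (⟨(.ofMul m, i), hm⟩ : reesMonoid P) ∈
      AddSubmonoid.closure (reesDegree P ⁻¹' {1}) from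
    eq_top_iff.2 fun x _ => h _ _ x.2
  intro i
  induction i with
  | zero =>
    rintro m rfl
    exact zero_mem _
  | succ i ih =>
    intro m hm
    obtain ⟨a, ha, b, hb, rfl⟩ := pow_succ P i ▸ hm
    have hb' : b ∈ P ^ 1 := by rwa [pow_one]
    have hmem : (⟨(.ofMul b, 1), hb'⟩ : reesMonoid P) ∈ reesDegree P ⁻¹' {1} := rfl
    exact add_mem (ih a ha) (AddSubmonoid.subset_closure hmem)

end Rees

/-- `f` is a growth polynomial if it eventually agrees with the growth function `i ↦ |P ^ i|` of a
finite subset `P` of a commutative monoid. -/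
def IsGrowthPolynomial (f : ℚ[X]) : Prop :=
  ∃ (M : Type) (_ : CommMonoid M) (P : Set M), P.Finite ∧
    ∃ N : ℕ, ∀ i : ℕ, N ≤ i → ((P ^ i).ncard : ℚ) = f.eval (i : ℚ)

namespace IsGrowthPolynomial

theorem isHilbertPolynomial {f : ℚ[X]} (hf : IsGrowthPolynomial f) : IsHilbertPolynomial f := by
  obtain ⟨M, _, P, hP, N, h⟩ := hf
  exact isHilbertPolynomial_of_forall_ncard (reesDegree P) (closure_reesDegree_preimage_one P)
    (finite_reesDegree_preimage hP) fun i hi => ncard_reesDegree_preimage P i ▸ h i hi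

theorem one : IsGrowthPolynomial 1 :=
  ⟨Unit, inferInstance, {1}, Set.finite_singleton _, 0, fun i _ => by simp⟩

theorem mul {f g : ℚ[X]} (hf : IsGrowthPolynomial f) (hg : IsGrowthPolynomial g) :
    IsGrowthPolynomial (f * g) := by
  obtain ⟨M, _, P, hP, N, hPN⟩ := hf
  obtain ⟨M', _, P', hP', N', hPN'⟩ := hg
  refine ⟨M × M', inferInstance, P ×ˢ P', hP.prod hP', max N N', fun i hi => ?_⟩
  rw [Set.prod_pow, Set.ncard_prod, Nat.cast_mul, eval_mul, hPN i (le_of_max_le_left hi),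
    hPN' i (le_of_max_le_right hi)]

theorem of_forall_ncard_image {M : Type} {α : Type*} [CommMonoid M] (g : M → α)
    (hg : ∀ {a b c d}, g a = g b → g c = g d → g (a * c) = g (b * d)) {P : Set M} (hP : P.Finite)
    {f : ℚ[X]} {N : ℕ} (hf : ∀ i, N ≤ i → ((g '' (P ^ i)).ncard : ℚ) = f.eval (i : ℚ)) :
    IsGrowthPolynomial f := by
  let c : Con M := { Setoid.ker g with mul' := hg }
  refine ⟨c.Quotient, inferInstance, c.mk' '' P, hP.image _, N, fun i hi => ?_⟩
  have hlift : Set.image g = Set.image (Setoid.kerLift g) ∘ Set.image c.mk' :=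
    funext fun S => Set.image_comp (Setoid.kerLift g) c.mk' S
  rw [← Set.image_pow, ← hf i hi, hlift, Function.comp_apply,
    Set.ncard_image_of_injective _ (Setoid.kerLift_injective g)]
  rfl

end IsGrowthPolynomial

section Simplex

theorem exists_add_single_eq {ι α : Type*} [DecidableEq ι] [AddCommMonoid α] [PartialOrder α]
    [CanonicallyOrderedAdd α] {a : ι → α} {j : ι} {m : α} (h : m ≤ a j) :
    ∃ b : ι → α, b + Pi.single j m = a := by
  have hle : Pi.single j m ≤ a := update_le_iff.2 ⟨h, fun _ _ => zero_le⟩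
  exact (le_iff_exists_add'.1 hle).imp fun _ => Eq.symm

variable (ι : Type*) [Fintype ι]

/-- The exponent vectors of the monomials of degree at most `i` in variables indexed by `ι`. -/
def simplex (i : ℕ) : Set (ι → ℕ) :=
  {a | ∑ j, a j ≤ i}

theorem finite_simplex (i : ℕ) : (simplex ι i).Finite := by
  classical
  exact (Set.finite_Icc 0 fun _ => i).subset fun _ ha => ⟨zero_le, fun j =>
    (Finset.single_le_sum_of_canonicallyOrdered (Finset.mem_univ j)).trans ha⟩

variable {ι}

theorem add_single_mem_simplex_iff [DecidableEq ι] {a : ι → ℕ} {i m : ℕ} {j : ι} :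
    a + Pi.single j m ∈ simplex ι (i + m) ↔ a ∈ simplex ι i := by
  simp [simplex, Finset.sum_add_distrib]

variable (ι)

theorem simplex_sdiff_setOf_lt [DecidableEq ι] (i m : ℕ) (j : ι) :
    simplex ι (i + m) \ {a | a j < m} = (· + Pi.single j m) '' simplex ι i := by
  ext a
  constructor
  · rintro ⟨hai, hnlt⟩
    have hmj : m ≤ a j := not_lt.1 hnlt
    obtain ⟨b, rfl⟩ := exists_add_single_eq hmj
    exact ⟨b, add_single_mem_simplex_iff.1 hai, rfl⟩
  · rintro ⟨b, hbi, rfl⟩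
    exact ⟨add_single_mem_simplex_iff.2 hbi, by simp⟩

theorem toAdd_preimage_simplex_one_pow (i : ℕ) :
    (Multiplicative.toAdd ⁻¹' simplex ι 1) ^ i = Multiplicative.toAdd ⁻¹' simplex ι i := by
  classical
  induction i with
  | zero =>
    ext a
    simp [simplex, funext_iff, ← toAdd_eq_zero]
  | succ i ih =>
    rw [pow_succ, ih]
    ext a
    constructor
    · rintro ⟨b, hb, c, hc, rfl⟩
      have hb : ∑ j, b.toAdd j ≤ i := hb
      have hc : ∑ j, c.toAdd j ≤ 1 := hc
      exact Finset.sum_add_distrib.trans_le (add_le_add hb hc)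
    · intro ha
      obtain ha' | ha' := le_or_gt (∑ j, a.toAdd j) i
      · exact ⟨a, ha', 1, by simp [simplex], mul_one a⟩
      · obtain ⟨j, -, hj : 1 ≤ a.toAdd j⟩ := Finset.sum_pos_iff.1 (i.zero_le.trans_lt ha')
        obtain ⟨b, hb⟩ := exists_add_single_eq hj
        rw [Set.mem_preimage, ← hb] at ha
        exact ⟨.ofAdd b, add_single_mem_simplex_iff.1 ha, .ofAdd (Pi.single j 1),
          by simp [simplex], hb⟩

theorem ncard_setOf_sum_eq (i : ℕ) :
    {a : ι → ℕ | ∑ j, a j = i}.ncard = (Fintype.card ι).multichoose i := by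
  classical
  rw [← Sym.card_sym_eq_multichoose, ← Nat.card_coe_set_eq, ← Nat.card_eq_fintype_card]
  exact Nat.card_congr (Sym.equivNatSumOfFintype ι i).symm

theorem ncard_simplex (n i : ℕ) : (simplex (Fin n) i).ncard = (i + n).choose n := by
  have himage : Fin.tail '' {a : Fin (n + 1) → ℕ | ∑ j, a j = i} = simplex (Fin n) i := by
    ext a
    constructor
    · rintro ⟨b, rfl, rfl⟩
      simp [simplex, Fin.tail, Fin.sum_univ_succ]
    · intro ha
      refine ⟨Fin.cons (i - ∑ j, a j) a, ?_, Fin.tail_cons _ _⟩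
      simpa [Fin.sum_univ_succ] using Nat.sub_add_cancel ha
  have hinj : Set.InjOn Fin.tail {a : Fin (n + 1) → ℕ | ∑ j, a j = i} := by
    intro a ha b hb hab
    have htail : ∀ j : Fin n, a j.succ = b j.succ := congrFun hab
    have hhead : a 0 = b 0 := by
      simp only [Set.mem_ofPred_eq, Fin.sum_univ_succ, htail] at ha hb
      lia
    exact funext (Fin.cases hhead htail)
  rw [← himage, hinj.ncard_image, ncard_setOf_sum_eq, Fintype.card_fin, Nat.multichoose_eq,
    Nat.add_right_comm, Nat.add_sub_cancel, add_comm, Nat.choose_symm_add]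

end Simplex

section LexSegment

theorem toLex_le_toLex_iff_tail {n : ℕ} {α : Fin (n + 1) → Type*} [∀ j, PartialOrder (α j)]
    {a e : ∀ j, α j} :
    toLex a ≤ toLex e ↔ a 0 < e 0 ∨ a 0 = e 0 ∧ toLex (Fin.tail a) ≤ toLex (Fin.tail e) := by
  have hlt : toLex a < toLex e ↔
      a 0 < e 0 ∨ a 0 = e 0 ∧ toLex (Fin.tail a) < toLex (Fin.tail e) := by
    have hcons := Fin.pi_lex_lt_cons_cons (x₀ := a 0) (y₀ := e 0) (x := Fin.tail a)
      (y := Fin.tail e) fun {j} => ((· < ·) : α j → α j → Prop)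
    rwa [Fin.cons_self_tail, Fin.cons_self_tail] at hcons
  have heq : a = e ↔ a 0 = e 0 ∧ Fin.tail a = Fin.tail e := by
    rw [← Fin.cons_inj, Fin.cons_self_tail, Fin.cons_self_tail]
  rw [le_iff_lt_or_eq, le_iff_lt_or_eq, toLex_inj, toLex_inj, heq]
  tauto

/-- The exponent vectors of the monomials of degree at most `i` that are lexicographically at most
`e`. -/
def lexSegment {n : ℕ} (e : Fin n → ℕ) (i : ℕ) : Set (Fin n → ℕ) :=
  {a ∈ simplex (Fin n) i | toLex a ≤ toLex e}

variable {n : ℕ} (e : Fin (n + 1) → ℕ) (i : ℕ)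

theorem lexSegment_inter_setOf_lt :
    lexSegment e i ∩ {a | a 0 < e 0} = simplex (Fin (n + 1)) i ∩ {a | a 0 < e 0} := by
  ext a
  simp only [lexSegment, toLex_le_toLex_iff_tail, Set.mem_inter_iff, Set.mem_ofPred_eq]
  tauto

theorem lexSegment_sdiff_setOf_lt :
    lexSegment e (i + e 0) \ {a | a 0 < e 0} =
      Fin.cons (α := fun _ => ℕ) (e 0) '' lexSegment (Fin.tail e) i := by
  ext a
  constructor
  · rintro ⟨⟨hai, hae⟩, hnlt⟩
    obtain ⟨hhead, htail⟩ := (toLex_le_toLex_iff_tail.1 hae).resolve_left hnlt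
    refine ⟨Fin.tail a, ⟨?_, htail⟩, hhead ▸ Fin.cons_self_tail a⟩
    simp only [simplex, Set.mem_ofPred_eq, Fin.sum_univ_succ, Fin.tail] at hai ⊢
    lia
  · rintro ⟨b, ⟨hbi, hbe⟩, rfl⟩
    refine ⟨⟨?_, toLex_le_toLex_iff_tail.2 (.inr ⟨rfl, hbe⟩)⟩, lt_irrefl (e 0)⟩
    simp only [simplex, Set.mem_ofPred_eq, Fin.sum_univ_succ, Fin.cons_zero, Fin.cons_succ]
      at hbi ⊢
    lia

theorem ncard_lexSegment_add :
    (lexSegment e (i + e 0)).ncard + (i + (n + 1)).choose (n + 1) =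
      (i + e 0 + (n + 1)).choose (n + 1) + (lexSegment (Fin.tail e) i).ncard := by
  have hfin := finite_simplex (Fin (n + 1)) (i + e 0)
  have hsimplex := Set.ncard_inter_add_ncard_sdiff_eq_ncard _ {a | a 0 < e 0} hfin
  have hsegment := Set.ncard_inter_add_ncard_sdiff_eq_ncard (lexSegment e (i + e 0))
    {a | a 0 < e 0} (hfin.subset (Set.sep_subset _ _))
  rw [simplex_sdiff_setOf_lt, Set.ncard_image_of_injective _ (add_left_injective _),
    ncard_simplex, ncard_simplex] at hsimplex
  rw [lexSegment_inter_setOf_lt, lexSegment_sdiff_setOf_lt,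
    Set.ncard_image_of_injective _ (Fin.cons_right_injective _)] at hsegment
  lia

/-- The number of points of `lexSegment e i` for large `i`, as a polynomial in `i`: the difference
of the two binomial coefficient polynomials counts the points `a` with `a 0 < e 0`, the recursive
term those with `a 0 = e 0`. -/
noncomputable def lexSegmentPolynomial : {n : ℕ} → (Fin n → ℕ) → ℚ[X]
  | 0, _ => 1
  | n + 1, e => preHilbertPoly ℚ (n + 1) 0 - preHilbertPoly ℚ (n + 1) (e 0) +
      (lexSegmentPolynomial (Fin.tail e)).comp (X - C (e 0 : ℚ))

theorem ncard_lexSegment_eq_eval : ∀ {n : ℕ} (e : Fin n → ℕ) {i : ℕ}, ∑ j, e j ≤ i →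
      ((lexSegment e i).ncard : ℚ) = (lexSegmentPolynomial e).eval (i : ℚ)
  | 0, e, i, _ => by
    have : lexSegment e i = {e} := by
      ext a
      simp [lexSegment, simplex, Subsingleton.elim a e]
    simp [this, lexSegmentPolynomial]
  | n + 1, e, i, hi => by
    rw [Fin.sum_univ_succ] at hi
    obtain ⟨i, rfl⟩ := Nat.exists_eq_add_of_le' ((Nat.le_add_right _ _).trans hi)
    have hrec := ncard_lexSegment_add e i
    have htail := ncard_lexSegment_eq_eval (Fin.tail e) (i := i) (by simp only [Fin.tail]; lia)
    rw [lexSegmentPolynomial, eval_add, eval_sub,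
      preHilbertPoly_eq_choose_sub_add ℚ _ (Nat.zero_le _),
      preHilbertPoly_eq_choose_sub_add ℚ _ (Nat.le_add_left _ _), eval_comp, eval_sub, eval_X,
      eval_C, Nat.cast_add, add_sub_cancel_right, ← htail, Nat.sub_zero, Nat.add_sub_cancel]
    qify at hrec
    linear_combination hrec

theorem min_min_add_min {T : Type*} [AddCommMonoid T] [LinearOrder T] [IsOrderedAddMonoid T]
    {a b e : T} (ha : 0 ≤ a) (hb : 0 ≤ b) (he : 0 ≤ e) :
    min (min a e + min b e) e = min (a + b) e := by
  obtain hae | hae := le_total a e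
  · obtain hbe | hbe := le_total b e
    · rw [min_eq_left hae, min_eq_left hbe]
    · rw [min_eq_left hae, min_eq_right hbe, min_eq_right (le_add_of_nonneg_left ha),
        min_eq_right (hbe.trans (le_add_of_nonneg_left ha))]
  · rw [min_eq_right hae, min_eq_right (le_add_of_nonneg_right (le_min hb he)),
      min_eq_right (hae.trans (le_add_of_nonneg_right hb))]

theorem image_min_simplex {n : ℕ} (e : Fin n → ℕ) {i : ℕ} (hi : ∑ j, e j ≤ i) :
    (fun a => min (toLex a) (toLex e)) '' simplex (Fin n) i = toLex '' lexSegment e i := by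
  ext a
  constructor
  · rintro ⟨a, ha, rfl⟩
    obtain hae | hae := le_total (toLex a) (toLex e)
    · exact ⟨a, ⟨ha, hae⟩, (min_eq_left hae).symm⟩
    · exact ⟨e, ⟨hi, le_rfl⟩, (min_eq_right hae).symm⟩
  · rintro ⟨a, ⟨ha, hae⟩, rfl⟩
    exact ⟨a, ha, min_eq_left hae⟩

theorem isGrowthPolynomial_lexSegmentPolynomial {n : ℕ} (e : Fin n → ℕ) :
    IsGrowthPolynomial (lexSegmentPolynomial e) := by
  let truncate (a : Multiplicative (Fin n → ℕ)) : Lex (Fin n → ℕ) := min (toLex a.toAdd) (toLex e)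
  have hnonneg (a : Fin n → ℕ) : 0 ≤ toLex a := Pi.toLex_monotone zero_le
  have hmul : ∀ a b, truncate (a * b) = min (truncate a + truncate b) (toLex e) := fun a b =>
    (min_min_add_min (hnonneg a.toAdd) (hnonneg b.toAdd) (hnonneg e)).symm
  refine .of_forall_ncard_image truncate (fun hab hcd => by rw [hmul, hmul, hab, hcd])
    (P := Multiplicative.toAdd ⁻¹' simplex (Fin n) 1) (finite_simplex _ 1) (N := ∑ j, e j)
    fun i hi => ?_
  rw [toAdd_preimage_simplex_one_pow, ← ncard_lexSegment_eq_eval e hi,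
    ← Set.ncard_image_of_injective (lexSegment e i) toLex.injective, ← image_min_simplex e hi]
  rfl

theorem eval_ascPochhammer_eq_prod {R : Type*} [CommSemiring R] (n : ℕ) (x : R) :
    (ascPochhammer R n).eval x = ∏ j ∈ Finset.range n, (x + j) := by
  induction n with
  | zero => rw [ascPochhammer_zero, eval_one, Finset.prod_range_zero]
  | succ n ih => rw [ascPochhammer_succ_eval, ih, Finset.prod_range_succ]

theorem eval_preHilbertPoly {F : Type*} [Field F] (n k : ℕ) (x : F) :
    (preHilbertPoly F n k).eval x = (∏ j ∈ Finset.range n, (x - k + 1 + j)) / n.factorial := by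
  rw [preHilbertPoly, eval_smul, eval_comp, eval_add, eval_sub, eval_X, eval_C, eval_one,
    eval_ascPochhammer_eq_prod, smul_eq_mul, div_eq_inv_mul]

theorem eval_lexSegmentPolynomial_elim0 (e : Fin 0 → ℕ) (x : ℚ) :
    (lexSegmentPolynomial e).eval x = 1 := by
  rw [lexSegmentPolynomial, eval_one]

theorem eval_lexSegmentPolynomial_vecCons {n : ℕ} (m : ℕ) (e : Fin n → ℕ) (x : ℚ) :
    (lexSegmentPolynomial (Matrix.vecCons m e)).eval x =
      (∏ j ∈ Finset.range (n + 1), (x + 1 + j) - ∏ j ∈ Finset.range (n + 1), (x - m + 1 + j)) /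
        (n + 1).factorial + (lexSegmentPolynomial e).eval (x - m) := by
  have htail : Fin.tail (Matrix.vecCons m e) = e := rfl
  rw [lexSegmentPolynomial, htail, Matrix.cons_val_zero, eval_add, eval_sub, eval_comp, eval_sub,
    eval_X, eval_C, eval_preHilbertPoly, eval_preHilbertPoly, sub_div, Nat.cast_zero, sub_zero]

end LexSegment

-- The entry `e j` first affects the coefficient of `X ^ (d - j)`, where it contributes
-- `e j / (d - j)!`. So `e 0 = d!`, and every further entry is forced by the earlier ones. For
-- `d = 1` and `d = 2` this would give `e 1 = -2`.
theorem isGrowthPolynomial_X_pow_three : IsGrowthPolynomial (X ^ 3) := by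
  convert isGrowthPolynomial_lexSegmentPolynomial ![6, 3, 8, 49]
  refine Polynomial.funext fun x => ?_
  simp only [eval_pow, eval_X, eval_lexSegmentPolynomial_vecCons, eval_lexSegmentPolynomial_elim0,
    Finset.prod_range_succ, Finset.prod_range_zero, Nat.factorial]
  push_cast
  ring

theorem isGrowthPolynomial_X_pow_four : IsGrowthPolynomial (X ^ 4) := by
  convert isGrowthPolynomial_lexSegmentPolynomial ![24, 216, 26430, 353339790, 62430765807659005]
  refine Polynomial.funext fun x => ?_
  simp only [eval_pow, eval_X, eval_lexSegmentPolynomial_vecCons, eval_lexSegmentPolynomial_elim0,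
    Finset.prod_range_succ, Finset.prod_range_zero, Nat.factorial]
  push_cast
  ring

theorem isGrowthPolynomial_X_pow_five : IsGrowthPolynomial (X ^ 5) := by
  convert isGrowthPolynomial_lexSegmentPolynomial ![120, 6780, 23513960, 276560672805750,
    38242907207585404542511767817, 731259975844000893012336498626162930739291667456651069218]
  refine Polynomial.funext fun x => ?_
  simp only [eval_pow, eval_X, eval_lexSegmentPolynomial_vecCons, eval_lexSegmentPolynomial_elim0,
    Finset.prod_range_succ, Finset.prod_range_zero, Nat.factorial]
  push_cast
  ring

theorem isGrowthPolynomial_X_pow {d : ℕ} (hd : 3 ≤ d) : IsGrowthPolynomial (X ^ d) := by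
  induction d using Nat.strong_induction_on with
  | _ d ih =>
    obtain h | h := lt_or_ge d 6
    · interval_cases d
      · exact isGrowthPolynomial_X_pow_three
      · exact isGrowthPolynomial_X_pow_four
      · exact isGrowthPolynomial_X_pow_five
    · rw [← Nat.sub_add_cancel hd, pow_add]
      exact (ih (d - 3) (by lia) (by lia)).mul isGrowthPolynomial_X_pow_three

theorem sign_patterns_stmt9 (d : ℕ) (hd : d = 0 ∨ 3 ≤ d) :
    IsHilbertPolynomial ((Polynomial.X : Polynomial ℚ) ^ d) := by
  obtain rfl | hd := hd
  · rw [pow_zero]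
    exact IsGrowthPolynomial.one.isHilbertPolynomial
  · exact (isGrowthPolynomial_X_pow hd).isHilbertPolynomial
end
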